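/- Theorem 2 (joint source-channel coding for the MARC, Slepian-Wolf coding to the relay and CPM to the destination): The source pair (S1, S2) can be reliably transmitted over the discrete memoryless MARC with relay side information W3 and receiver side information W if there exists a joint pmf that factors as p(s1,s2,w3,w) p(x1|s1) p(x2|s2) p(x3|s1,s2) p(y3,y|x1,x2,x3) (where p(s1,s2,w3,w) is the given source distribution and p(y3,y|x1,x2,x3) is the given channel law) such that all of the following strict inequalities hold: H(S1|S2,W3) < I(X1;Y3|S1,X2,X3); H(S2|S1,W3) < I(X2;Y3|S2,X1,X3); H(S1,S2|W3) < I(X1,X2;Y3|S1,S2,X3); H(S1|S2,W) < I(X1,X3;Y|S2,X2,W); H(S2|S1,W) < I(X2,X3;Y|S1,X1,W); H(S1,S2|W) < I(X1,X2,X3;Y|W). -/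

import Mathlib

open scoped BigOperators

/-- A probability mass function on a finite type. -/
def IsPmf {α : Type*} [Fintype α] (p : α → ℝ) : Prop :=
  (∀ a, 0 ≤ p a) ∧ ∑ a, p a = 1

/-- Shannon entropy (natural logarithm) of the push-forward of `μ` under `X`. -/
noncomputable def entropyOf {Ω α : Type*} [Fintype Ω] [Fintype α] [DecidableEq α]
    (μ : Ω → ℝ) (X : Ω → α) : ℝ :=
  ∑ a : α, Real.negMulLog (∑ ω : Ω, if X ω = a then μ ω else 0)

/-- Conditional Shannon entropy `H(X | Y)` under `μ`. -/
noncomputable def condEntropyOf {Ω α β : Type*} [Fintype Ω] [Fintype α] [Fintype β]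
    [DecidableEq α] [DecidableEq β] (μ : Ω → ℝ) (X : Ω → α) (Y : Ω → β) : ℝ :=
  entropyOf μ (fun ω => (X ω, Y ω)) - entropyOf μ Y

/-- Mutual information `I(X ; Y)` under `μ`. -/
noncomputable def mutualInfoOf {Ω α β : Type*} [Fintype Ω] [Fintype α] [Fintype β]
    [DecidableEq α] [DecidableEq β] (μ : Ω → ℝ) (X : Ω → α) (Y : Ω → β) : ℝ :=
  entropyOf μ X + entropyOf μ Y - entropyOf μ (fun ω => (X ω, Y ω))

/-- Conditional mutual information `I(X ; Y | Z)` under `μ`. -/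
noncomputable def condMutualInfoOf {Ω α β γ : Type*} [Fintype Ω] [Fintype α] [Fintype β]
    [Fintype γ] [DecidableEq α] [DecidableEq β] [DecidableEq γ]
    (μ : Ω → ℝ) (X : Ω → α) (Y : Ω → β) (Z : Ω → γ) : ℝ :=
  entropyOf μ (fun ω => (X ω, Z ω)) + entropyOf μ (fun ω => (Y ω, Z ω))
    - entropyOf μ (fun ω => (X ω, Y ω, Z ω)) - entropyOf μ Z

/-- Causality of the relay encoding functions: the channel input of the relay at time `k`
depends on the relay channel outputs only through those at times `j < k`. -/
def CausalRelay {n : ℕ} {Y3 W3 X3 : Type*}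
    (f3 : Fin n → (Fin n → Y3) → (Fin n → W3) → X3) : Prop :=
  ∀ (k : Fin n) (y y' : Fin n → Y3) (w : Fin n → W3),
    (∀ j : Fin n, j < k → y j = y' j) → f3 k y w = f3 k y' w

/-- Error probability of a blocklength-`n` source-channel code over the discrete memoryless
MARC with source/side-information pmf `pSrc` (i.i.d. across time) and channel law `Q`. -/
noncomputable def marcErrProb {S1 S2 W W3 X1 X2 X3 Y Y3 : Type*}
    [Fintype S1] [Fintype S2] [Fintype W] [Fintype W3] [Fintype Y] [Fintype Y3]
    [DecidableEq S1] [DecidableEq S2]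
    (pSrc : S1 × S2 × W × W3 → ℝ) (Q : X1 × X2 × X3 → Y × Y3 → ℝ) (n : ℕ)
    (f1 : (Fin n → S1) → Fin n → X1) (f2 : (Fin n → S2) → Fin n → X2)
    (f3 : Fin n → (Fin n → Y3) → (Fin n → W3) → X3)
    (g : (Fin n → Y) → (Fin n → W) → (Fin n → S1) × (Fin n → S2)) : ℝ :=
  ∑ s1 : Fin n → S1, ∑ s2 : Fin n → S2, ∑ w : Fin n → W, ∑ w3 : Fin n → W3,
    ∑ y : Fin n → Y, ∑ y3 : Fin n → Y3,
      if g y w ≠ (s1, s2) then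
        (∏ k : Fin n, pSrc (s1 k, s2 k, w k, w3 k)) *
          ∏ k : Fin n, Q (f1 s1 k, f2 s2 k, f3 k y3 w3) (y k, y3 k)
      else 0

/-- The sources `(S1, S2)` can be reliably transmitted over the DM MARC: codes with
arbitrarily small error probability exist. -/
def MarcReliablyTransmitted {S1 S2 W W3 X1 X2 X3 Y Y3 : Type*}
    [Fintype S1] [Fintype S2] [Fintype W] [Fintype W3] [Fintype Y] [Fintype Y3]
    [DecidableEq S1] [DecidableEq S2]
    (pSrc : S1 × S2 × W × W3 → ℝ) (Q : X1 × X2 × X3 → Y × Y3 → ℝ) : Prop :=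
  ∀ ε : ℝ, 0 < ε → ∃ n : ℕ, 0 < n ∧
    ∃ (f1 : (Fin n → S1) → Fin n → X1) (f2 : (Fin n → S2) → Fin n → X2)
      (f3 : Fin n → (Fin n → Y3) → (Fin n → W3) → X3)
      (g : (Fin n → Y) → (Fin n → W) → (Fin n → S1) × (Fin n → S2)),
      CausalRelay f3 ∧ marcErrProb pSrc Q n f1 f2 f3 g ≤ ε

/-- The single-letter joint distribution of Theorem 2:
`p(s1,s2,w3,w) p(x1|s1) p(x2|s2) p(x3|s1,s2) p(y3,y|x1,x2,x3)`. -/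
noncomputable def thm2Joint {S1 S2 W W3 X1 X2 X3 Y Y3 : Type*}
    (pSrc : S1 × S2 × W × W3 → ℝ) (Q : X1 × X2 × X3 → Y × Y3 → ℝ)
    (pX1 : S1 → X1 → ℝ) (pX2 : S2 → X2 → ℝ) (pX3 : S1 → S2 → X3 → ℝ) :
    S1 × S2 × W3 × W × X1 × X2 × X3 × Y3 × Y → ℝ :=
  fun (s1, s2, w3, w, x1, x2, x3, y3, y) =>
    pSrc (s1, s2, w, w3) * pX1 s1 x1 * pX2 s2 x2 * pX3 s1 s2 x3 * Q (x1, x2, x3) (y, y3)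

/-!
Transmission is block-Markov: in each block the sources send random codewords indexed by the new and
the old message, generated letter by letter according to `pX1`, `pX2` applied to the *old* message,
and the relay sends a codeword for the old message pair. The relay decodes the new pair from the old
one, going forward; the destination decodes the old pair from the new one, going backward. A known
message pair, sent as the old one in the first block and as the new one in the last, starts both
recursions.

Instead of joint typicality, a candidate is accepted if, for each of the three ways of being
wrong, the total likelihood of the competitors is at most `γ` times its own. Averaged over the
codebooks, a wrong candidate is accepted with probability at most `γ` per error pattern, and by
Markov's inequality the right one is rejected with probability at most `γ⁻¹ ^ τ` times a likelihood
ratio moment of order `τ`. That moment is multiplicative over the letters, equals `1` at `τ = 0`,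
and its derivative there is the difference of the two sides of one of the six single-letter
inequalities, which is negative; so it is less than `1` for some `τ > 0` and its powers decay.

With one known block, `B` blocks of `(B + 1) k` source letters have to fit into `B + 1` blocks of
`B k` channel uses. Each block is therefore punctured: `k` of its letters are not sent. For large
`B` this does not affect the exponential decay.
-/

section ProductPmf

variable {ι α : Type*} [Fintype ι] [DecidableEq ι] [Fintype α] {p : ι → α → ℝ}

theorem isPmf_pi (hp : ∀ i, IsPmf (p i)) : IsPmf fun c : ι → α => ∏ i, p i (c i) := by
  refine ⟨fun c => Finset.prod_nonneg fun i _ => (hp i).1 _, ?_⟩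
  rw [← Fintype.prod_sum]
  exact Finset.prod_eq_one fun i _ => (hp i).2

theorem sum_pi_mul_apply (hp : ∀ i, IsPmf (p i)) (i : ι) (F : α → ℝ) :
    ∑ c : ι → α, (∏ k, p k (c k)) * F (c i) = ∑ u, p i u * F u := by
  calc ∑ c : ι → α, (∏ k, p k (c k)) * F (c i)
      = ∑ c : ι → α, ∏ k, p k (c k) * (if k = i then F (c k) else 1) := by
        simp only [Finset.prod_mul_distrib, Fintype.prod_ite_eq']
    _ = ∏ k, ∑ u, p k u * (if k = i then F u else 1) := by rw [Fintype.prod_sum]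
    _ = ∏ k, if k = i then ∑ u, p k u * F u else 1 :=
        Finset.prod_congr rfl fun k _ => by split_ifs <;> simp [(hp k).2]
    _ = ∑ u, p i u * F u := by simp

theorem sum_pi_mul_apply₂ (hp : ∀ i, IsPmf (p i)) {i j : ι} (hij : i ≠ j) (F : α → α → ℝ) :
    ∑ c : ι → α, (∏ k, p k (c k)) * F (c i) (c j) = ∑ u, ∑ v, p i u * p j v * F u v := by
  classical
  calc ∑ c : ι → α, (∏ k, p k (c k)) * F (c i) (c j)
      = ∑ u, ∑ c : ι → α, (∏ k, p k (c k) * if k = i then if c k = u then 1 else 0 else 1) *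
          F u (c j) := by
        rw [Finset.sum_comm]
        simp only [Finset.prod_mul_distrib, Fintype.prod_ite_eq']
        simp
    _ = ∑ u, ∑ c : ι → α, ∏ k, p k (c k) *
          if k = i then if c k = u then 1 else 0 else if k = j then F u (c k) else 1 := by
        refine Finset.sum_congr rfl fun u _ => Finset.sum_congr rfl fun c _ => ?_
        rw [← Fintype.prod_ite_eq' j fun k => F u (c k), ← Finset.prod_mul_distrib]
        refine Finset.prod_congr rfl fun k _ => ?_
        by_cases hk : k = i <;> simp [hk, hij]
    _ = ∑ u, ∏ k, ∑ v, p k v *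
          if k = i then if v = u then 1 else 0 else if k = j then F u v else 1 := by
        simp_rw [Fintype.prod_sum]
    _ = ∑ u, ∏ k, (if k = i then p k u else 1) * if k = j then ∑ v, p k v * F u v else 1 := by
        refine Finset.sum_congr rfl fun u _ => Finset.prod_congr rfl fun k _ => ?_
        by_cases hki : k = i
        · simp [hki, hij]
        · by_cases hkj : k = j <;> simp [hki, hkj, hij.symm, (hp k).2]
    _ = ∑ u, ∑ v, p i u * p j v * F u v := by
        simp only [Finset.prod_mul_distrib, Fintype.prod_ite_eq', Finset.mul_sum, mul_assoc]

end ProductPmf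

section Pmf

variable {α : Type*} [Fintype α] {p : α → ℝ}

theorem IsPmf.nonempty (hp : IsPmf p) : Nonempty α := by
  by_contra h
  rw [not_nonempty_iff] at h
  simpa using hp.2

theorem IsPmf.exists_le_of_sum_mul_le (hp : IsPmf p) {f : α → ℝ} {b : ℝ}
    (h : ∑ a, p a * f a ≤ b) : ∃ a, f a ≤ b := by
  by_contra! hlt
  obtain ⟨a, -, ha⟩ : ∃ a ∈ Finset.univ, 0 < p a :=
    Finset.exists_lt_of_sum_lt (by simp [hp.2])
  have : ∑ a, p a * b < ∑ a, p a * f a :=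
    Finset.sum_lt_sum (fun a _ => mul_le_mul_of_nonneg_left (hlt a).le (hp.1 a))
      ⟨a, Finset.mem_univ a, mul_lt_mul_of_pos_left (hlt a) ha⟩
  rw [← Finset.sum_mul, hp.2, one_mul] at this
  linarith

end Pmf

section Redraw

variable {U : Type*} [DecidableEq U]

/-- Transition kernel that redraws a symbol from `p` if `fresh` is set and keeps it otherwise. It
describes the codeword of a competing message: independent of the codeword sent if the two use
different codebook entries, equal to it otherwise. -/
def redraw (fresh : Bool) (p : U → ℝ) (u v : U) : ℝ :=
  if fresh then p v else if u = v then 1 else 0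

theorem redraw_nonneg {fresh : Bool} {p : U → ℝ} (hp : ∀ u, 0 ≤ p u) (u v : U) :
    0 ≤ redraw fresh p u v := by
  unfold redraw
  split_ifs
  exacts [hp v, zero_le_one, le_rfl]

theorem redraw_self_pos {fresh : Bool} {p : U → ℝ} {u : U} (hp : 0 < p u) :
    0 < redraw fresh p u u := by
  cases fresh <;> simp [redraw, hp]

theorem redraw_pi {I : Type*} [Fintype I] (fresh : Bool) (p : I → U → ℝ) (u v : I → U) :
    redraw fresh (fun c => ∏ i, p i (c i)) u v = ∏ i, redraw fresh (p i) (u i) (v i) := by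
  cases fresh
  · simp [redraw, Finset.prod_ite_zero, funext_iff]
  · simp [redraw]

theorem redraw_pi_one {I : Type*} [Fintype I] (fresh : Bool) (u v : I → U) :
    redraw fresh (fun _ => (1 : ℝ)) u v = ∏ i, redraw fresh (fun _ => 1) (u i) (v i) := by
  simpa using redraw_pi fresh (fun _ _ => 1) u v

end Redraw

section CondLaw

variable {Θ Θ' U U' V V' : Type*} [Fintype Θ] [Fintype Θ'] [Fintype U] [Fintype U']

/-- Under the weight `w`, the kernel `r` is a conditional law of `x` given `y`. -/
def HasCondLaw (w : Θ → ℝ) (x : Θ → U) (y : Θ → V) (r : V → U → ℝ) : Prop :=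
  ∀ F : U → V → ℝ, ∑ θ, w θ * F (x θ) (y θ) = ∑ θ, w θ * ∑ u, r (y θ) u * F u (y θ)

theorem HasCondLaw.prod {w : Θ → ℝ} {x : Θ → U} {y : Θ → V} {r : V → U → ℝ} {w' : Θ' → ℝ}
    {x' : Θ' → U'} {y' : Θ' → V'} {r' : V' → U' → ℝ} (h : HasCondLaw w x y r)
    (h' : HasCondLaw w' x' y' r') :
    HasCondLaw (fun θ : Θ × Θ' => w θ.1 * w' θ.2) (fun θ => (x θ.1, x' θ.2))
      (fun θ => (y θ.1, y' θ.2)) (fun v u => r v.1 u.1 * r' v.2 u.2) := by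
  intro F
  calc ∑ θ : Θ × Θ', w θ.1 * w' θ.2 * F (x θ.1, x' θ.2) (y θ.1, y' θ.2)
      = ∑ θ, w θ * ∑ θ', w' θ' * F (x θ, x' θ') (y θ, y' θ') := by
        simp only [Fintype.sum_prod_type, Finset.mul_sum, mul_assoc]
    _ = ∑ θ, w θ * ∑ θ', w' θ' * ∑ u', r' (y' θ') u' * F (x θ, u') (y θ, y' θ') :=
        Finset.sum_congr rfl fun θ _ =>
          congrArg (w θ * ·) (h' fun u' v' => F (x θ, u') (y θ, v'))
    _ = ∑ θ, w θ * ∑ u, r (y θ) u *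
          ∑ θ', w' θ' * ∑ u', r' (y' θ') u' * F (u, u') (y θ, y' θ') :=
        h fun u v => ∑ θ', w' θ' * ∑ u', r' (y' θ') u' * F (u, u') (v, y' θ')
    _ = ∑ θ : Θ × Θ', w θ.1 * w' θ.2 *
          ∑ u : U × U', r (y θ.1) u.1 * r' (y' θ.2) u.2 * F u (y θ.1, y' θ.2) := by
        simp only [Fintype.sum_prod_type, Finset.mul_sum]
        refine Finset.sum_congr rfl fun θ _ => Finset.sum_comm.trans ?_
        exact Finset.sum_congr rfl fun θ' _ => Finset.sum_congr rfl fun u _ =>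
          Finset.sum_congr rfl fun u' _ => by ring

variable {κ : Type*} [Fintype κ] [DecidableEq κ] {p : κ → U → ℝ}

theorem hasCondLaw_pi_apply (hp : ∀ k, IsPmf (p k)) (k : κ) :
    HasCondLaw (fun c : κ → U => ∏ i, p i (c i)) (fun c => c k) (fun _ => ()) fun _ => p k := by
  intro F
  rw [sum_pi_mul_apply hp k (F · ()), ← Finset.sum_mul, (isPmf_pi hp).2, one_mul]

theorem hasCondLaw_pi_redraw [DecidableEq U] (hp : ∀ k, IsPmf (p k)) {fresh : Bool} {k l : κ}
    (h : fresh = true ↔ k ≠ l) :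
    HasCondLaw (fun c : κ → U => ∏ i, p i (c i)) (fun c => c k) (fun c => c l)
      (redraw fresh (p k)) := by
  intro F
  cases fresh
  · obtain rfl : k = l := by simpa using h
    simp [redraw]
  · rw [sum_pi_mul_apply₂ hp (h.1 rfl),
      sum_pi_mul_apply hp l fun v => ∑ u, redraw true (p k) v u * F u v, Finset.sum_comm]
    simp [redraw, Finset.mul_sum, mul_assoc, mul_left_comm]

end CondLaw

/-! ### Likelihood-ratio moments -/

section LikelihoodRatio

variable {Ω : Type*} [Fintype Ω]

/-- The `τ`-th moment under `P` of the likelihood ratio `ρ K / K`, where the kernel `ρ` collects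
the alternatives confusable with `ω`. It controls the probability that the likelihood `K` of the
truth does not dominate that of its alternatives. -/
noncomputable def lrMoment (P : Ω → ℝ) (ρ : Ω → Ω → ℝ) (K : Ω → ℝ) (τ : ℝ) : ℝ :=
  ∑ ω, P ω * ((∑ ω', ρ ω ω' * K ω') / K ω) ^ τ

theorem lrMoment_zero (P : Ω → ℝ) (ρ : Ω → Ω → ℝ) (K : Ω → ℝ) :
    lrMoment P ρ K 0 = ∑ ω, P ω := by
  simp [lrMoment]

theorem lrMoment_equiv {Ω' : Type*} [Fintype Ω'] (e : Ω' ≃ Ω) (P : Ω → ℝ) (ρ : Ω → Ω → ℝ)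
    (K : Ω → ℝ) (τ : ℝ) :
    lrMoment (fun ω => P (e ω)) (fun ω ω' => ρ (e ω) (e ω')) (fun ω => K (e ω)) τ
      = lrMoment P ρ K τ := by
  simp only [lrMoment]
  rw [← e.sum_comp fun ω => P ω * ((∑ ω', ρ ω ω' * K ω') / K ω) ^ τ]
  exact Finset.sum_congr rfl fun ω _ => by rw [e.sum_comp fun ω' => ρ (e ω) ω' * K ω']

theorem lrMoment_pi {I : Type*} [Fintype I] [DecidableEq I] {P : I → Ω → ℝ}
    {ρ : I → Ω → Ω → ℝ} {K : I → Ω → ℝ} (hρ : ∀ i ω ω', 0 ≤ ρ i ω ω') (hK : ∀ i ω, 0 ≤ K i ω)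
    (τ : ℝ) :
    lrMoment (fun ω : I → Ω => ∏ i, P i (ω i)) (fun ω ω' => ∏ i, ρ i (ω i) (ω' i))
        (fun ω => ∏ i, K i (ω i)) τ
      = ∏ i, lrMoment (P i) (ρ i) (K i) τ := by
  simp only [lrMoment, Fintype.prod_sum]
  refine Finset.sum_congr rfl fun ω _ => ?_
  simp only [← Finset.prod_mul_distrib, ← Fintype.prod_sum fun i ω' => ρ i (ω i) ω' * K i ω',
    ← Finset.prod_div_distrib]
  rw [Finset.prod_mul_distrib, Real.finsetProd_rpow]
  exact fun i _ => div_nonneg (Finset.sum_nonneg fun ω' _ => mul_nonneg (hρ i _ _) (hK i _))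
    (hK i _)

variable {P : Ω → ℝ} {ρ : Ω → Ω → ℝ} {K : Ω → ℝ}

theorem sum_lt_le_lrMoment (hP : ∀ ω, 0 ≤ P ω) (hρ : ∀ ω ω', 0 ≤ ρ ω ω') (hK : ∀ ω, 0 ≤ K ω)
    (hPK : ∀ ω, 0 < P ω → 0 < K ω) {γ τ : ℝ} (hγ : 0 < γ) (hτ : 0 ≤ τ) :
    ∑ ω, P ω * (if γ * K ω < ∑ ω', ρ ω ω' * K ω' then 1 else 0)
      ≤ γ⁻¹ ^ τ * lrMoment P ρ K τ := by
  rw [lrMoment, Finset.mul_sum]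
  refine Finset.sum_le_sum fun ω _ => ?_
  rcases (hP ω).eq_or_lt with h0 | h0
  · simp [← h0]
  have hKω := hPK ω h0
  have hJ : 0 ≤ ∑ ω', ρ ω ω' * K ω' := Finset.sum_nonneg fun ω' _ => mul_nonneg (hρ _ _) (hK _)
  rw [mul_left_comm]
  refine mul_le_mul_of_nonneg_left ?_ h0.le
  rw [← Real.mul_rpow (by positivity) (by positivity)]
  split_ifs with h
  · refine Real.one_le_rpow ?_ hτ
    rw [inv_mul_eq_div, div_div, one_le_div (by positivity), mul_comm]
    exact h.le
  · positivity

theorem hasDerivAt_lrMoment (hP : ∀ ω, 0 ≤ P ω)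
    (hJ : ∀ ω, 0 < P ω → 0 < (∑ ω', ρ ω ω' * K ω') / K ω) :
    HasDerivAt (lrMoment P ρ K) (∑ ω, P ω * Real.log ((∑ ω', ρ ω ω' * K ω') / K ω)) 0 := by
  unfold lrMoment
  refine HasDerivAt.fun_sum fun ω _ => ?_
  rcases (hP ω).eq_or_lt with h0 | h0
  · simpa [← h0] using hasDerivAt_const (0 : ℝ) (0 : ℝ)
  · simpa using (Real.hasStrictDerivAt_const_rpow (hJ ω h0) 0).hasDerivAt.const_mul (P ω)

end LikelihoodRatio

/-! ### Random coding with threshold decoding -/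

theorem ite_epsilon_ne_le {A T : Type*} [Fintype A] [Nonempty A] [DecidableEq A] [DecidableEq T]
    {s : Finset T} {t : A → A → T} (ht : ∀ a b, a ≠ b → t a b ∈ s) (P : T → A → Prop)
    [∀ e a, Decidable (P e a)] (a : A) :
    (if Classical.epsilon (fun b => ∀ e ∈ s, P e b) ≠ a then 1 else 0 : ℝ) ≤
      ∑ e ∈ s, ((if P e a then 0 else 1) + ∑ b, if t a b = e ∧ P e b then 1 else 0) := by
  have hconf : ∀ e b, (0 : ℝ) ≤ if t a b = e ∧ P e b then 1 else 0 := fun e b => by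
    split_ifs <;> norm_num
  have hfail : ∀ e, (0 : ℝ) ≤ if P e a then 0 else 1 := fun e => by split_ifs <;> norm_num
  have hterm : ∀ e, (0 : ℝ) ≤ (if P e a then 0 else 1) + ∑ b, if t a b = e ∧ P e b then 1 else 0 :=
    fun e => add_nonneg (hfail e) (Finset.sum_nonneg fun b _ => hconf e b)
  set b := Classical.epsilon fun b => ∀ e ∈ s, P e b
  by_cases hab : b = a
  · simpa [hab] using Finset.sum_nonneg fun e (_ : e ∈ s) => hterm e
  rw [if_pos hab]
  by_cases haccept : ∀ e ∈ s, P e a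
  · have hPb : ∀ e ∈ s, P e b := Classical.epsilon_spec (p := fun b => ∀ e ∈ s, P e b) ⟨a, haccept⟩
    have he := ht a b (Ne.symm hab)
    refine le_trans ?_ (Finset.single_le_sum (fun e _ => hterm e) he)
    refine le_add_of_nonneg_of_le (hfail _) (le_of_eq_of_le ?_
      (Finset.single_le_sum (fun b _ => hconf _ b) (Finset.mem_univ b)))
    rw [if_pos ⟨rfl, hPb _ he⟩]
  · push Not at haccept
    obtain ⟨e, he, hlt⟩ := haccept
    refine le_trans ?_ (Finset.single_le_sum (fun e _ => hterm e) he)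
    exact le_add_of_le_of_nonneg (by simp [hlt]) (Finset.sum_nonneg fun b _ => hconf e b)

/-- A receiver of the two messages `A1 × A2`: given its observation `z`, the words sent on behalf
of the candidate `a` have the laws `law₁ a.1 z`, `law₂ a.2 z`, `law₃ a z`, and `weight z (a, u)` is
the joint likelihood of `z` with the candidate `a` and the words `u`. The first two words are those
of the sources, the third that of the relay. -/
structure Receiver (A1 A2 U1 U2 U3 Z : Type*) where
  law₁ : A1 → Z → U1 → ℝ
  law₂ : A2 → Z → U2 → ℝ
  law₃ : A1 × A2 → Z → U3 → ℝ
  weight : Z → (A1 × A2) × (U1 × U2 × U3) → ℝ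

/-- Which of the two messages are wrong, for the three kinds of decoding error. -/
def errorPatterns : Finset (Bool × Bool) := {(true, false), (false, true), (true, true)}

/-- The components in which two message pairs differ. -/
def errorPattern {A1 A2 : Type*} [DecidableEq A1] [DecidableEq A2] (a b : A1 × A2) : Bool × Bool :=
  (decide (a.1 ≠ b.1), decide (a.2 ≠ b.2))

theorem errorPattern_mem_errorPatterns {A1 A2 : Type*} [DecidableEq A1] [DecidableEq A2]
    {a b : A1 × A2} : errorPattern a b ∈ errorPatterns ↔ a ≠ b := by
  by_cases h1 : a.1 = b.1 <;> by_cases h2 : a.2 = b.2 <;>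
    simp_all [errorPattern, errorPatterns, Prod.ext_iff]

namespace Receiver

section Laws

variable {A1 A2 U1 U2 U3 Z : Type*} (R : Receiver A1 A2 U1 U2 U3 Z)

/-- The laws and the likelihood are nonnegative. -/
structure Nonneg : Prop where
  law₁ : ∀ a z u, 0 ≤ R.law₁ a z u
  law₂ : ∀ a z u, 0 ≤ R.law₂ a z u
  law₃ : ∀ a z u, 0 ≤ R.law₃ a z u
  weight : ∀ z ω, 0 ≤ R.weight z ω

/-- Law of the three words of the candidate `a`. -/
def law (z : Z) (a : A1 × A2) (u : U1 × U2 × U3) : ℝ :=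
  R.law₁ a.1 z u.1 * (R.law₂ a.2 z u.2.1 * R.law₃ a z u.2.2)

/-- Joint distribution of observation, messages and words. -/
def joint (z : Z) (ω : (A1 × A2) × (U1 × U2 × U3)) : ℝ := R.law z ω.1 ω.2 * R.weight z ω

variable {R}

theorem Nonneg.law_nonneg (hR : R.Nonneg) (z : Z) (a : A1 × A2) (u : U1 × U2 × U3) :
    0 ≤ R.law z a u :=
  mul_nonneg (hR.law₁ _ _ _) (mul_nonneg (hR.law₂ _ _ _) (hR.law₃ _ _ _))

theorem Nonneg.joint_nonneg (hR : R.Nonneg) (z : Z) (ω : (A1 × A2) × (U1 × U2 × U3)) :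
    0 ≤ R.joint z ω :=
  mul_nonneg (hR.law_nonneg _ _ _) (hR.weight _ _)

theorem Nonneg.weight_pos (hR : R.Nonneg) {z : Z} {ω : (A1 × A2) × (U1 × U2 × U3)}
    (h : 0 < R.joint z ω) : 0 < R.weight z ω :=
  pos_of_mul_pos_right h (hR.law_nonneg _ _ _)

end Laws

section Kernels

variable {A1 A2 U1 U2 U3 Z : Type*} [DecidableEq U1] [DecidableEq U2] [DecidableEq U3]
  (R : Receiver A1 A2 U1 U2 U3 Z)

/-- Law of the words of a candidate `a` which is wrong in the components set in `e`, given the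
words sent; `h` tells whether a wrong candidate also has a relay word of its own. -/
def wordKernel (e : Bool × Bool) (h : Bool) (z : Z) (a : A1 × A2) (u v : U1 × U2 × U3) : ℝ :=
  redraw e.1 (R.law₁ a.1 z) u.1 v.1 *
    (redraw e.2 (R.law₂ a.2 z) u.2.1 v.2.1 * redraw h (R.law₃ a z) u.2.2 v.2.2)

variable {R} in
theorem Nonneg.wordKernel_nonneg (hR : R.Nonneg) (e : Bool × Bool) (h : Bool) (z : Z)
    (a : A1 × A2) (u v : U1 × U2 × U3) : 0 ≤ R.wordKernel e h z a u v :=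
  mul_nonneg (redraw_nonneg (hR.law₁ _ _) _ _)
    (mul_nonneg (redraw_nonneg (hR.law₂ _ _) _ _) (redraw_nonneg (hR.law₃ _ _) _ _))

variable [DecidableEq A1] [DecidableEq A2]

/-- Sums over the candidates which are wrong in the components set in `e` and averages over their
words. Allowing the set components to be right by accident makes the kernel multiplicative over
independent letters. -/
def kernel (e : Bool × Bool) (h : Bool) (z : Z) (ω ω' : (A1 × A2) × (U1 × U2 × U3)) : ℝ :=
  redraw e.1 (fun _ => 1) ω.1.1 ω'.1.1 * redraw e.2 (fun _ => 1) ω.1.2 ω'.1.2 *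
    R.wordKernel e h z ω'.1 ω.2 ω'.2

variable {R}

theorem Nonneg.kernel_nonneg (hR : R.Nonneg) (e : Bool × Bool) (h : Bool) (z : Z)
    (ω ω' : (A1 × A2) × (U1 × U2 × U3)) : 0 ≤ R.kernel e h z ω ω' :=
  mul_nonneg (mul_nonneg (redraw_nonneg (fun _ => zero_le_one) _ _)
    (redraw_nonneg (fun _ => zero_le_one) _ _)) (hR.wordKernel_nonneg _ _ _ _ _ _)

theorem Nonneg.kernel_self_pos (hR : R.Nonneg) (e : Bool × Bool) (h : Bool) {z : Z}
    {ω : (A1 × A2) × (U1 × U2 × U3)} (hω : 0 < R.joint z ω) : 0 < R.kernel e h z ω ω := by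
  have hlaw := pos_of_mul_pos_left hω (hR.weight _ _)
  have h₁ := pos_of_mul_pos_left hlaw (mul_nonneg (hR.law₂ _ _ _) (hR.law₃ _ _ _))
  have h₂₃ := pos_of_mul_pos_right hlaw (hR.law₁ _ _ _)
  have h₂ := pos_of_mul_pos_left h₂₃ (hR.law₃ _ _ _)
  have h₃ := pos_of_mul_pos_right h₂₃ (hR.law₂ _ _ _)
  exact mul_pos (mul_pos (redraw_self_pos one_pos) (redraw_self_pos one_pos))
    (mul_pos (redraw_self_pos h₁) (mul_pos (redraw_self_pos h₂) (redraw_self_pos h₃)))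

theorem kernel_of_errorPattern_eq {e : Bool × Bool} (h : Bool) (z : Z) {a b : A1 × A2}
    (hab : errorPattern a b = e) (u v : U1 × U2 × U3) :
    R.kernel e h z (b, u) (a, v) = R.wordKernel e h z a u v := by
  subst hab
  by_cases h1 : a.1 = b.1 <;> by_cases h2 : a.2 = b.2 <;>
    simp [kernel, errorPattern, redraw, h1, h2]

end Kernels

section Moments

variable {A1 A2 U1 U2 U3 Z : Type*} [Fintype A1] [Fintype A2] [Fintype U1] [Fintype U2]
  [Fintype U3] [DecidableEq A1] [DecidableEq A2] [DecidableEq U1] [DecidableEq U2]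
  [DecidableEq U3] (R : Receiver A1 A2 U1 U2 U3 Z)

/-- Total likelihood of the candidates which are wrong in the components set in `e`. -/
def wrongWeight (e : Bool × Bool) (h : Bool) (z : Z) (ω : (A1 × A2) × (U1 × U2 × U3)) : ℝ :=
  ∑ ω', R.kernel e h z ω ω' * R.weight z ω'

variable [Fintype Z]

/-- Total mass of the joint distribution. -/
def mass : ℝ := ∑ z, ∑ ω, R.joint z ω

/-- Likelihood-ratio moment of the error pattern `e`, summed over the observations. -/
noncomputable def moment (e : Bool × Bool) (h : Bool) (τ : ℝ) : ℝ :=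
  ∑ z, lrMoment (R.joint z) (R.kernel e h z) (R.weight z) τ

/-- Mean log-likelihood ratio between the candidates wrong in the components set in `e` and the
right one. It is the derivative at `0` of `moment`. -/
noncomputable def drift (e : Bool × Bool) (h : Bool) : ℝ :=
  ∑ z, ∑ ω, R.joint z ω * Real.log (R.wrongWeight e h z ω / R.weight z ω)

theorem moment_zero (e : Bool × Bool) (h : Bool) : R.moment e h 0 = R.mass := by
  simp only [moment, lrMoment_zero, mass]

variable {R}

theorem hasDerivAt_moment (hR : R.Nonneg) (e : Bool × Bool) (h : Bool) :
    HasDerivAt (R.moment e h) (R.drift e h) 0 := by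
  refine HasDerivAt.fun_sum fun z _ => hasDerivAt_lrMoment (hR.joint_nonneg z) fun ω hω => ?_
  have hω' := hR.weight_pos hω
  refine div_pos ?_ hω'
  exact (mul_pos (hR.kernel_self_pos e h hω) hω').trans_le
    (Finset.single_le_sum (f := fun ω' => R.kernel e h z ω ω' * R.weight z ω')
      (fun ω' _ => mul_nonneg (hR.kernel_nonneg _ _ _ _ _) (hR.weight _ _)) (Finset.mem_univ ω))

end Moments

section Decoding

variable {A1 A2 U1 U2 U3 Z Θ : Type*} [Fintype U1] [Fintype U2] [Fintype U3] [Fintype Θ]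
  [DecidableEq A1] [DecidableEq A2] [DecidableEq U1] [DecidableEq U2] [DecidableEq U3]
  (R : Receiver A1 A2 U1 U2 U3 Z)

/-- A random code for the receiver: `v θ z a` are the words of the candidate `a` in the codebook
`θ`. They follow the laws of the receiver, and so do the words of a wrong candidate given those of
the right one. -/
structure IsRandomCode (h : Bool) (w : Θ → ℝ) (v : Θ → Z → A1 × A2 → U1 × U2 × U3) : Prop where
  isPmf : IsPmf w
  law : ∀ z a, HasCondLaw w (fun θ => v θ z a) (fun _ => ()) fun _ => R.law z a
  wrong : ∀ z a b, a ≠ b → HasCondLaw w (fun θ => v θ z a) (fun θ => v θ z b)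
    (R.wordKernel (errorPattern a b) h z a)

variable {R} {h : Bool} {w : Θ → ℝ} {v : Θ → Z → A1 × A2 → U1 × U2 × U3}

theorem IsRandomCode.sum_ite_errorPattern_le (hv : R.IsRandomCode h w v) (hR : R.Nonneg)
    {e : Bool × Bool} (he : e ∈ errorPatterns) (z : Z) {φ : (A1 × A2) × (U1 × U2 × U3) → ℝ}
    (hφ : ∀ ω, 0 ≤ φ ω) (a b : A1 × A2) :
    ∑ θ, w θ * (if errorPattern a b = e then R.weight z (a, v θ z a) * φ (b, v θ z b) else 0) ≤
      ∑ θ, w θ * ∑ u, R.kernel e h z (b, v θ z b) (a, u) *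
        (R.weight z (a, u) * φ (b, v θ z b)) := by
  split_ifs with hab
  · have hne := errorPattern_mem_errorPatterns.1 (hab ▸ he)
    rw [hv.wrong z a b hne fun u u' => R.weight z (a, u) * φ (b, u')]
    simp only [hab, kernel_of_errorPattern_eq h z hab, le_refl]
  · simp only [mul_zero, Finset.sum_const_zero]
    exact Finset.sum_nonneg fun θ _ => mul_nonneg (hv.isPmf.1 θ) (Finset.sum_nonneg fun u _ =>
      mul_nonneg (hR.kernel_nonneg _ _ _ _ _) (mul_nonneg (hR.weight _ _) (hφ _)))

variable [Fintype A1] [Fintype A2]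

variable (R) in
/-- The threshold test: for the error pattern `e`, the total likelihood of the candidates
confusable with `ω.1` is at most `γ` times the likelihood of `ω.1` itself. -/
def Passes (h : Bool) (γ : ℝ) (z : Z) (e : Bool × Bool)
    (ω : (A1 × A2) × (U1 × U2 × U3)) : Prop :=
  R.wrongWeight e h z ω ≤ γ * R.weight z ω

variable (R) in
/-- Decides for a candidate which passes the threshold test for all error patterns; `v` lists the
words of the candidates. -/
noncomputable def decode [Nonempty (A1 × A2)] (h : Bool) (γ : ℝ) (v : A1 × A2 → U1 × U2 × U3)
    (z : Z) : A1 × A2 :=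
  Classical.epsilon fun a => ∀ e ∈ errorPatterns, R.Passes h γ z e (a, v a)

theorem IsRandomCode.sum_eq (hv : R.IsRandomCode h w v) (z : Z)
    (F : (A1 × A2) × (U1 × U2 × U3) → ℝ) :
    ∑ θ, w θ * ∑ a, R.weight z (a, v θ z a) * F (a, v θ z a) = ∑ ω, R.joint z ω * F ω := by
  have hlaw : ∀ a, ∑ θ, w θ * (R.weight z (a, v θ z a) * F (a, v θ z a)) =
      ∑ u, R.joint z (a, u) * F (a, u) := fun a => by
    rw [hv.law z a fun u _ => R.weight z (a, u) * F (a, u), ← Finset.sum_mul, hv.isPmf.2, one_mul]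
    simp only [joint, mul_assoc]
  simp only [Finset.mul_sum]
  rw [Finset.sum_comm, Fintype.sum_prod_type (fun ω => R.joint z ω * F ω)]
  exact Finset.sum_congr rfl fun a _ => hlaw a

open Classical in
theorem IsRandomCode.sum_confused_le (hv : R.IsRandomCode h w v) (hR : R.Nonneg) {e : Bool × Bool}
    (he : e ∈ errorPatterns) {γ : ℝ} (hγ : 0 ≤ γ) (z : Z) :
    ∑ θ, w θ * ∑ a, R.weight z (a, v θ z a) *
        ∑ b, (if errorPattern a b = e ∧ R.Passes h γ z e (b, v θ z b) then 1 else 0)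
      ≤ γ * ∑ ω, R.joint z ω := by
  set φ : (A1 × A2) × (U1 × U2 × U3) → ℝ := fun ω => if R.Passes h γ z e ω then 1 else 0 with hφ
  have hφ0 : ∀ ω, 0 ≤ φ ω := fun ω => by rw [hφ]; dsimp only; split_ifs <;> norm_num
  have htest : ∀ ω, R.wrongWeight e h z ω * φ ω ≤ γ * R.weight z ω := by
    intro ω
    by_cases hω : R.Passes h γ z e ω
    · simp only [hφ, if_pos hω, mul_one]
      exact hω
    · simpa [hφ, hω] using mul_nonneg hγ (hR.weight z ω)
  calc ∑ θ, w θ * ∑ a, R.weight z (a, v θ z a) *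
        ∑ b, (if errorPattern a b = e ∧ R.Passes h γ z e (b, v θ z b) then 1 else 0)
      = ∑ a, ∑ b, ∑ θ, w θ * (if errorPattern a b = e then
          R.weight z (a, v θ z a) * φ (b, v θ z b) else 0) := by
        simp only [Finset.mul_sum, hφ, ite_and, mul_ite, mul_one, mul_zero]
        rw [Finset.sum_comm]
        exact Finset.sum_congr rfl fun a _ => Finset.sum_comm
    _ ≤ ∑ a, ∑ b, ∑ θ, w θ * ∑ u, R.kernel e h z (b, v θ z b) (a, u) *
          (R.weight z (a, u) * φ (b, v θ z b)) :=
        Finset.sum_le_sum fun a _ => Finset.sum_le_sum fun b _ =>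
          hv.sum_ite_errorPattern_le hR he z hφ0 a b
    _ = ∑ θ, w θ * ∑ b, R.wrongWeight e h z (b, v θ z b) * φ (b, v θ z b) := by
        simp only [wrongWeight, Fintype.sum_prod_type (α₁ := A1 × A2), Finset.mul_sum,
          Finset.sum_mul, mul_assoc]
        rw [Finset.sum_comm_cycle]
        exact Finset.sum_congr rfl fun θ _ => Finset.sum_comm
    _ ≤ ∑ θ, w θ * ∑ b, γ * R.weight z (b, v θ z b) :=
        Finset.sum_le_sum fun θ _ => mul_le_mul_of_nonneg_left
          (Finset.sum_le_sum fun b _ => htest _) (hv.isPmf.1 θ)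
    _ = γ * ∑ ω, R.joint z ω := by
        have := hv.sum_eq z fun _ => γ
        simp only [← Finset.sum_mul] at this
        rw [mul_comm, ← this]
        simp only [Finset.mul_sum, mul_comm]

open Classical in
theorem IsRandomCode.sum_fails_le (hv : R.IsRandomCode h w v) (hR : R.Nonneg) (e : Bool × Bool)
    {γ τ : ℝ} (hγ : 0 < γ) (hτ : 0 ≤ τ) (z : Z) :
    ∑ θ, w θ * ∑ a, R.weight z (a, v θ z a) * (if R.Passes h γ z e (a, v θ z a) then 0 else 1)
      ≤ γ⁻¹ ^ τ * lrMoment (R.joint z) (R.kernel e h z) (R.weight z) τ := by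
  rw [hv.sum_eq z fun ω => if R.Passes h γ z e ω then 0 else 1]
  simpa only [Passes, wrongWeight, ← not_lt, ite_not] using
    sum_lt_le_lrMoment (hR.joint_nonneg z) (hR.kernel_nonneg e h z) (hR.weight z)
      (fun ω => hR.weight_pos) hγ hτ

theorem IsRandomCode.sum_decode_ne_le [Nonempty (A1 × A2)] [Fintype Z]
    (hv : R.IsRandomCode h w v) (hR : R.Nonneg) {γ : ℝ} (hγ : 0 < γ) {τ : Bool × Bool → ℝ}
    (hτ : ∀ e ∈ errorPatterns, 0 ≤ τ e) :
    ∑ θ, w θ * ∑ z, ∑ a, R.weight z (a, v θ z a) * (if R.decode h γ (v θ z) z ≠ a then 1 else 0)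
      ≤ ∑ e ∈ errorPatterns, (γ⁻¹ ^ τ e * R.moment e h (τ e) + γ * R.mass) := by
  classical
  calc ∑ θ, w θ * ∑ z, ∑ a, R.weight z (a, v θ z a) *
        (if R.decode h γ (v θ z) z ≠ a then 1 else 0)
      ≤ ∑ θ, w θ * ∑ z, ∑ a, R.weight z (a, v θ z a) * ∑ e ∈ errorPatterns,
          ((if R.Passes h γ z e (a, v θ z a) then 0 else 1) +
            ∑ b, if errorPattern a b = e ∧ R.Passes h γ z e (b, v θ z b) then 1 else 0) := by
        gcongr with θ _ z _ a _
        · exact hv.isPmf.1 θ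
        · exact hR.weight _ _
        · exact ite_epsilon_ne_le (fun _ _ => errorPattern_mem_errorPatterns.2)
            (fun e b => R.Passes h γ z e (b, v θ z b)) a
    _ = ∑ e ∈ errorPatterns, ∑ z,
          (∑ θ, w θ * ∑ a, R.weight z (a, v θ z a) *
              (if R.Passes h γ z e (a, v θ z a) then 0 else 1) +
            ∑ θ, w θ * ∑ a, R.weight z (a, v θ z a) * ∑ b,
              if errorPattern a b = e ∧ R.Passes h γ z e (b, v θ z b) then 1 else 0) := by
        simp only [← Finset.sum_add_distrib, ← mul_add]
        simp only [Finset.mul_sum, Finset.sum_comm (t := errorPatterns)]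
        exact Finset.sum_congr rfl fun e _ => Finset.sum_comm
    _ ≤ ∑ e ∈ errorPatterns, ∑ z, (γ⁻¹ ^ τ e * lrMoment (R.joint z) (R.kernel e h z) (R.weight z)
          (τ e) + γ * ∑ ω, R.joint z ω) :=
        Finset.sum_le_sum fun e he => Finset.sum_le_sum fun z _ =>
          add_le_add (hv.sum_fails_le hR e hγ (hτ e he) z) (hv.sum_confused_le hR he hγ.le z)
    _ = ∑ e ∈ errorPatterns, (γ⁻¹ ^ τ e * R.moment e h (τ e) + γ * R.mass) := by
        simp only [Finset.sum_add_distrib, ← Finset.mul_sum, moment, mass]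

end Decoding
end Receiver

section Letters

variable {I S1 S2 X1 X2 X3 Z : Type*} [Fintype I] (R : I → Receiver S1 S2 X1 X2 X3 Z)

/-- Independent letters, received jointly. -/
def Receiver.pi : Receiver (I → S1) (I → S2) (I → X1) (I → X2) (I → X3) (I → Z) where
  law₁ a z u := ∏ i, (R i).law₁ (a i) (z i) (u i)
  law₂ a z u := ∏ i, (R i).law₂ (a i) (z i) (u i)
  law₃ a z u := ∏ i, (R i).law₃ (a.1 i, a.2 i) (z i) (u i)
  weight z ω := ∏ i, (R i).weight (z i) ((ω.1.1 i, ω.1.2 i), ω.2.1 i, ω.2.2.1 i, ω.2.2.2 i)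

variable {R} in
theorem Receiver.Nonneg.pi (hR : ∀ i, (R i).Nonneg) : (Receiver.pi R).Nonneg where
  law₁ _ _ _ := Finset.prod_nonneg fun i _ => (hR i).law₁ _ _ _
  law₂ _ _ _ := Finset.prod_nonneg fun i _ => (hR i).law₂ _ _ _
  law₃ _ _ _ := Finset.prod_nonneg fun i _ => (hR i).law₃ _ _ _
  weight _ _ := Finset.prod_nonneg fun i _ => (hR i).weight _ _

/-- A pair of messages and a triple of words, read letter by letter. -/
def lettersEquiv (I S1 S2 X1 X2 X3 : Type*) :
    ((I → S1) × (I → S2)) × ((I → X1) × (I → X2) × (I → X3)) ≃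
      (I → (S1 × S2) × (X1 × X2 × X3)) where
  toFun ω i := ((ω.1.1 i, ω.1.2 i), ω.2.1 i, ω.2.2.1 i, ω.2.2.2 i)
  invFun f := ((fun i => (f i).1.1, fun i => (f i).1.2),
    fun i => (f i).2.1, fun i => (f i).2.2.1, fun i => (f i).2.2.2)

theorem Receiver.joint_pi (z : I → Z)
    (ω : ((I → S1) × (I → S2)) × ((I → X1) × (I → X2) × (I → X3))) :
    (Receiver.pi R).joint z ω = ∏ i, (R i).joint (z i) (lettersEquiv I S1 S2 X1 X2 X3 ω i) := by
  simp only [Receiver.joint, Receiver.law, Receiver.pi, lettersEquiv, Equiv.coe_fn_mk,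
    Finset.prod_mul_distrib]

variable [DecidableEq S1] [DecidableEq S2] [DecidableEq X1] [DecidableEq X2] [DecidableEq X3]

theorem Receiver.kernel_pi (e : Bool × Bool) (h : Bool) (z : I → Z)
    (ω ω' : ((I → S1) × (I → S2)) × ((I → X1) × (I → X2) × (I → X3))) :
    (Receiver.pi R).kernel e h z ω ω' =
      ∏ i, (R i).kernel e h (z i) (lettersEquiv I S1 S2 X1 X2 X3 ω i)
        (lettersEquiv I S1 S2 X1 X2 X3 ω' i) := by
  simp only [Receiver.kernel, Receiver.wordKernel, Receiver.pi, lettersEquiv, Equiv.coe_fn_mk,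
    Finset.prod_mul_distrib, redraw_pi_one]
  simp only [redraw_pi]

variable {R} [Fintype S1] [Fintype S2] [Fintype X1] [Fintype X2] [Fintype X3] [Fintype Z]
  [DecidableEq I]

theorem Receiver.moment_pi (hR : ∀ i, (R i).Nonneg) (e : Bool × Bool) (h : Bool) (τ : ℝ) :
    (Receiver.pi R).moment e h τ = ∏ i, (R i).moment e h τ := by
  simp only [Receiver.moment, Fintype.prod_sum]
  refine Finset.sum_congr rfl fun z _ => ?_
  rw [← lrMoment_pi (fun i => (hR i).kernel_nonneg e h (z i)) (fun i => (hR i).weight (z i)),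
    ← lrMoment_equiv (lettersEquiv I S1 S2 X1 X2 X3)]
  simp only [← Receiver.joint_pi, ← Receiver.kernel_pi]
  rfl

end Letters

section Codebook

theorem IsPmf.prod {α β : Type*} [Fintype α] [Fintype β] {p : α → ℝ} {q : β → ℝ} (hp : IsPmf p)
    (hq : IsPmf q) : IsPmf fun ω : α × β => p ω.1 * q ω.2 := by
  refine ⟨fun ω => mul_nonneg (hp.1 _) (hq.1 _), ?_⟩
  rw [Fintype.sum_prod_type, ← Fintype.sum_mul_sum, hp.2, hq.2, one_mul]

variable {κ₁ κ₂ κ₃ U1 U2 U3 : Type*} [Fintype κ₁] [Fintype κ₂] [Fintype κ₃]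
  {p₁ : κ₁ → U1 → ℝ} {p₂ : κ₂ → U2 → ℝ} {p₃ : κ₃ → U3 → ℝ}

/-- Probability of the three codebooks in `θ` when their entries are drawn independently. -/
def codebookWeight (p₁ : κ₁ → U1 → ℝ) (p₂ : κ₂ → U2 → ℝ) (p₃ : κ₃ → U3 → ℝ)
    (θ : (κ₁ → U1) × (κ₂ → U2) × (κ₃ → U3)) : ℝ :=
  (∏ i, p₁ i (θ.1 i)) * ((∏ i, p₂ i (θ.2.1 i)) * ∏ i, p₃ i (θ.2.2 i))

variable [Fintype U1] [Fintype U2] [Fintype U3] [DecidableEq κ₁] [DecidableEq κ₂] [DecidableEq κ₃]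

theorem isPmf_codebookWeight (hp₁ : ∀ i, IsPmf (p₁ i)) (hp₂ : ∀ i, IsPmf (p₂ i))
    (hp₃ : ∀ i, IsPmf (p₃ i)) : IsPmf (codebookWeight p₁ p₂ p₃) :=
  (isPmf_pi hp₁).prod ((isPmf_pi hp₂).prod (isPmf_pi hp₃))

theorem Receiver.isRandomCode_codebook {A1 A2 Z : Type*} [DecidableEq A1] [DecidableEq A2]
    [DecidableEq U1] [DecidableEq U2] [DecidableEq U3] {R : Receiver A1 A2 U1 U2 U3 Z}
    {key₁ : A1 → Z → κ₁} {key₂ : A2 → Z → κ₂} {key₃ : A1 × A2 → Z → κ₃} {h : Bool}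
    (hp₁ : ∀ i, IsPmf (p₁ i)) (hp₂ : ∀ i, IsPmf (p₂ i)) (hp₃ : ∀ i, IsPmf (p₃ i))
    (hR₁ : ∀ a z, R.law₁ a z = p₁ (key₁ a z)) (hR₂ : ∀ a z, R.law₂ a z = p₂ (key₂ a z))
    (hR₃ : ∀ a z, R.law₃ a z = p₃ (key₃ a z))
    (hkey₁ : ∀ z, Function.Injective (key₁ · z)) (hkey₂ : ∀ z, Function.Injective (key₂ · z))
    (hkey₃ : ∀ z a b, a ≠ b → (h = true ↔ key₃ a z ≠ key₃ b z)) :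
    R.IsRandomCode h (codebookWeight p₁ p₂ p₃)
      fun θ z a => (θ.1 (key₁ a.1 z), θ.2.1 (key₂ a.2 z), θ.2.2 (key₃ a z)) where
  isPmf := isPmf_codebookWeight hp₁ hp₂ hp₃
  law z a := by
    have hlaw : R.law z a = fun u =>
        p₁ (key₁ a.1 z) u.1 * (p₂ (key₂ a.2 z) u.2.1 * p₃ (key₃ a z) u.2.2) := by
      funext u
      rw [Receiver.law, hR₁, hR₂, hR₃]
    rw [hlaw]
    exact fun F => ((hasCondLaw_pi_apply hp₁ (key₁ a.1 z)).prod
      ((hasCondLaw_pi_apply hp₂ (key₂ a.2 z)).prod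
        (hasCondLaw_pi_apply hp₃ (key₃ a z)))) fun u _ => F u ()
  wrong z a b hab := by
    have hkernel : R.wordKernel (errorPattern a b) h z a = fun u v =>
        redraw (decide (a.1 ≠ b.1)) (p₁ (key₁ a.1 z)) u.1 v.1 *
          (redraw (decide (a.2 ≠ b.2)) (p₂ (key₂ a.2 z)) u.2.1 v.2.1 *
            redraw h (p₃ (key₃ a z)) u.2.2 v.2.2) := by
      funext u v
      rw [Receiver.wordKernel, hR₁, hR₂, hR₃, errorPattern]
    rw [hkernel]
    exact (hasCondLaw_pi_redraw hp₁ (by simp [(hkey₁ z).eq_iff])).prod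
      ((hasCondLaw_pi_redraw hp₂ (by simp [(hkey₂ z).eq_iff])).prod
        (hasCondLaw_pi_redraw hp₃ (hkey₃ z a b hab)))

end Codebook

section Marginal

variable {Ω α β : Type*} [Fintype Ω]

/-- Push-forward of the weight `μ` under `X`. -/
def marginal [DecidableEq α] (μ : Ω → ℝ) (X : Ω → α) (a : α) : ℝ :=
  ∑ ω, if X ω = a then μ ω else 0

variable [DecidableEq α] [DecidableEq β] {μ : Ω → ℝ}

theorem marginal_nonneg (hμ : ∀ ω, 0 ≤ μ ω) (X : Ω → α) (a : α) : 0 ≤ marginal μ X a :=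
  Finset.sum_nonneg fun ω _ => by split_ifs <;> simp [hμ ω]

theorem marginal_apply_pos (hμ : ∀ ω, 0 ≤ μ ω) (X : Ω → α) {ω : Ω} (hω : 0 < μ ω) :
    0 < marginal μ X (X ω) :=
  Finset.sum_pos' (fun ω' _ => by split_ifs <;> simp [hμ ω']) ⟨ω, Finset.mem_univ ω, by simpa⟩

theorem sum_marginal_mul [Fintype α] (μ : Ω → ℝ) (X : Ω → α) (F : α → ℝ) :
    ∑ a, marginal μ X a * F a = ∑ ω, μ ω * F (X ω) := by
  simp only [marginal, Finset.sum_mul, ite_mul, zero_mul]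
  rw [Finset.sum_comm]
  simp

theorem IsPmf.marginal [Fintype α] (hμ : IsPmf μ) (X : Ω → α) : IsPmf (marginal μ X) :=
  ⟨marginal_nonneg hμ.1 X, by simpa [hμ.2] using sum_marginal_mul μ X fun _ => 1⟩

theorem marginal_comp [Fintype α] (μ : Ω → ℝ) (X : Ω → α) (f : α → β) :
    marginal (marginal μ X) f = marginal μ fun ω => f (X ω) := by
  funext b
  simpa [marginal] using sum_marginal_mul μ X fun a => if f a = b then 1 else 0

theorem sum_pi_fiberwise {I X B : Type*} [Fintype I] [DecidableEq I] [Fintype X] [Fintype B]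
    [DecidableEq B] (π : X → B) (K : I → (I → B) → X → ℝ) (F : (I → B) → ℝ) :
    ∑ x : I → X, (∏ i, K i (fun j => π (x j)) (x i)) * F (fun i => π (x i))
      = ∑ b : I → B, (∏ i, marginal (K i b) π (b i)) * F b := by
  calc ∑ x : I → X, (∏ i, K i (fun j => π (x j)) (x i)) * F (fun i => π (x i))
      = ∑ x : I → X, ∑ b : I → B,
          (if (fun j => π (x j)) = b then ∏ i, K i b (x i) else 0) * F b := by simp
    _ = ∑ b : I → B, (∑ x : I → X, ∏ i, if π (x i) = b i then K i b (x i) else 0) * F b := by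
        rw [Finset.sum_comm]
        simp only [Finset.prod_ite_zero, Finset.sum_mul, funext_iff, Finset.mem_univ, true_imp_iff]
    _ = ∑ b : I → B, (∏ i, marginal (K i b) π (b i)) * F b := by
        simp only [marginal, Fintype.prod_sum]

end Marginal

theorem marginal_prod {Ω Ω' α β : Type*} [Fintype Ω] [Fintype Ω'] [DecidableEq α] [DecidableEq β]
    (μ : Ω → ℝ) (ν : Ω' → ℝ) (X : Ω → α) (Y : Ω' → β) (a : α) (b : β) :
    marginal (fun ω : Ω × Ω' => μ ω.1 * ν ω.2) (fun ω => (X ω.1, Y ω.2)) (a, b)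
      = marginal μ X a * marginal ν Y b := by
  simp only [marginal, Prod.mk.injEq, ite_and, Fintype.sum_prod_type, Fintype.sum_mul_sum]
  refine Finset.sum_congr rfl fun ω _ => Finset.sum_congr rfl fun ω' _ => ?_
  split_ifs <;> simp

section LetterReceivers

variable {S1 S2 W W3 X1 X2 X3 Y Y3 σ T : Type*}

/-- The source letters proper of a source output. -/
def msg (s : S1 × S2 × W × W3) : S1 × S2 := (s.1, s.2.1)

variable [Fintype S1] [Fintype S2] [Fintype W] [Fintype W3] [Fintype Y] [Fintype Y3]
  [DecidableEq S1] [DecidableEq S2]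

section Definitions

variable (pSrc : S1 × S2 × W × W3 → ℝ) (Q : X1 × X2 × X3 → Y × Y3 → ℝ)
  (pX1 : S1 → X1 → ℝ) (pX2 : S2 → X2 → ℝ) (pX3 : S1 → S2 → X3 → ℝ)

/-- Likelihood of the observation `(b, v, t)`, where `b` are known source letters independent of
the letters `ω.1` to be decoded, `v` is side information on the latter and `t` is the visible part
of the channel output. -/
def letterWeight [DecidableEq σ] [DecidableEq T] (side : S1 × S2 × W × W3 → σ) (out : Y × Y3 → T)
    (z : (S1 × S2) × σ × T) (ω : (S1 × S2) × (X1 × X2 × X3)) : ℝ :=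
  marginal pSrc msg z.1 * marginal pSrc (fun s => (msg s, side s)) (ω.1, z.2.1) *
    marginal (Q ω.2) out z.2.2

/-- The relay decoding one letter of the new messages; it knows the letter of the old messages,
which determines the laws of the inputs. -/
def relayReceiver [DecidableEq W3] [DecidableEq Y3] :
    Receiver S1 S2 X1 X2 X3 ((S1 × S2) × W3 × Y3) where
  law₁ _ z := pX1 z.1.1
  law₂ _ z := pX2 z.1.2
  law₃ _ z := pX3 z.1.1 z.1.2
  weight := letterWeight pSrc Q (fun s => s.2.2.2) Prod.snd

/-- The destination decoding one letter of the old messages, which determines the laws of the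
inputs; it knows the letter of the new messages, as decoding runs backwards. -/
def destReceiver [DecidableEq W] [DecidableEq Y] :
    Receiver S1 S2 X1 X2 X3 ((S1 × S2) × W × Y) where
  law₁ a _ := pX1 a
  law₂ a _ := pX2 a
  law₃ a _ := pX3 a.1 a.2
  weight := letterWeight pSrc Q (fun s => s.2.2.1) Prod.fst

end Definitions

variable {pSrc : S1 × S2 × W × W3 → ℝ} {Q : X1 × X2 × X3 → Y × Y3 → ℝ}
  {pX1 : S1 → X1 → ℝ} {pX2 : S2 → X2 → ℝ} {pX3 : S1 → S2 → X3 → ℝ}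

theorem letterWeight_nonneg [DecidableEq σ] [DecidableEq T] (hSrc : ∀ s, 0 ≤ pSrc s)
    (hQ : ∀ x o, 0 ≤ Q x o) (side : S1 × S2 × W × W3 → σ) (out : Y × Y3 → T)
    (z : (S1 × S2) × σ × T) (ω : (S1 × S2) × (X1 × X2 × X3)) :
    0 ≤ letterWeight pSrc Q side out z ω :=
  mul_nonneg (mul_nonneg (marginal_nonneg hSrc _ _) (marginal_nonneg hSrc _ _))
    (marginal_nonneg (hQ _) _ _)

theorem relayReceiver_nonneg [DecidableEq W3] [DecidableEq Y3] (hSrc : ∀ s, 0 ≤ pSrc s)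
    (hQ : ∀ x o, 0 ≤ Q x o) (h₁ : ∀ s u, 0 ≤ pX1 s u) (h₂ : ∀ s u, 0 ≤ pX2 s u)
    (h₃ : ∀ s s' u, 0 ≤ pX3 s s' u) : (relayReceiver pSrc Q pX1 pX2 pX3).Nonneg where
  law₁ _ _ := h₁ _
  law₂ _ _ := h₂ _
  law₃ _ _ := h₃ _ _
  weight := letterWeight_nonneg hSrc hQ _ _

theorem destReceiver_nonneg [DecidableEq W] [DecidableEq Y] (hSrc : ∀ s, 0 ≤ pSrc s)
    (hQ : ∀ x o, 0 ≤ Q x o) (h₁ : ∀ s u, 0 ≤ pX1 s u) (h₂ : ∀ s u, 0 ≤ pX2 s u)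
    (h₃ : ∀ s s' u, 0 ≤ pX3 s s' u) : (destReceiver pSrc Q pX1 pX2 pX3).Nonneg where
  law₁ _ _ := h₁ _
  law₂ _ _ := h₂ _
  law₃ _ _ := h₃ _ _
  weight := letterWeight_nonneg hSrc hQ _ _

theorem marginal_view [DecidableEq σ] [DecidableEq T] (side : S1 × S2 × W × W3 → σ)
    (out : Y × Y3 → T) (u : X1 × X2 × X3) (a : S1 × S2) (z : (S1 × S2) × σ × T) :
    marginal (fun ξ : (S1 × S2 × W × W3) × (S1 × S2 × W × W3) × (Y × Y3) =>
          pSrc ξ.1 * (pSrc ξ.2.1 * Q u ξ.2.2))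
        (fun ξ => ((msg ξ.1, side ξ.1), (msg ξ.2.1, out ξ.2.2))) ((a, z.2.1), (z.1, z.2.2))
      = letterWeight pSrc Q side out z (a, u) := by
  rw [marginal_prod pSrc (fun ξ : (S1 × S2 × W × W3) × (Y × Y3) => pSrc ξ.1 * Q u ξ.2)
    (fun s => (msg s, side s)) fun ξ => (msg ξ.1, out ξ.2), marginal_prod, letterWeight]
  ring

variable [Fintype X1] [Fintype X2] [Fintype X3]

theorem sum_law_eq_one {p₁ : X1 → ℝ} {p₂ : X2 → ℝ} {p₃ : X3 → ℝ} (h₁ : IsPmf p₁) (h₂ : IsPmf p₂)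
    (h₃ : IsPmf p₃) : ∑ u : X1 × X2 × X3, p₁ u.1 * (p₂ u.2.1 * p₃ u.2.2) = 1 :=
  (h₁.prod (h₂.prod h₃)).2

theorem sum_mul_letterWeight [Fintype σ] [DecidableEq σ] [Fintype T] [DecidableEq T]
    (hSrc : IsPmf pSrc) (hQ : ∀ x, IsPmf (Q x)) (side : S1 × S2 × W × W3 → σ) (out : Y × Y3 → T)
    {L : S1 × S2 → S1 × S2 → X1 × X2 × X3 → ℝ} (hL : ∀ b a, ∑ u, L b a u = 1) :
    ∑ z, ∑ ω, L z.1 ω.1 ω.2 * letterWeight pSrc Q side out z ω = 1 := by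
  have hsplit : ∀ (b : S1 × S2) (v : σ), ∑ t : T, ∑ a : S1 × S2, ∑ u : X1 × X2 × X3,
      L b a u * (marginal pSrc msg b * marginal pSrc (fun s => (msg s, side s)) (a, v) *
        marginal (Q u) out t) =
      marginal pSrc msg b * ∑ a, marginal pSrc (fun s => (msg s, side s)) (a, v) := by
    intro b v
    rw [Finset.sum_comm, Finset.mul_sum]
    refine Finset.sum_congr rfl fun a _ => ?_
    rw [Finset.sum_comm]
    simp only [← Finset.mul_sum, ((hQ _).marginal out).2, ← Finset.sum_mul, hL, mul_one, one_mul]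
  have hSide := (hSrc.marginal fun s => (msg s, side s)).2
  rw [Fintype.sum_prod_type_right] at hSide
  simp only [letterWeight, Fintype.sum_prod_type (α₁ := S1 × S2), Fintype.sum_prod_type (α₁ := σ),
    hsplit, ← Finset.mul_sum, hSide, mul_one, (hSrc.marginal msg).2]

theorem relayReceiver_mass [DecidableEq W3] [DecidableEq Y3] (hSrc : IsPmf pSrc)
    (hQ : ∀ x, IsPmf (Q x)) (h₁ : ∀ s, IsPmf (pX1 s)) (h₂ : ∀ s, IsPmf (pX2 s))
    (h₃ : ∀ s s', IsPmf (pX3 s s')) : (relayReceiver pSrc Q pX1 pX2 pX3).mass = 1 :=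
  sum_mul_letterWeight hSrc hQ _ _ fun b _ => sum_law_eq_one (h₁ b.1) (h₂ b.2) (h₃ b.1 b.2)

theorem destReceiver_mass [DecidableEq W] [DecidableEq Y] (hSrc : IsPmf pSrc)
    (hQ : ∀ x, IsPmf (Q x)) (h₁ : ∀ s, IsPmf (pX1 s)) (h₂ : ∀ s, IsPmf (pX2 s))
    (h₃ : ∀ s s', IsPmf (pX3 s s')) : (destReceiver pSrc Q pX1 pX2 pX3).mass = 1 :=
  sum_mul_letterWeight hSrc hQ _ _ fun _ a => sum_law_eq_one (h₁ a.1) (h₂ a.2) (h₃ a.1 a.2)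

end LetterReceivers

/-! ### Random codes for one block -/

section BlockCode

variable {F A1 A2 W W3 U1 U2 U3 Y Y3 : Type*}

/-- A code for one block of block-Markov transmission. The inputs depend on a new and an old message
pair; the relay, knowing the old pair, decodes the new one, and the destination, knowing the new
pair, decodes the old one. The source encoders take the new message first. -/
structure BlockCode (A1 A2 W W3 U1 U2 U3 Y Y3 : Type*) where
  code₁ : A1 → A1 → U1
  code₂ : A2 → A2 → U2
  code₃ : A1 × A2 → U3
  relayDecode : A1 × A2 → W3 → Y3 → A1 × A2
  destDecode : A1 × A2 → W → Y → A1 × A2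

namespace BlockCode

variable (C : BlockCode A1 A2 W W3 U1 U2 U3 Y Y3)

/-- The channel input in a block in which the relay believes the old message pair to be `r`. -/
def input (new old r : A1 × A2) : U1 × U2 × U3 :=
  (C.code₁ new.1 old.1, C.code₂ new.2 old.2, C.code₃ r)

variable [Fintype Y] [Fintype Y3] [DecidableEq A1] [DecidableEq A2]

/-- Probability that the relay or the destination fails to decode a block sent over the channel
`V`, when both know what they need. -/
def blockErr (V : U1 × U2 × U3 → Y × Y3 → ℝ) (new old : A1 × A2) (w3 : W3) (w : W) : ℝ :=
  ∑ o, V (C.input new old old) o *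
    if C.relayDecode old w3 o.2 = new ∧ C.destDecode new w o.1 = old then 0 else 1

variable [Fintype F]

/-- Mean of `blockErr` when the new and the old source output are drawn independently from `P`;
`m`, `w`, `w3` are the message and side information parts of a source output. -/
def meanErr (P : F → ℝ) (m : F → A1 × A2) (w : F → W) (w3 : F → W3)
    (V : U1 × U2 × U3 → Y × Y3 → ℝ) : ℝ :=
  ∑ f, ∑ g, P f * P g * C.blockErr V (m f) (m g) (w3 f) (w g)

variable {P : F → ℝ} {m : F → A1 × A2} {w : F → W} {w3 : F → W3} {V : U1 × U2 × U3 → Y × Y3 → ℝ}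

theorem meanErr_le (hP : ∀ f, 0 ≤ P f) (hV : ∀ u o, 0 ≤ V u o) :
    C.meanErr P m w w3 V ≤
      (∑ f, ∑ g, P f * P g * ∑ o, V (C.input (m f) (m g) (m g)) o *
        if C.relayDecode (m g) (w3 f) o.2 ≠ m f then 1 else 0) +
      ∑ f, ∑ g, P f * P g * ∑ o, V (C.input (m f) (m g) (m g)) o *
        if C.destDecode (m f) (w g) o.1 ≠ m g then 1 else 0 := by
  simp only [meanErr, blockErr, ← Finset.sum_add_distrib, ← mul_add]
  refine Finset.sum_le_sum fun f _ => Finset.sum_le_sum fun g _ => ?_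
  refine mul_le_mul_of_nonneg_left (Finset.sum_le_sum fun o _ => ?_) (mul_nonneg (hP _) (hP _))
  refine mul_le_mul_of_nonneg_left ?_ (hV _ _)
  split_ifs <;> simp_all

end BlockCode
end BlockCode

section RandomBlockCode

variable {I S1 S2 W W3 X1 X2 X3 Y Y3 σ T : Type*} [Fintype I] [DecidableEq I]
  [Fintype S1] [Fintype S2] [Fintype W] [Fintype W3] [Fintype Y] [Fintype Y3]
  [DecidableEq S1] [DecidableEq S2]

/-- The message pair of a block of source outputs. -/
def blockMsg (f : I → S1 × S2 × W × W3) : (I → S1) × (I → S2) :=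
  (fun i => (f i).1, fun i => (f i).2.1)

/-- The channel `Ch i` is used for the `i`-th letter. -/
def blockChannel (Ch : I → X1 × X2 × X3 → Y × Y3 → ℝ) (u : (I → X1) × (I → X2) × (I → X3))
    (o : (I → Y) × (I → Y3)) : ℝ :=
  ∏ i, Ch i (u.1 i, u.2.1 i, u.2.2 i) (o.1 i, o.2 i)

/-- Observation of a receiver which knows the messages of the block `g`, has side information on
the block `f` and sees the channel output `o`. -/
def blockObs (side : S1 × S2 × W × W3 → σ) (out : Y × Y3 → T) (f g : I → S1 × S2 × W × W3)
    (o : (I → Y) × (I → Y3)) (i : I) : (S1 × S2) × σ × T :=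
  (msg (g i), side (f i), out (o.1 i, o.2 i))

/-- Reads a block of views of pairs of source outputs and channel outputs as the observation of a
receiver together with the message pair to be decoded. -/
def viewEquiv (I S1 S2 σ T : Type*) :
    (I → ((S1 × S2) × σ) × ((S1 × S2) × T)) ≃
      (I → (S1 × S2) × σ × T) × ((I → S1) × (I → S2)) where
  toFun b := (fun i => ((b i).2.1, (b i).1.2, (b i).2.2),
    (fun i => (b i).1.1.1, fun i => (b i).1.1.2))
  invFun p i := (((p.2.1 i, p.2.2 i), (p.1 i).2.1), ((p.1 i).1, (p.1 i).2.2))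

theorem sum_pi_prod {A B : Type*} [Fintype A] [Fintype B] (G : (I → A × B) → ℝ) :
    ∑ c, G c = ∑ a : I → A, ∑ b : I → B, G fun i => (a i, b i) := by
  rw [← Fintype.sum_prod_type']
  exact Fintype.sum_equiv (Equiv.arrowProdEquivProdArrow I (fun _ => A) fun _ => B) _ _ fun _ => rfl

theorem sum_blocks_eq [Fintype σ] [DecidableEq σ] [Fintype T] [DecidableEq T]
    (pSrc : S1 × S2 × W × W3 → ℝ) (Ch : I → X1 × X2 × X3 → Y × Y3 → ℝ)
    (side : S1 × S2 × W × W3 → σ) (out : Y × Y3 → T)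
    (u : (I → (S1 × S2) × σ × T) → (I → S1) × (I → S2) → (I → X1) × (I → X2) × (I → X3))
    (F : (I → (S1 × S2) × σ × T) → (I → S1) × (I → S2) → ℝ) :
    ∑ f : I → S1 × S2 × W × W3, ∑ g : I → S1 × S2 × W × W3, (∏ i, pSrc (f i)) * (∏ i, pSrc (g i)) *
        ∑ o, blockChannel Ch (u (blockObs side out f g o) (blockMsg f)) o *
          F (blockObs side out f g o) (blockMsg f)
      = ∑ z, ∑ a, (∏ i, letterWeight pSrc (Ch i) side out (z i)
          ((a.1 i, a.2 i), (u z a).1 i, (u z a).2.1 i, (u z a).2.2 i)) * F z a := by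
  set view : (S1 × S2 × W × W3) × (S1 × S2 × W × W3) × (Y × Y3) →
      ((S1 × S2) × σ) × ((S1 × S2) × T) := fun ξ => ((msg ξ.1, side ξ.1), (msg ξ.2.1, out ξ.2.2))
  set words : (I → ((S1 × S2) × σ) × ((S1 × S2) × T)) → I → X1 × X2 × X3 := fun b i =>
    let u' := u (viewEquiv I S1 S2 σ T b).1 (viewEquiv I S1 S2 σ T b).2
    (u'.1 i, u'.2.1 i, u'.2.2 i)
  calc _ = ∑ ξ : I → (S1 × S2 × W × W3) × (S1 × S2 × W × W3) × (Y × Y3),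
        (∏ i, pSrc (ξ i).1 * (pSrc (ξ i).2.1 * Ch i (words (fun j => view (ξ j)) i) (ξ i).2.2)) *
          F (viewEquiv I S1 S2 σ T fun j => view (ξ j)).1
            (viewEquiv I S1 S2 σ T fun j => view (ξ j)).2 := by
        simp only [sum_pi_prod (A := S1 × S2 × W × W3), sum_pi_prod (A := Y),
          Finset.prod_mul_distrib, Finset.mul_sum, mul_assoc, Fintype.sum_prod_type (α₁ := I → Y)]
        rfl
    _ = ∑ b, (∏ i, marginal (fun ξ : (S1 × S2 × W × W3) × (S1 × S2 × W × W3) × (Y × Y3) =>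
          pSrc ξ.1 * (pSrc ξ.2.1 * Ch i (words b i) ξ.2.2)) view (b i)) *
          F (viewEquiv I S1 S2 σ T b).1 (viewEquiv I S1 S2 σ T b).2 :=
        sum_pi_fiberwise view (fun i b ξ => pSrc ξ.1 * (pSrc ξ.2.1 * Ch i (words b i) ξ.2.2))
          fun b => F (viewEquiv I S1 S2 σ T b).1 (viewEquiv I S1 S2 σ T b).2
    _ = ∑ p : (I → (S1 × S2) × σ × T) × ((I → S1) × (I → S2)),
          (∏ i, letterWeight pSrc (Ch i) side out (p.1 i) ((p.2.1 i, p.2.2 i),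
            (u p.1 p.2).1 i, (u p.1 p.2).2.1 i, (u p.1 p.2).2.2 i)) * F p.1 p.2 := by
        refine Fintype.sum_equiv (viewEquiv I S1 S2 σ T) _ _ fun b => ?_
        congr 1
        refine Finset.prod_congr rfl fun i _ => ?_
        exact marginal_view side out (words b i) (b i).1.1 ((b i).2.1, (b i).1.2, (b i).2.2)
    _ = _ := Fintype.sum_prod_type _

/-- Codebooks with one entry for each pair (new message, old message) of either source, and one for
each old message pair for the relay. -/
abbrev Codebook (I S1 S2 X1 X2 X3 : Type*) :=
  ((I → S1) × (I → S1) → I → X1) × ((I → S2) × (I → S2) → I → X2) × ((I → S1) × (I → S2) → I → X3)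

/-- The words of the candidate `a` for the new message pair, given the observation of the relay. -/
def relayWords (θ : Codebook I S1 S2 X1 X2 X3) (z : I → (S1 × S2) × W3 × Y3)
    (a : (I → S1) × (I → S2)) : (I → X1) × (I → X2) × (I → X3) :=
  (θ.1 (a.1, fun i => (z i).1.1), θ.2.1 (a.2, fun i => (z i).1.2),
    θ.2.2 (fun i => (z i).1.1, fun i => (z i).1.2))

/-- The words of the candidate `a` for the old message pair, given the observation of the
destination. -/
def destWords (θ : Codebook I S1 S2 X1 X2 X3) (z : I → (S1 × S2) × W × Y)
    (a : (I → S1) × (I → S2)) : (I → X1) × (I → X2) × (I → X3) :=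
  (θ.1 (fun i => (z i).1.1, a.1), θ.2.1 (fun i => (z i).1.2, a.2), θ.2.2 a)

/-- Distribution of the codebooks whose letters are drawn independently according to the letters of
the old messages. -/
def blockCodebookWeight (pX1 : S1 → X1 → ℝ) (pX2 : S2 → X2 → ℝ) (pX3 : S1 → S2 → X3 → ℝ)
    (θ : Codebook I S1 S2 X1 X2 X3) : ℝ :=
  codebookWeight (fun k u => ∏ i, pX1 (k.2 i) (u i)) (fun k u => ∏ i, pX2 (k.2 i) (u i))
    (fun k u => ∏ i, pX3 (k.1 i) (k.2 i) (u i)) θ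

variable [Fintype X1] [Fintype X2] [Fintype X3] {pSrc : S1 × S2 × W × W3 → ℝ}
  {Ch : I → X1 × X2 × X3 → Y × Y3 → ℝ} {pX1 : S1 → X1 → ℝ} {pX2 : S2 → X2 → ℝ}
  {pX3 : S1 → S2 → X3 → ℝ}

theorem isPmf_blockCodebookWeight (h₁ : ∀ s, IsPmf (pX1 s)) (h₂ : ∀ s, IsPmf (pX2 s))
    (h₃ : ∀ s s', IsPmf (pX3 s s')) :
    IsPmf (blockCodebookWeight pX1 pX2 pX3 : Codebook I S1 S2 X1 X2 X3 → ℝ) :=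
  isPmf_codebookWeight (fun _ => isPmf_pi fun _ => h₁ _) (fun _ => isPmf_pi fun _ => h₂ _)
    fun _ => isPmf_pi fun _ => h₃ _ _

variable [DecidableEq X1] [DecidableEq X2] [DecidableEq X3]

theorem isRandomCode_relayWords [DecidableEq W3] [DecidableEq Y3] (h₁ : ∀ s, IsPmf (pX1 s))
    (h₂ : ∀ s, IsPmf (pX2 s)) (h₃ : ∀ s s', IsPmf (pX3 s s')) :
    (Receiver.pi fun i => relayReceiver pSrc (Ch i) pX1 pX2 pX3).IsRandomCode false
      (blockCodebookWeight pX1 pX2 pX3) relayWords :=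
  Receiver.isRandomCode_codebook
    (R := Receiver.pi fun i => relayReceiver pSrc (Ch i) pX1 pX2 pX3)
    (key₁ := fun a z => (a, fun i => (z i).1.1)) (key₂ := fun a z => (a, fun i => (z i).1.2))
    (key₃ := fun _ z => (fun i => (z i).1.1, fun i => (z i).1.2))
    (fun _ => isPmf_pi fun _ => h₁ _) (fun _ => isPmf_pi fun _ => h₂ _)
    (fun _ => isPmf_pi fun _ => h₃ _ _) (fun _ _ => rfl) (fun _ _ => rfl) (fun _ _ => rfl)
    (fun _ _ _ h => congrArg Prod.fst h) (fun _ _ _ h => congrArg Prod.fst h)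
    fun _ _ _ _ => by simp

theorem isRandomCode_destWords [DecidableEq W] [DecidableEq Y] (h₁ : ∀ s, IsPmf (pX1 s))
    (h₂ : ∀ s, IsPmf (pX2 s)) (h₃ : ∀ s s', IsPmf (pX3 s s')) :
    (Receiver.pi fun i => destReceiver pSrc (Ch i) pX1 pX2 pX3).IsRandomCode true
      (blockCodebookWeight pX1 pX2 pX3) destWords :=
  Receiver.isRandomCode_codebook
    (R := Receiver.pi fun i => destReceiver pSrc (Ch i) pX1 pX2 pX3)
    (key₁ := fun a z => (fun i => (z i).1.1, a)) (key₂ := fun a z => (fun i => (z i).1.2, a))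
    (key₃ := fun a _ => a) (fun _ => isPmf_pi fun _ => h₁ _) (fun _ => isPmf_pi fun _ => h₂ _)
    (fun _ => isPmf_pi fun _ => h₃ _ _) (fun _ _ => rfl) (fun _ _ => rfl) (fun _ _ => rfl)
    (fun _ _ _ h => congrArg Prod.snd h) (fun _ _ _ h => congrArg Prod.snd h)
    fun _ _ _ h => by simpa using h

theorem Receiver.IsRandomCode.sum_blocks_decode_ne_le [Nonempty S1] [Nonempty S2] [Fintype σ]
    [DecidableEq σ] [Fintype T] [DecidableEq T] {Θ : Type*} [Fintype Θ]
    {R : I → Receiver S1 S2 X1 X2 X3 ((S1 × S2) × σ × T)} {side : S1 × S2 × W × W3 → σ}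
    {out : Y × Y3 → T} {h : Bool} {w : Θ → ℝ}
    {v : Θ → (I → (S1 × S2) × σ × T) → (I → S1) × (I → S2) → (I → X1) × (I → X2) × (I → X3)}
    (hv : (Receiver.pi R).IsRandomCode h w v)
    (hR : ∀ i, (R i).Nonneg) (hmass : ∀ i, (R i).mass = 1)
    (hweight : ∀ i, (R i).weight = letterWeight pSrc (Ch i) side out) {γ : ℝ} (hγ : 0 < γ)
    {τ : Bool × Bool → ℝ} (hτ : ∀ e ∈ errorPatterns, 0 ≤ τ e) :
    ∑ θ, w θ * ∑ f : I → S1 × S2 × W × W3, ∑ g : I → S1 × S2 × W × W3,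
        (∏ i, pSrc (f i)) * (∏ i, pSrc (g i)) *
          ∑ o, blockChannel Ch (v θ (blockObs side out f g o) (blockMsg f)) o *
            (if (Receiver.pi R).decode h γ (v θ (blockObs side out f g o))
              (blockObs side out f g o) ≠ blockMsg f then 1 else 0)
      ≤ ∑ e ∈ errorPatterns, (γ⁻¹ ^ τ e * ∏ i, (R i).moment e h (τ e) + γ) := by
  have hpiMass : (Receiver.pi R).mass = 1 := by
    rw [← Receiver.moment_zero _ (true, true) h, Receiver.moment_pi hR]
    exact Finset.prod_eq_one fun i _ => by rw [Receiver.moment_zero, hmass]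
  have hbound := hv.sum_decode_ne_le (Receiver.Nonneg.pi hR) hγ hτ
  simp only [Receiver.moment_pi hR, hpiMass, mul_one] at hbound
  refine le_of_eq_of_le (Finset.sum_congr rfl fun θ _ => congrArg (w θ * ·) ?_) hbound
  have hpiWeight : ∀ z a, (Receiver.pi R).weight z (a, v θ z a) = ∏ i, letterWeight pSrc (Ch i) side
      out (z i) ((a.1 i, a.2 i), (v θ z a).1 i, (v θ z a).2.1 i, (v θ z a).2.2 i) := fun z a => by
    simp only [Receiver.pi, hweight]
  simp only [hpiWeight]
  exact sum_blocks_eq pSrc Ch side out (v θ) fun z a =>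
    if (Receiver.pi R).decode h γ (v θ z) z ≠ a then 1 else 0

variable [DecidableEq W] [DecidableEq W3] [DecidableEq Y] [DecidableEq Y3] [Nonempty S1]
  [Nonempty S2]

/-- The block code given by the codebooks `θ`, decoded with thresholds `γ`. -/
noncomputable def randomBlockCode (pSrc : S1 × S2 × W × W3 → ℝ)
    (Ch : I → X1 × X2 × X3 → Y × Y3 → ℝ) (pX1 : S1 → X1 → ℝ) (pX2 : S2 → X2 → ℝ)
    (pX3 : S1 → S2 → X3 → ℝ) (γ : ℝ) (θ : Codebook I S1 S2 X1 X2 X3) :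
    BlockCode (I → S1) (I → S2) (I → W) (I → W3) (I → X1) (I → X2) (I → X3) (I → Y) (I → Y3) where
  code₁ new old := θ.1 (new, old)
  code₂ new old := θ.2.1 (new, old)
  code₃ r := θ.2.2 r
  relayDecode old w3 y3 :=
    let z := fun i => ((old.1 i, old.2 i), w3 i, y3 i)
    (Receiver.pi fun i => relayReceiver pSrc (Ch i) pX1 pX2 pX3).decode false γ (relayWords θ z) z
  destDecode new w y :=
    let z := fun i => ((new.1 i, new.2 i), w i, y i)
    (Receiver.pi fun i => destReceiver pSrc (Ch i) pX1 pX2 pX3).decode true γ (destWords θ z) z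

theorem sum_meanErr_randomBlockCode_le (hSrc : IsPmf pSrc) (hCh : ∀ i x, IsPmf (Ch i x))
    (h₁ : ∀ s, IsPmf (pX1 s)) (h₂ : ∀ s, IsPmf (pX2 s)) (h₃ : ∀ s s', IsPmf (pX3 s s')) {γ : ℝ}
    (hγ : 0 < γ) {τ τ' : Bool × Bool → ℝ} (hτ : ∀ e ∈ errorPatterns, 0 ≤ τ e)
    (hτ' : ∀ e ∈ errorPatterns, 0 ≤ τ' e) :
    ∑ θ, blockCodebookWeight pX1 pX2 pX3 θ *
        (randomBlockCode pSrc Ch pX1 pX2 pX3 γ θ).meanErr (fun f => ∏ i, pSrc (f i)) blockMsg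
          (fun f i => (f i).2.2.1) (fun f i => (f i).2.2.2) (blockChannel Ch)
      ≤ ∑ e ∈ errorPatterns, (γ⁻¹ ^ τ e *
          ∏ i, (relayReceiver pSrc (Ch i) pX1 pX2 pX3).moment e false (τ e) + γ) +
        ∑ e ∈ errorPatterns, (γ⁻¹ ^ τ' e *
          ∏ i, (destReceiver pSrc (Ch i) pX1 pX2 pX3).moment e true (τ' e) + γ) := by
  have hrelay := (isRandomCode_relayWords (pSrc := pSrc) (Ch := Ch) h₁ h₂ h₃
    ).sum_blocks_decode_ne_le (fun i => relayReceiver_nonneg hSrc.1 (fun x => (hCh i x).1)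
      (fun s => (h₁ s).1) (fun s => (h₂ s).1) fun s s' => (h₃ s s').1)
    (fun i => relayReceiver_mass hSrc (hCh i) h₁ h₂ h₃) (fun _ => rfl) hγ hτ
  have hdest := (isRandomCode_destWords (pSrc := pSrc) (Ch := Ch) h₁ h₂ h₃
    ).sum_blocks_decode_ne_le (fun i => destReceiver_nonneg hSrc.1 (fun x => (hCh i x).1)
      (fun s => (h₁ s).1) (fun s => (h₂ s).1) fun s s' => (h₃ s s').1)
    (fun i => destReceiver_mass hSrc (hCh i) h₁ h₂ h₃) (fun _ => rfl) hγ hτ'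
  refine le_trans ?_ (add_le_add hrelay hdest)
  rw [← Finset.sum_add_distrib]
  refine Finset.sum_le_sum fun θ _ => ?_
  rw [← mul_add]
  refine mul_le_mul_of_nonneg_left ?_ ((isPmf_blockCodebookWeight h₁ h₂ h₃).1 θ)
  refine (BlockCode.meanErr_le _ (fun f => Finset.prod_nonneg fun i _ => hSrc.1 _)
    fun u o => Finset.prod_nonneg fun i _ => (hCh i _).1 _).trans
    (add_le_add le_rfl (le_of_eq ?_))
  rw [Finset.sum_comm]
  refine Finset.sum_congr rfl fun f _ => Finset.sum_congr rfl fun g _ => ?_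
  rw [mul_comm (∏ i, pSrc (g i))]
  rfl

theorem exists_blockCode_meanErr_blockChannel_le (hSrc : IsPmf pSrc) (hCh : ∀ i x, IsPmf (Ch i x))
    (h₁ : ∀ s, IsPmf (pX1 s)) (h₂ : ∀ s, IsPmf (pX2 s)) (h₃ : ∀ s s', IsPmf (pX3 s s')) {γ : ℝ}
    (hγ : 0 < γ) {τ τ' : Bool × Bool → ℝ} (hτ : ∀ e ∈ errorPatterns, 0 ≤ τ e)
    (hτ' : ∀ e ∈ errorPatterns, 0 ≤ τ' e) :
    ∃ C : BlockCode (I → S1) (I → S2) (I → W) (I → W3) (I → X1) (I → X2) (I → X3) (I → Y) (I → Y3),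
      C.meanErr (fun f => ∏ i, pSrc (f i)) blockMsg (fun f i => (f i).2.2.1)
          (fun f i => (f i).2.2.2) (blockChannel Ch)
        ≤ ∑ e ∈ errorPatterns, (γ⁻¹ ^ τ e *
            ∏ i, (relayReceiver pSrc (Ch i) pX1 pX2 pX3).moment e false (τ e) + γ) +
          ∑ e ∈ errorPatterns, (γ⁻¹ ^ τ' e *
            ∏ i, (destReceiver pSrc (Ch i) pX1 pX2 pX3).moment e true (τ' e) + γ) :=
  have ⟨θ, hθ⟩ := (isPmf_blockCodebookWeight h₁ h₂ h₃).exists_le_of_sum_mul_le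
    (sum_meanErr_randomBlockCode_le hSrc hCh h₁ h₂ h₃ hγ hτ hτ')
  ⟨randomBlockCode pSrc Ch pX1 pX2 pX3 γ θ, hθ⟩

end RandomBlockCode

section Exponents

theorem eventually_exists_pow_mul_lt_one {a b : ℝ → ℝ} {a' b' : ℝ} (ha : HasDerivAt a a' 0)
    (hb : HasDerivAt b b' 0) (ha0 : a 0 = 1) (hb0 : b 0 = 1) (ha' : a' < 0) :
    ∀ᶠ B : ℕ in Filter.atTop, ∃ τ > 0, 0 ≤ a τ ^ B * b τ ∧ a τ ^ B * b τ < 1 := by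
  have hB : ∀ᶠ B : ℕ in Filter.atTop, (B : ℝ) * a' + b' < 0 :=
    ((tendsto_natCast_atTop_atTop.atTop_mul_const_of_neg ha').atBot_add
      tendsto_const_nhds).eventually_lt_atBot 0
  filter_upwards [hB] with B hB
  have hderiv : HasDerivAt (fun τ => a τ ^ B * b τ) (B * a' + b') 0 := by
    simpa [ha0, hb0] using (ha.fun_pow B).fun_mul hb
  have hslope : ∀ᶠ τ in nhdsWithin 0 (Set.Ioi 0), τ⁻¹ * (a τ ^ B * b τ - 1) < 0 := by
    simpa [ha0, hb0] using hderiv.tendsto_slope_zero_right.eventually (gt_mem_nhds hB)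
  have hpos : ∀ᶠ τ in nhdsWithin 0 (Set.Ioi 0), 0 < a τ ^ B * b τ :=
    (hderiv.continuousAt.eventually_const_lt (by simp [ha0, hb0])).filter_mono nhdsWithin_le_nhds
  obtain ⟨τ, ⟨hτ, hτ'⟩, hτ0⟩ := ((hslope.and hpos).and self_mem_nhdsWithin).exists
  exact ⟨τ, hτ0, hτ'.le, by linarith [neg_of_mul_neg_right hτ (inv_pos.2 hτ0).le]⟩

theorem eventually_sum_pow_add_le {ι : Type*} {s : Finset ι} {ρ : ι → ℝ}
    (hρ : ∀ i ∈ s, 0 ≤ ρ i ∧ ρ i < 1) (c : ι → ℝ) {γ ε : ℝ} (hγ : s.card * γ < ε) :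
    ∀ᶠ k : ℕ in Filter.atTop, ∑ i ∈ s, (c i * ρ i ^ k + γ) ≤ ε := by
  have hlim : Filter.Tendsto (fun k : ℕ => ∑ i ∈ s, (c i * ρ i ^ k + γ)) Filter.atTop
      (nhds (∑ i ∈ s, (c i * 0 + γ))) :=
    tendsto_finsetSum _ fun i hi =>
      ((tendsto_pow_atTop_nhds_zero_of_lt_one (hρ i hi).1 (hρ i hi).2).const_mul _).add_const _
  exact hlim.eventually_le_const (by simpa using hγ)

end Exponents

section Puncturing

/-- The channel whose output is always `o₀`. -/
def idleChannel (X : Type*) {O : Type*} [DecidableEq O] (o₀ : O) (_ : X) (o : O) : ℝ :=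
  if o = o₀ then 1 else 0

theorem isPmf_idleChannel {X O : Type*} [Fintype O] [DecidableEq O] (o₀ : O) (x : X) :
    IsPmf (idleChannel X o₀ x) :=
  ⟨fun o => by rw [idleChannel]; positivity, by simp [idleChannel]⟩

namespace BlockCode

variable {F A1 A2 W W3 U1 U2 U3 Y Y3 Y' Y3' : Type*} (C : BlockCode A1 A2 W W3 U1 U2 U3 Y Y3)
  (p : Y' → Y) (p3 : Y3' → Y3)

/-- Decodes after the channel outputs have been translated by `p` and `p3`. -/
def comapOutput : BlockCode A1 A2 W W3 U1 U2 U3 Y' Y3' where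
  code₁ := C.code₁
  code₂ := C.code₂
  code₃ := C.code₃
  relayDecode old w3 y3 := C.relayDecode old w3 (p3 y3)
  destDecode new w y := C.destDecode new w (p y)

theorem meanErr_comapOutput [Fintype F] [Fintype Y] [Fintype Y3] [Fintype Y'] [Fintype Y3']
    [DecidableEq A1] [DecidableEq A2] {V : U1 × U2 × U3 → Y × Y3 → ℝ}
    {V' : U1 × U2 × U3 → Y' × Y3' → ℝ}
    (hV : ∀ u (G : Y × Y3 → ℝ), ∑ o, V' u o * G (p o.1, p3 o.2) = ∑ o, V u o * G o) (P : F → ℝ)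
    (m : F → A1 × A2) (w : F → W) (w3 : F → W3) :
    (C.comapOutput p p3).meanErr P m w w3 V' = C.meanErr P m w w3 V :=
  Finset.sum_congr rfl fun f _ => Finset.sum_congr rfl fun g _ => congrArg (P f * P g * ·) <|
    hV _ fun o => if C.relayDecode (m g) (w3 f) o.2 = m f ∧ C.destDecode (m f) (w g) o.1 = m g
      then 0 else 1

end BlockCode

variable {D E S1 S2 W W3 X1 X2 X3 Y Y3 : Type*} [Fintype D] [Fintype Y] [Fintype Y3]

/-- The letters in `D` are sent over `Q`, those in `E` are not sent. -/
def puncturedChannel (Q : X1 × X2 × X3 → Y × Y3 → ℝ)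
    (u : (D ⊕ E → X1) × (D ⊕ E → X2) × (D ⊕ E → X3)) (o : (D → Y) × (D → Y3)) : ℝ :=
  ∏ d, Q (u.1 (.inl d), u.2.1 (.inl d), u.2.2 (.inl d)) (o.1 d, o.2 d)

theorem isPmf_puncturedChannel [DecidableEq D] {Q : X1 × X2 × X3 → Y × Y3 → ℝ}
    (hQ : ∀ x, IsPmf (Q x)) (u : (D ⊕ E → X1) × (D ⊕ E → X2) × (D ⊕ E → X3)) :
    IsPmf (puncturedChannel Q u) := by
  have hpi := isPmf_pi fun d => hQ (u.1 (.inl d), u.2.1 (.inl d), u.2.2 (.inl d))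
  refine ⟨fun o => Finset.prod_nonneg fun d _ => (hQ _).1 _, ?_⟩
  rw [← hpi.2, sum_pi_prod, Fintype.sum_prod_type]
  rfl

/-- The letters in `D` are sent over `Q`, those in `E` over the idle channel. -/
def paddedChannel [DecidableEq Y] [DecidableEq Y3] (D E : Type*) (Q : X1 × X2 × X3 → Y × Y3 → ℝ)
    (o₀ : Y × Y3) : D ⊕ E → X1 × X2 × X3 → Y × Y3 → ℝ :=
  Sum.elim (fun _ => Q) fun _ => idleChannel _ o₀

theorem sum_sum_arrow [Fintype E] {T : Type*} [Fintype T] [DecidableEq D] [DecidableEq E]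
    (G : (D ⊕ E → T) → ℝ) : ∑ y, G y = ∑ y : D → T, ∑ y' : E → T, G (Sum.elim y y') := by
  rw [← Fintype.sum_prod_type']
  exact Fintype.sum_equiv (Equiv.sumArrowEquivProdArrow D E T) _ _ fun y =>
    congrArg G (Sum.elim_comp_inl_inr y).symm

theorem sum_puncturedChannel [Fintype E] [DecidableEq D] [DecidableEq E] [DecidableEq Y]
    [DecidableEq Y3] (Q : X1 × X2 × X3 → Y × Y3 → ℝ) (o₀ : Y × Y3)
    (u : (D ⊕ E → X1) × (D ⊕ E → X2) × (D ⊕ E → X3)) (G : (D ⊕ E → Y) × (D ⊕ E → Y3) → ℝ) :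
    ∑ o, puncturedChannel Q u o * G (Sum.elim o.1 fun _ => o₀.1, Sum.elim o.2 fun _ => o₀.2)
      = ∑ o, blockChannel (paddedChannel D E Q o₀) u o * G o := by
  have hidle : ∀ (y : D → Y) (y' : E → Y) (y3 : D → Y3) (y3' : E → Y3),
      blockChannel (paddedChannel D E Q o₀) u (Sum.elim y y', Sum.elim y3 y3') =
        if y' = fun _ => o₀.1 then if y3' = fun _ => o₀.2 then puncturedChannel Q u (y, y3)
          else 0 else 0 := fun y y' y3 y3' => by
    simp only [blockChannel, paddedChannel, idleChannel, Fintype.prod_sum_type, Sum.elim_inl,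
      Sum.elim_inr, Finset.prod_ite_zero, Finset.prod_const_one, puncturedChannel, Prod.ext_iff,
      Finset.mem_univ, true_imp_iff, ite_and, funext_iff, mul_ite, mul_one, mul_zero]
  simp only [Fintype.sum_prod_type, sum_sum_arrow, hidle, ite_mul, zero_mul]
  simp

end Puncturing

section CodeExistence

theorem Receiver.eventually_exists_exponents {A1 A2 U1 U2 U3 Z : Type*} [Fintype A1] [Fintype A2]
    [Fintype U1] [Fintype U2] [Fintype U3] [Fintype Z] [DecidableEq A1] [DecidableEq A2]
    [DecidableEq U1] [DecidableEq U2] [DecidableEq U3] {R R₀ : Receiver A1 A2 U1 U2 U3 Z}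
    (hR : R.Nonneg) (hR₀ : R₀.Nonneg) (hmass : R.mass = 1) (hmass₀ : R₀.mass = 1) {h : Bool}
    (hdrift : ∀ e ∈ errorPatterns, R.drift e h < 0) :
    ∀ᶠ B : ℕ in Filter.atTop, ∃ τ : Bool × Bool → ℝ, ∀ e ∈ errorPatterns, 0 ≤ τ e ∧
      0 ≤ R.moment e h (τ e) ^ B * R₀.moment e h (τ e) ∧
        R.moment e h (τ e) ^ B * R₀.moment e h (τ e) < 1 := by
  have hB : ∀ᶠ B : ℕ in Filter.atTop, ∀ e ∈ errorPatterns, ∃ τ > 0,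
      0 ≤ R.moment e h τ ^ B * R₀.moment e h τ ∧ R.moment e h τ ^ B * R₀.moment e h τ < 1 :=
    (Filter.eventually_all_finset _).2 fun e he =>
      eventually_exists_pow_mul_lt_one (hasDerivAt_moment hR e h) (hasDerivAt_moment hR₀ e h)
        (by rw [moment_zero, hmass]) (by rw [moment_zero, hmass₀]) (hdrift e he)
  filter_upwards [hB] with B hB
  choose! τ hτ hlt using hB
  exact ⟨τ, fun e he => ⟨(hτ e he).le, hlt e he⟩⟩

variable {S1 S2 W W3 X1 X2 X3 Y Y3 : Type*} [Fintype S1] [Fintype S2] [Fintype W] [Fintype W3]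
  [Fintype X1] [Fintype X2] [Fintype X3] [Fintype Y] [Fintype Y3]
  [DecidableEq S1] [DecidableEq S2] [DecidableEq W] [DecidableEq W3]
  [DecidableEq X1] [DecidableEq X2] [DecidableEq X3] [DecidableEq Y] [DecidableEq Y3]
  {pSrc : S1 × S2 × W × W3 → ℝ} {Q : X1 × X2 × X3 → Y × Y3 → ℝ}
  {pX1 : S1 → X1 → ℝ} {pX2 : S2 → X2 → ℝ} {pX3 : S1 → S2 → X3 → ℝ}

theorem exists_blockCode_meanErr_puncturedChannel_le {D E : Type*} [Fintype D]
    [DecidableEq D] [Fintype E] [DecidableEq E] [Nonempty S1] [Nonempty S2] (hSrc : IsPmf pSrc)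
    (hQ : ∀ x, IsPmf (Q x)) (h₁ : ∀ s, IsPmf (pX1 s)) (h₂ : ∀ s, IsPmf (pX2 s))
    (h₃ : ∀ s s', IsPmf (pX3 s s')) (o₀ : Y × Y3) {γ : ℝ} (hγ : 0 < γ) {τ τ' : Bool × Bool → ℝ}
    (hτ : ∀ e ∈ errorPatterns, 0 ≤ τ e) (hτ' : ∀ e ∈ errorPatterns, 0 ≤ τ' e) :
    ∃ C : BlockCode (D ⊕ E → S1) (D ⊕ E → S2) (D ⊕ E → W) (D ⊕ E → W3) (D ⊕ E → X1)
        (D ⊕ E → X2) (D ⊕ E → X3) (D → Y) (D → Y3),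
      C.meanErr (fun f => ∏ i, pSrc (f i)) blockMsg (fun f i => (f i).2.2.1)
          (fun f i => (f i).2.2.2) (puncturedChannel Q)
        ≤ ∑ e ∈ errorPatterns, (γ⁻¹ ^ τ e *
            ((relayReceiver pSrc Q pX1 pX2 pX3).moment e false (τ e) ^ Fintype.card D *
              (relayReceiver pSrc (idleChannel _ o₀) pX1 pX2 pX3).moment e false (τ e) ^
                Fintype.card E) + γ) +
          ∑ e ∈ errorPatterns, (γ⁻¹ ^ τ' e *
            ((destReceiver pSrc Q pX1 pX2 pX3).moment e true (τ' e) ^ Fintype.card D *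
              (destReceiver pSrc (idleChannel _ o₀) pX1 pX2 pX3).moment e true (τ' e) ^
                Fintype.card E) + γ) := by
  have hCh : ∀ i x, IsPmf (paddedChannel D E Q o₀ i x) :=
    Sum.rec (fun _ => hQ) fun _ => isPmf_idleChannel o₀
  obtain ⟨C, hC⟩ := exists_blockCode_meanErr_blockChannel_le hSrc hCh h₁ h₂ h₃ hγ hτ hτ'
  refine ⟨C.comapOutput (Sum.elim · fun _ => o₀.1) (Sum.elim · fun _ => o₀.2), ?_⟩
  rw [BlockCode.meanErr_comapOutput _ _ _ (sum_puncturedChannel Q o₀)]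
  simpa only [Fintype.prod_sum_type, paddedChannel, Sum.elim_inl, Sum.elim_inr,
    Finset.prod_const, Finset.card_univ] using hC

theorem eventually_exists_blockCode (hSrc : IsPmf pSrc) (hQ : ∀ x, IsPmf (Q x))
    (h₁ : ∀ s, IsPmf (pX1 s)) (h₂ : ∀ s, IsPmf (pX2 s)) (h₃ : ∀ s s', IsPmf (pX3 s s'))
    (hrelay : ∀ e ∈ errorPatterns, (relayReceiver pSrc Q pX1 pX2 pX3).drift e false < 0)
    (hdest : ∀ e ∈ errorPatterns, (destReceiver pSrc Q pX1 pX2 pX3).drift e true < 0) :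
    ∀ᶠ B : ℕ in Filter.atTop, ∀ ε > 0, ∃ k > 0,
      ∃ C : BlockCode (Fin (B * k) ⊕ Fin k → S1) (Fin (B * k) ⊕ Fin k → S2)
          (Fin (B * k) ⊕ Fin k → W) (Fin (B * k) ⊕ Fin k → W3) (Fin (B * k) ⊕ Fin k → X1)
          (Fin (B * k) ⊕ Fin k → X2) (Fin (B * k) ⊕ Fin k → X3) (Fin (B * k) → Y)
          (Fin (B * k) → Y3),
        C.meanErr (fun f => ∏ i, pSrc (f i)) blockMsg (fun f i => (f i).2.2.1)
          (fun f i => (f i).2.2.2) (puncturedChannel Q) ≤ ε := by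
  obtain ⟨s₀⟩ := hSrc.nonempty
  have : Nonempty S1 := ⟨s₀.1⟩
  have : Nonempty S2 := ⟨s₀.2.1⟩
  obtain ⟨x₁⟩ := (h₁ s₀.1).nonempty
  obtain ⟨x₂⟩ := (h₂ s₀.2.1).nonempty
  obtain ⟨x₃⟩ := (h₃ s₀.1 s₀.2.1).nonempty
  obtain ⟨o₀⟩ := (hQ (x₁, x₂, x₃)).nonempty
  have hnonneg : ∀ {Q' : X1 × X2 × X3 → Y × Y3 → ℝ}, (∀ x, IsPmf (Q' x)) →
      (relayReceiver pSrc Q' pX1 pX2 pX3).Nonneg ∧ (destReceiver pSrc Q' pX1 pX2 pX3).Nonneg :=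
    fun hQ' => ⟨relayReceiver_nonneg hSrc.1 (fun x => (hQ' x).1) (fun s => (h₁ s).1)
        (fun s => (h₂ s).1) fun s s' => (h₃ s s').1,
      destReceiver_nonneg hSrc.1 (fun x => (hQ' x).1) (fun s => (h₁ s).1) (fun s => (h₂ s).1)
        fun s s' => (h₃ s s').1⟩
  have hidle : ∀ x, IsPmf (idleChannel (X1 × X2 × X3) o₀ x) := isPmf_idleChannel o₀
  filter_upwards [
    Receiver.eventually_exists_exponents (hnonneg hQ).1 (hnonneg hidle).1
      (relayReceiver_mass hSrc hQ h₁ h₂ h₃) (relayReceiver_mass hSrc hidle h₁ h₂ h₃) hrelay,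
    Receiver.eventually_exists_exponents (hnonneg hQ).2 (hnonneg hidle).2
      (destReceiver_mass hSrc hQ h₁ h₂ h₃) (destReceiver_mass hSrc hidle h₁ h₂ h₃) hdest]
    with B ⟨τ, hτ⟩ ⟨τ', hτ'⟩ ε hε
  have hγ : (errorPatterns.card : ℝ) * (ε / 8) < ε / 2 := by
    norm_num [errorPatterns]
    linarith
  obtain ⟨k, ⟨hk, hk'⟩, hk0⟩ := (((eventually_sum_pow_add_le (fun e he => (hτ e he).2)
      (fun e => (ε / 8)⁻¹ ^ τ e) hγ).and (eventually_sum_pow_add_le (fun e he => (hτ' e he).2)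
      (fun e => (ε / 8)⁻¹ ^ τ' e) hγ)).and (Filter.eventually_gt_atTop 0)).exists
  obtain ⟨C, hC⟩ := exists_blockCode_meanErr_puncturedChannel_le (D := Fin (B * k)) (E := Fin k)
    hSrc hQ h₁ h₂ h₃ o₀ (γ := ε / 8) (by positivity) (fun e he => (hτ e he).1)
    fun e he => (hτ' e he).1
  simp only [Fintype.card_fin, pow_mul, ← mul_pow] at hC
  exact ⟨k, hk0, C, hC.trans ((add_le_add hk hk').trans (add_halves ε).le)⟩

end CodeExistence

/-! ### Single-letter drifts -/

section Entropy

theorem entropyOf_comp {Ω α β : Type*} [Fintype Ω] [Fintype α] [Fintype β] [DecidableEq α]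
    [DecidableEq β] (μ : Ω → ℝ) (X : Ω → α) (g : α → β) :
    entropyOf μ (fun ω => g (X ω)) = entropyOf (marginal μ X) g := by
  simp only [entropyOf, ← marginal.eq_def, ← marginal_comp μ X g]

theorem entropyOf_eq_neg_sum_log {Ω α : Type*} [Fintype Ω] [Fintype α] [DecidableEq α] (μ : Ω → ℝ)
    (X : Ω → α) : entropyOf μ X = -∑ ω, μ ω * Real.log (marginal μ X (X ω)) := by
  rw [← sum_marginal_mul μ X fun a => Real.log (marginal μ X a), ← Finset.sum_neg_distrib]
  exact Finset.sum_congr rfl fun a _ => by rw [Real.negMulLog, neg_mul]; rfl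

theorem condEntropyOf_sub_condMutualInfoOf {Ω α β γ δ ε : Type*} [Fintype Ω] [Fintype α]
    [Fintype β] [Fintype γ] [Fintype δ] [Fintype ε] [DecidableEq α] [DecidableEq β] [DecidableEq γ]
    [DecidableEq δ] [DecidableEq ε] {μ : Ω → ℝ} (hμ : ∀ ω, 0 ≤ μ ω) {S : Ω → α} {T : Ω → β}
    {X : Ω → γ} {Y : Ω → δ} {Z : Ω → ε} {ρ : Ω → ℝ}
    (hρ : ∀ ω, 0 < μ ω → marginal μ T (T ω) * marginal μ (fun ω => (X ω, Z ω)) (X ω, Z ω) *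
        marginal μ (fun ω => (Y ω, Z ω)) (Y ω, Z ω) =
      ρ ω * (marginal μ (fun ω => (S ω, T ω)) (S ω, T ω) *
        marginal μ (fun ω => (X ω, Y ω, Z ω)) (X ω, Y ω, Z ω) * marginal μ Z (Z ω))) :
    condEntropyOf μ S T - condMutualInfoOf μ X Y Z = ∑ ω, μ ω * Real.log (ρ ω) := by
  have hlog : ∀ ω, μ ω * Real.log (ρ ω) = μ ω * Real.log (marginal μ T (T ω)) +
      μ ω * Real.log (marginal μ (fun ω => (X ω, Z ω)) (X ω, Z ω)) +
      μ ω * Real.log (marginal μ (fun ω => (Y ω, Z ω)) (Y ω, Z ω)) -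
      μ ω * Real.log (marginal μ (fun ω => (S ω, T ω)) (S ω, T ω)) -
      μ ω * Real.log (marginal μ (fun ω => (X ω, Y ω, Z ω)) (X ω, Y ω, Z ω)) -
      μ ω * Real.log (marginal μ Z (Z ω)) := by
    intro ω
    rcases (hμ ω).eq_or_lt with h0 | hω
    · simp [← h0]
    have hT := marginal_apply_pos hμ T hω
    have hXZ := marginal_apply_pos hμ (fun ω => (X ω, Z ω)) hω
    have hYZ := marginal_apply_pos hμ (fun ω => (Y ω, Z ω)) hω
    have hST := marginal_apply_pos hμ (fun ω => (S ω, T ω)) hω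
    have hXYZ := marginal_apply_pos hμ (fun ω => (X ω, Y ω, Z ω)) hω
    have hZ := marginal_apply_pos hμ Z hω
    rw [eq_div_of_mul_eq (by positivity) (hρ ω hω).symm,
      Real.log_div (by positivity) (by positivity), Real.log_mul (by positivity) (by positivity),
      Real.log_mul (by positivity) (by positivity), Real.log_mul (by positivity) (by positivity),
      Real.log_mul (by positivity) (by positivity)]
    ring
  simp only [hlog, condEntropyOf, condMutualInfoOf, entropyOf_eq_neg_sum_log,
    Finset.sum_add_distrib, Finset.sum_sub_distrib]
  ring

end Entropy

section Channel

variable {Ω T α β : Type*} [Fintype Ω] [Fintype T] {μ : Ω → ℝ} {V : Ω → T → ℝ}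

/-- Joint distribution of `ω`, distributed according to `μ`, and of an output drawn from `V ω`. -/
def withOutput (μ : Ω → ℝ) (V : Ω → T → ℝ) (ω : Ω × T) : ℝ := μ ω.1 * V ω.1 ω.2

variable [DecidableEq α]

theorem marginal_withOutput_fst (hV : ∀ ω, ∑ t, V ω t = 1) (X : Ω → α) (a : α) :
    marginal (withOutput μ V) (fun ω => X ω.1) a = marginal μ X a := by
  simp only [marginal, withOutput, Fintype.sum_prod_type, Finset.sum_ite_irrel,
    Finset.sum_const_zero, ← Finset.mul_sum, hV, mul_one]

variable [DecidableEq T]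

theorem marginal_withOutput (X : Ω → α) (a : α) (t : T) :
    marginal (withOutput μ V) (fun ω => (ω.2, X ω.1)) (t, a) =
      marginal (fun ω => μ ω * V ω t) X a := by
  simp [marginal, withOutput, Fintype.sum_prod_type, ite_and]

theorem marginal_withOutput_of_determined {X : Ω → α} {Z : Ω → β} [DecidableEq β] {ω : Ω}
    (hX : ∀ ω', X ω' = X ω → Z ω' = Z ω → V ω' = V ω) (t : T) :
    marginal (withOutput μ V) (fun ω => (X ω.1, ω.2, Z ω.1)) (X ω, t, Z ω) =
      marginal μ (fun ω => (X ω, Z ω)) (X ω, Z ω) * V ω t := by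
  simp only [marginal, withOutput, Fintype.sum_prod_type, Prod.mk.injEq, ite_and, Finset.sum_mul,
    Finset.sum_ite_irrel, Finset.sum_const_zero, Finset.sum_ite_eq', Finset.mem_univ, if_true]
  refine Finset.sum_congr rfl fun ω' _ => ?_
  split_ifs with h h'
  · rw [hX ω' h h']
  · rw [zero_mul]
  · rw [zero_mul]

theorem condEntropyOf_sub_condMutualInfoOf_withOutput {γ δ : Type*} [Fintype α] [Fintype β]
    [Fintype γ] [Fintype δ] [DecidableEq β] [DecidableEq γ] [DecidableEq δ] (hμ : ∀ ω, 0 ≤ μ ω)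
    (hV : ∀ ω, IsPmf (V ω)) {S : Ω → α} {K : Ω → β} {X : Ω → γ} {Z : Ω → δ} {ρ : Ω → T → ℝ}
    (hX : ∀ ω ω', X ω' = X ω → Z ω' = Z ω → V ω' = V ω)
    (hρ : ∀ ω t, 0 < μ ω → 0 < V ω t →
      marginal μ K (K ω) * marginal (fun ω => μ ω * V ω t) Z (Z ω) =
        ρ ω t * (marginal μ (fun ω => (S ω, K ω)) (S ω, K ω) * V ω t * marginal μ Z (Z ω))) :
    condEntropyOf (withOutput μ V) (fun ω => S ω.1) (fun ω => K ω.1) -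
        condMutualInfoOf (withOutput μ V) (fun ω => X ω.1) (fun ω => ω.2) (fun ω => Z ω.1) =
      ∑ ω, ∑ t, μ ω * V ω t * Real.log (ρ ω t) := by
  refine (condEntropyOf_sub_condMutualInfoOf (μ := withOutput μ V) (ρ := fun ω => ρ ω.1 ω.2)
    (fun ω => mul_nonneg (hμ _) ((hV _).1 _)) ?_).trans (Fintype.sum_prod_type _)
  rintro ⟨ω, t⟩ hω
  have hμω := pos_of_mul_pos_left hω ((hV _).1 _)
  rw [marginal_withOutput, marginal_withOutput_of_determined (hX ω),
    marginal_withOutput_fst (fun ω => (hV ω).2) K, marginal_withOutput_fst (fun ω => (hV ω).2) Z,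
    marginal_withOutput_fst (fun ω => (hV ω).2) fun ω => (X ω, Z ω),
    marginal_withOutput_fst (fun ω => (hV ω).2) fun ω => (S ω, K ω)]
  linear_combination marginal μ (fun ω => (X ω, Z ω)) (X ω, Z ω) *
    hρ ω t hμω (pos_of_mul_pos_right hω (hμ _))

end Channel

section SingleLetter

variable {S1 S2 X1 X2 X3 σ T : Type*}

/-- The pairs `a` and `b` agree in every coordinate that the error pattern `e` does not mark as
wrong. -/
abbrev AgreeOff (e : Bool × Bool) (a b : S1 × S2) : Prop :=
  (e.1 = false → a.1 = b.1) ∧ (e.2 = false → a.2 = b.2)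

section Definitions

variable (src : (S1 × S2) × σ → ℝ) (pX1 : S1 → X1 → ℝ) (pX2 : S2 → X2 → ℝ)
  (pX3 : S1 → S2 → X3 → ℝ)

/-- Joint distribution of the source letters, the side information and the channel inputs. -/
def inputLaw (ω : ((S1 × S2) × σ) × (X1 × X2 × X3)) : ℝ :=
  src ω.1 * (pX1 ω.1.1.1 ω.2.1 * (pX2 ω.1.1.2 ω.2.2.1 * pX3 ω.1.1.1 ω.1.1.2 ω.2.2.2))

variable [DecidableEq X1] [DecidableEq X2] [DecidableEq X3]

/-- `Receiver.wordKernel` when the source letters `a` determine the laws of the inputs. -/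
def inputKernel (e : Bool × Bool) (h : Bool) (a : S1 × S2) (u v : X1 × X2 × X3) : ℝ :=
  redraw e.1 (pX1 a.1) u.1 v.1 *
    (redraw e.2 (pX2 a.2) u.2.1 v.2.1 * redraw h (pX3 a.1 a.2) u.2.2 v.2.2)

variable [Fintype S1] [Fintype S2] [DecidableEq S1] [DecidableEq S2]

/-- Probability of the letters that the error pattern `e` leaves correct, jointly with the side
information. -/
def mergedSource (e : Bool × Bool) (x : (S1 × S2) × σ) : ℝ :=
  ∑ a, if AgreeOff e x.1 a then src (a, x.2) else 0

variable [Fintype X1] [Fintype X2] [Fintype X3]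

/-- Likelihood of an output under the inputs `v` of a codeword wrong in the pattern `e`. -/
def mergedOutput (V : X1 × X2 × X3 → T → ℝ) (e : Bool × Bool) (a : S1 × S2) (u : X1 × X2 × X3)
    (t : T) : ℝ :=
  ∑ v, inputKernel pX1 pX2 pX3 e false a u v * V v t

/-- Joint likelihood of side information and output under messages wrong in the pattern `e`. -/
def mergedJoint (V : X1 × X2 × X3 → T → ℝ) (e : Bool × Bool)
    (ω : ((S1 × S2) × σ) × (X1 × X2 × X3)) (t : T) : ℝ :=
  ∑ a, ∑ v, (if AgreeOff e ω.1.1 a then inputKernel pX1 pX2 pX3 e true a ω.2 v else 0) *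
    (src (a, ω.1.2) * V v t)

end Definitions

variable {src : (S1 × S2) × σ → ℝ} {pX1 : S1 → X1 → ℝ} {pX2 : S2 → X2 → ℝ}
  {pX3 : S1 → S2 → X3 → ℝ} {V : X1 × X2 × X3 → T → ℝ} {e : Bool × Bool} {α : Type*}
  [DecidableEq α]

theorem inputLaw_nonneg (hsrc : ∀ x, 0 ≤ src x) (h₁ : ∀ s u, 0 ≤ pX1 s u) (h₂ : ∀ s u, 0 ≤ pX2 s u)
    (h₃ : ∀ s s' u, 0 ≤ pX3 s s' u) (ω : ((S1 × S2) × σ) × (X1 × X2 × X3)) :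
    0 ≤ inputLaw src pX1 pX2 pX3 ω :=
  mul_nonneg (hsrc _) (mul_nonneg (h₁ _ _) (mul_nonneg (h₂ _ _) (h₃ _ _ _)))

theorem source_pos_of_inputLaw_pos (h₁ : ∀ s u, 0 ≤ pX1 s u) (h₂ : ∀ s u, 0 ≤ pX2 s u)
    (h₃ : ∀ s s' u, 0 ≤ pX3 s s' u) {ω : ((S1 × S2) × σ) × (X1 × X2 × X3)}
    (hω : 0 < inputLaw src pX1 pX2 pX3 ω) : 0 < src ω.1 :=
  pos_of_mul_pos_left hω (mul_nonneg (h₁ _ _) (mul_nonneg (h₂ _ _) (h₃ _ _ _)))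

theorem sum_redraw {U : Type*} [Fintype U] [DecidableEq U] {p : U → ℝ} (hp : IsPmf p)
    (fresh : Bool) (u : U) : ∑ v, redraw fresh p u v = 1 := by
  cases fresh <;> simp [redraw, hp.2]

theorem redraw_one_mul_redraw_one [DecidableEq S1] [DecidableEq S2] (e : Bool × Bool)
    (a a' : S1 × S2) :
    redraw e.1 (fun _ => 1) a.1 a'.1 * redraw e.2 (fun _ => 1) a.2 a'.2 =
      if AgreeOff e a a' then (1 : ℝ) else 0 := by
  rcases e with ⟨_ | _, _ | _⟩ <;> simp only [redraw, AgreeOff] <;> grind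

/-- Probability of the inputs `u` of those sources that the error pattern `e` leaves correct. -/
def keptLaw (pX1 : S1 → X1 → ℝ) (pX2 : S2 → X2 → ℝ) (e : Bool × Bool) (a : S1 × S2)
    (u : X1 × X2 × X3) : ℝ :=
  (if e.1 then 1 else pX1 a.1 u.1) * if e.2 then 1 else pX2 a.2 u.2.1

section

variable [DecidableEq S1] [DecidableEq S2] [DecidableEq X1] [DecidableEq X2] [DecidableEq X3]

theorem ite_agreeOff_dest (a a' : S1 × S2) (u u' : X1 × X2 × X3) :
    (if AgreeOff e a a' ∧ AgreeOff e (u.1, u.2.1) (u'.1, u'.2.1) then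
        pX1 a'.1 u'.1 * (pX2 a'.2 u'.2.1 * pX3 a'.1 a'.2 u'.2.2) else 0) =
      keptLaw pX1 pX2 e a u *
        if AgreeOff e a a' then inputKernel pX1 pX2 pX3 e true a' u u' else 0 := by
  rcases e with ⟨_ | _, _ | _⟩ <;> simp only [AgreeOff, inputKernel, redraw, keptLaw] <;> grind

theorem ite_agreeOff_relay (a a' : S1 × S2) (u u' : X1 × X2 × X3) :
    (if AgreeOff (!e.1, !e.2) a a' ∧ AgreeOff e (u.1, u.2.1) (u'.1, u'.2.1) ∧ u'.2.2 = u.2.2 then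
        pX1 a'.1 u'.1 * (pX2 a'.2 u'.2.1 * pX3 a'.1 a'.2 u'.2.2) else 0) =
      (if AgreeOff (!e.1, !e.2) a a' then keptLaw pX1 pX2 e a' u * pX3 a'.1 a'.2 u.2.2 else 0) *
        inputKernel pX1 pX2 pX3 e false a u u' := by
  rcases e with ⟨_ | _, _ | _⟩ <;> simp only [AgreeOff, inputKernel, redraw, keptLaw] <;> grind

end

variable [Fintype X1] [Fintype X2] [Fintype X3]

theorem sum_inputLaw_fst (h₁ : ∀ s, IsPmf (pX1 s)) (h₂ : ∀ s, IsPmf (pX2 s))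
    (h₃ : ∀ s s', IsPmf (pX3 s s')) (x : (S1 × S2) × σ) :
    ∑ u, inputLaw src pX1 pX2 pX3 (x, u) = src x := by
  simp only [inputLaw]
  rw [← Finset.mul_sum, sum_law_eq_one (h₁ _) (h₂ _) (h₃ _ _), mul_one]

theorem sum_inputKernel [DecidableEq X1] [DecidableEq X2] [DecidableEq X3]
    (h₁ : ∀ s, IsPmf (pX1 s)) (h₂ : ∀ s, IsPmf (pX2 s)) (h₃ : ∀ s s', IsPmf (pX3 s s'))
    (e : Bool × Bool) (h : Bool) (a : S1 × S2) (u : X1 × X2 × X3) :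
    ∑ v, inputKernel pX1 pX2 pX3 e h a u v = 1 := by
  simp only [inputKernel, Fintype.sum_prod_type, ← Finset.mul_sum, sum_redraw (h₁ _),
    sum_redraw (h₂ _), sum_redraw (h₃ _ _), mul_one]

variable [Fintype S1] [Fintype S2] [Fintype σ]

theorem marginal_inputLaw_of_injective (h₁ : ∀ s, IsPmf (pX1 s)) (h₂ : ∀ s, IsPmf (pX2 s))
    (h₃ : ∀ s s', IsPmf (pX3 s s')) {S : (S1 × S2) × σ → α} (hS : Function.Injective S)
    (x : (S1 × S2) × σ) : marginal (inputLaw src pX1 pX2 pX3) (fun ω => S ω.1) (S x) = src x := by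
  classical
  rw [← sum_inputLaw_fst (src := src) h₁ h₂ h₃ x]
  simp [marginal, Fintype.sum_prod_type_right (α₁ := (S1 × S2) × σ), hS.eq_iff]

variable [DecidableEq S1] [DecidableEq S2]

theorem marginal_inputLaw_source (h₁ : ∀ s, IsPmf (pX1 s)) (h₂ : ∀ s, IsPmf (pX2 s))
    (h₃ : ∀ s s', IsPmf (pX3 s s')) {K : (S1 × S2) × σ → α} {x : (S1 × S2) × σ}
    (hK : ∀ x', K x' = K x ↔ AgreeOff e x.1 x'.1 ∧ x'.2 = x.2) :
    marginal (inputLaw src pX1 pX2 pX3) (fun ω => K ω.1) (K x) = mergedSource src e x := by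
  classical
  have hterm : ∀ a v u, (if K (a, v) = K x then inputLaw src pX1 pX2 pX3 ((a, v), u) else 0) =
      if v = x.2 then if AgreeOff e x.1 a then inputLaw src pX1 pX2 pX3 ((a, v), u) else 0
      else 0 := by
    intro a v u
    simp only [hK]
    grind
  simp only [marginal, mergedSource, Fintype.sum_prod_type (α₁ := (S1 × S2) × σ),
    Fintype.sum_prod_type (α₁ := S1 × S2), hterm, Finset.sum_ite_irrel, Finset.sum_const_zero,
    sum_inputLaw_fst h₁ h₂ h₃, Finset.sum_ite_eq', Finset.mem_univ, if_true]

variable [DecidableEq X1] [DecidableEq X2] [DecidableEq X3]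

theorem marginal_inputLaw_mul_dest {Z : ((S1 × S2) × σ) × (X1 × X2 × X3) → α}
    {ω : ((S1 × S2) × σ) × (X1 × X2 × X3)}
    (hZ : ∀ ω', Z ω' = Z ω ↔ (AgreeOff e ω.1.1 ω'.1.1 ∧
      AgreeOff e (ω.2.1, ω.2.2.1) (ω'.2.1, ω'.2.2.1)) ∧ ω'.1.2 = ω.1.2) (t : T) :
    marginal (fun ω => inputLaw src pX1 pX2 pX3 ω * V ω.2 t) Z (Z ω) =
      keptLaw pX1 pX2 e ω.1.1 ω.2 * mergedJoint src pX1 pX2 pX3 V e ω t := by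
  classical
  have hterm : ∀ a v u, (if Z ((a, v), u) = Z ω then
      inputLaw src pX1 pX2 pX3 ((a, v), u) * V u t else 0) =
      if v = ω.1.2 then keptLaw pX1 pX2 e ω.1.1 ω.2 *
        ((if AgreeOff e ω.1.1 a then inputKernel pX1 pX2 pX3 e true a ω.2 u else 0) *
          (src (a, v) * V u t)) else 0 := by
    intro a v u
    rw [← mul_assoc (keptLaw _ _ _ _ _), ← ite_agreeOff_dest]
    simp only [hZ, inputLaw]
    grind
  simp only [marginal, mergedJoint, Fintype.sum_prod_type (α₁ := (S1 × S2) × σ),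
    Fintype.sum_prod_type (α₁ := S1 × S2), hterm, Finset.mul_sum, Finset.sum_ite_irrel,
    Finset.sum_const_zero, Finset.sum_ite_eq', Finset.mem_univ, if_true]

theorem marginal_inputLaw_mul_relay {Z : (S1 × S2) × (X1 × X2 × X3) → α}
    {ω : ((S1 × S2) × σ) × (X1 × X2 × X3)}
    (hZ : ∀ a u, Z (a, u) = Z (ω.1.1, ω.2) ↔ AgreeOff (!e.1, !e.2) ω.1.1 a ∧
      AgreeOff e (ω.2.1, ω.2.2.1) (u.1, u.2.1) ∧ u.2.2 = ω.2.2.2) (F : X1 × X2 × X3 → ℝ) :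
    marginal (fun ω => inputLaw src pX1 pX2 pX3 ω * F ω.2) (fun ω => Z (ω.1.1, ω.2))
        (Z (ω.1.1, ω.2)) =
      (∑ x : (S1 × S2) × σ, src x * if AgreeOff (!e.1, !e.2) ω.1.1 x.1 then
        keptLaw pX1 pX2 e x.1 ω.2 * pX3 x.1.1 x.1.2 ω.2.2.2 else 0) *
      ∑ v, inputKernel pX1 pX2 pX3 e false ω.1.1 ω.2 v * F v := by
  have hterm : ∀ x u, (if Z (x.1, u) = Z (ω.1.1, ω.2) then
      inputLaw src pX1 pX2 pX3 (x, u) * F u else 0) =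
      src x * (if AgreeOff (!e.1, !e.2) ω.1.1 x.1 then
        keptLaw pX1 pX2 e x.1 ω.2 * pX3 x.1.1 x.1.2 ω.2.2.2 else 0) *
        (inputKernel pX1 pX2 pX3 e false ω.1.1 ω.2 u * F u) := by
    intro x u
    rw [← mul_assoc, mul_assoc (src x), ← ite_agreeOff_relay]
    simp only [hZ, inputLaw]
    grind
  simp only [marginal, Fintype.sum_prod_type (α₁ := (S1 × S2) × σ), hterm, Finset.sum_mul_sum]

end SingleLetter

section EntropyDifference

variable {S1 S2 X1 X2 X3 σ T : Type*} [Fintype S1] [Fintype S2] [Fintype X1]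
  [Fintype X2] [Fintype X3] [DecidableEq S1] [DecidableEq S2] [DecidableEq X1] [DecidableEq X2]
  [DecidableEq X3] {src : (S1 × S2) × σ → ℝ} {pX1 : S1 → X1 → ℝ} {pX2 : S2 → X2 → ℝ}
  {pX3 : S1 → S2 → X3 → ℝ} {V : X1 × X2 × X3 → T → ℝ} {e : Bool × Bool}

theorem mergedJoint_one (h₁ : ∀ s, IsPmf (pX1 s)) (h₂ : ∀ s, IsPmf (pX2 s))
    (h₃ : ∀ s s', IsPmf (pX3 s s')) (e : Bool × Bool) (ω : ((S1 × S2) × σ) × (X1 × X2 × X3))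
    (t : T) : mergedJoint src pX1 pX2 pX3 (fun _ _ => 1) e ω t = mergedSource src e ω.1 := by
  simp only [mergedJoint, mergedSource, mul_one, ← Finset.sum_mul, Finset.sum_ite_irrel,
    Finset.sum_const_zero, sum_inputKernel h₁ h₂ h₃, ite_mul, one_mul, zero_mul]

variable [Fintype σ] [Fintype T] [DecidableEq T] {α β γ δ : Type*} [Fintype α] [Fintype β]
  [Fintype γ] [Fintype δ] [DecidableEq α] [DecidableEq β] [DecidableEq γ] [DecidableEq δ]

theorem condEntropyOf_sub_condMutualInfoOf_dest (hsrc : ∀ x, 0 ≤ src x) (h₁ : ∀ s, IsPmf (pX1 s))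
    (h₂ : ∀ s, IsPmf (pX2 s)) (h₃ : ∀ s s', IsPmf (pX3 s s')) (hV : ∀ u, IsPmf (V u))
    {S : (S1 × S2) × σ → α} {K : (S1 × S2) × σ → β} {X : X1 × X2 × X3 → γ}
    {Z : ((S1 × S2) × σ) × (X1 × X2 × X3) → δ} (hS : Function.Injective fun x => (S x, K x))
    (hK : ∀ x x', K x' = K x ↔ AgreeOff e x.1 x'.1 ∧ x'.2 = x.2)
    (hX : ∀ ω ω', X ω'.2 = X ω.2 → Z ω' = Z ω → ω'.2 = ω.2)
    (hZ : ∀ ω ω', Z ω' = Z ω ↔ (AgreeOff e ω.1.1 ω'.1.1 ∧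
      AgreeOff e (ω.2.1, ω.2.2.1) (ω'.2.1, ω'.2.2.1)) ∧ ω'.1.2 = ω.1.2) :
    condEntropyOf (withOutput (inputLaw src pX1 pX2 pX3) fun ω => V ω.2) (fun ω => S ω.1.1)
          (fun ω => K ω.1.1) -
        condMutualInfoOf (withOutput (inputLaw src pX1 pX2 pX3) fun ω => V ω.2)
          (fun ω => X ω.1.2) (fun ω => ω.2) (fun ω => Z ω.1) =
      ∑ ω, ∑ t, inputLaw src pX1 pX2 pX3 ω * V ω.2 t *
        Real.log (mergedJoint src pX1 pX2 pX3 V e ω t / (src ω.1 * V ω.2 t)) := by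
  refine condEntropyOf_sub_condMutualInfoOf_withOutput
    (inputLaw_nonneg hsrc (fun s => (h₁ s).1) (fun s => (h₂ s).1) fun s s' => (h₃ s s').1)
    (fun ω => hV ω.2) (S := fun ω => S ω.1) (K := fun ω => K ω.1) (X := fun ω => X ω.2)
    (fun ω ω' h h' => congrArg V (hX ω ω' h h')) fun ω t hω ht => ?_
  have hsrc_pos : 0 < src ω.1 := source_pos_of_inputLaw_pos (fun s => (h₁ s).1) (fun s => (h₂ s).1)
    (fun s s' => (h₃ s s').1) hω
  have hZ_one := marginal_inputLaw_mul_dest (src := src) (pX1 := pX1) (pX2 := pX2) (pX3 := pX3)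
    (V := fun _ _ => 1) (hZ ω) ()
  simp only [mul_one] at hZ_one
  rw [marginal_inputLaw_source h₁ h₂ h₃ (hK ω.1), marginal_inputLaw_mul_dest (hZ ω) t, hZ_one,
    mergedJoint_one h₁ h₂ h₃, marginal_inputLaw_of_injective h₁ h₂ h₃ hS]
  field_simp

theorem condEntropyOf_sub_condMutualInfoOf_relay (hsrc : ∀ x, 0 ≤ src x) (h₁ : ∀ s, IsPmf (pX1 s))
    (h₂ : ∀ s, IsPmf (pX2 s)) (h₃ : ∀ s s', IsPmf (pX3 s s')) (hV : ∀ u, IsPmf (V u))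
    {S : (S1 × S2) × σ → α} {K : (S1 × S2) × σ → β} {X : X1 × X2 × X3 → γ}
    {Z : (S1 × S2) × (X1 × X2 × X3) → δ} (hS : Function.Injective fun x => (S x, K x))
    (hK : ∀ x x', K x' = K x ↔ AgreeOff e x.1 x'.1 ∧ x'.2 = x.2)
    (hX : ∀ a a' u u', X u' = X u → Z (a', u') = Z (a, u) → u' = u)
    (hZ : ∀ a a' u u', Z (a', u') = Z (a, u) ↔ AgreeOff (!e.1, !e.2) a a' ∧
      AgreeOff e (u.1, u.2.1) (u'.1, u'.2.1) ∧ u'.2.2 = u.2.2) :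
    condEntropyOf (withOutput (inputLaw src pX1 pX2 pX3) fun ω => V ω.2) (fun ω => S ω.1.1)
          (fun ω => K ω.1.1) -
        condMutualInfoOf (withOutput (inputLaw src pX1 pX2 pX3) fun ω => V ω.2)
          (fun ω => X ω.1.2) (fun ω => ω.2) (fun ω => Z (ω.1.1.1, ω.1.2)) =
      ∑ ω, ∑ t, inputLaw src pX1 pX2 pX3 ω * V ω.2 t *
        Real.log (mergedSource src e ω.1 / src ω.1 *
          (mergedOutput pX1 pX2 pX3 V e ω.1.1 ω.2 t / V ω.2 t)) := by
  refine condEntropyOf_sub_condMutualInfoOf_withOutput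
    (inputLaw_nonneg hsrc (fun s => (h₁ s).1) (fun s => (h₂ s).1) fun s s' => (h₃ s s').1)
    (fun ω => hV ω.2) (S := fun ω => S ω.1) (K := fun ω => K ω.1) (X := fun ω => X ω.2)
    (Z := fun ω => Z (ω.1.1, ω.2))
    (fun ω ω' h h' => congrArg V (hX ω.1.1 ω'.1.1 _ _ h h')) fun ω t hω ht => ?_
  have hsrc_pos : 0 < src ω.1 := source_pos_of_inputLaw_pos (fun s => (h₁ s).1) (fun s => (h₂ s).1)
    (fun s s' => (h₃ s s').1) hω
  have hZ_one := marginal_inputLaw_mul_relay (src := src) (pX1 := pX1) (pX2 := pX2) (pX3 := pX3)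
    (ω := ω) (fun a' u' => hZ _ a' _ u') fun _ => 1
  simp only [mul_one, sum_inputKernel h₁ h₂ h₃] at hZ_one
  rw [marginal_inputLaw_source h₁ h₂ h₃ (hK ω.1),
    marginal_inputLaw_mul_relay (fun a' u' => hZ _ a' _ u') (V · t), hZ_one,
    marginal_inputLaw_of_injective h₁ h₂ h₃ hS, mergedOutput]
  field_simp

end EntropyDifference

section Drift

theorem sum_mul_add_of_marginal {A σ κ T : Type*} [Fintype A] [Fintype σ] [Fintype κ] [Fintype T]
    {src : A × σ → ℝ} {p : A → ℝ} {ℓ : A → κ → ℝ} {V : κ → T → ℝ} (hp : ∀ a, p a = ∑ v, src (a, v))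
    (hp_sum : ∑ a, p a = 1) (hℓ : ∀ a, ∑ k, ℓ a k = 1) (hV : ∀ k, ∑ t, V k t = 1)
    (f : A × σ → ℝ) (g : A → κ → T → ℝ) :
    ∑ b, p b * ∑ ω : (A × σ) × κ, ∑ t,
        src ω.1 * ℓ b ω.2 * V ω.2 t * (f ω.1 + g b ω.2 t) =
      ∑ ω : (A × σ) × κ, ∑ t,
        src ω.1 * ℓ ω.1.1 ω.2 * V ω.2 t * (f ω.1 + g ω.1.1 ω.2 t) := by
  have hsrc : ∑ x, src x = 1 := by rw [Fintype.sum_prod_type, ← hp_sum]; simp only [hp]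
  trans ∑ x, src x * f x + ∑ b, p b * ∑ k, ℓ b k * ∑ t, V k t * g b k t
  · simp only [Fintype.sum_prod_type (α₁ := A × σ), mul_add, Finset.sum_add_distrib, mul_assoc,
      ← Finset.mul_sum, ← Finset.sum_mul, hℓ, hV, hp_sum, hsrc, one_mul]
  · have hg : ∑ b, p b * ∑ k, ℓ b k * ∑ t, V k t * g b k t =
        ∑ x : A × σ, src x * ∑ k, ℓ x.1 k * ∑ t, V k t * g x.1 k t := by
      simp only [Fintype.sum_prod_type, hp, Finset.sum_mul]
    simp only [Fintype.sum_prod_type (α₁ := A × σ), hg, mul_add, Finset.sum_add_distrib, mul_assoc,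
      ← Finset.mul_sum, ← Finset.sum_mul, hℓ, hV, one_mul]

theorem sum_sum_regroup {A σ T κ : Type*} [Fintype A] [Fintype σ] [Fintype T] [Fintype κ]
    (G : σ → T → A → κ → ℝ) :
    ∑ z : σ × T, ∑ a, ∑ k, G z.1 z.2 a k =
      ∑ ω : (A × σ) × κ, ∑ t, G ω.1.2 t ω.1.1 ω.2 := by
  simp only [Fintype.sum_prod_type]
  rw [Finset.sum_comm (s := (Finset.univ : Finset A))]
  refine Finset.sum_congr rfl fun v _ => Finset.sum_comm.trans ?_
  exact Finset.sum_congr rfl fun a _ => Finset.sum_comm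

variable {S1 S2 W W3 X1 X2 X3 Y Y3 σ T : Type*} [Fintype X1] [Fintype X2] [Fintype X3]
  [DecidableEq X1] [DecidableEq X2] [DecidableEq X3] {pSrc : S1 × S2 × W × W3 → ℝ}
  {Q : X1 × X2 × X3 → Y × Y3 → ℝ} {pX1 : S1 → X1 → ℝ} {pX2 : S2 → X2 → ℝ} {pX3 : S1 → S2 → X3 → ℝ}

theorem mergedOutput_pos {V : X1 × X2 × X3 → T → ℝ} (h₁ : ∀ s u, 0 ≤ pX1 s u)
    (h₂ : ∀ s u, 0 ≤ pX2 s u) (h₃ : ∀ s s' u, 0 ≤ pX3 s s' u) (hV : ∀ u t, 0 ≤ V u t)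
    (e : Bool × Bool) {a : S1 × S2} {u : X1 × X2 × X3} {t : T}
    (h : 0 < pX1 a.1 u.1 * (pX2 a.2 u.2.1 * pX3 a.1 a.2 u.2.2) * V u t) :
    0 < mergedOutput pX1 pX2 pX3 V e a u t := by
  have hlaw := pos_of_mul_pos_left h (hV u t)
  have hlaw' := pos_of_mul_pos_right hlaw (h₁ _ _)
  refine Finset.sum_pos' (fun v _ => mul_nonneg (mul_nonneg (redraw_nonneg (h₁ _) _ _)
    (mul_nonneg (redraw_nonneg (h₂ _) _ _) (redraw_nonneg (h₃ _ _) _ _))) (hV v t))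
    ⟨u, Finset.mem_univ u, mul_pos (mul_pos (redraw_self_pos ?_) (mul_pos (redraw_self_pos ?_)
      (redraw_self_pos ?_))) (pos_of_mul_pos_right h ?_)⟩
  · exact pos_of_mul_pos_left hlaw (mul_nonneg (h₂ _ _) (h₃ _ _ _))
  · exact pos_of_mul_pos_left hlaw' (h₃ _ _ _)
  · exact pos_of_mul_pos_right hlaw' (h₂ _ _)
  · exact hlaw.le

variable [Fintype S1] [Fintype S2] [DecidableEq S1] [DecidableEq S2]

theorem mergedSource_pos {src : (S1 × S2) × σ → ℝ} (hsrc : ∀ x, 0 ≤ src x) (e : Bool × Bool)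
    {x : (S1 × S2) × σ} (hx : 0 < src x) : 0 < mergedSource src e x :=
  Finset.sum_pos' (fun a _ => by split_ifs <;> simp [hsrc])
    ⟨x.1, Finset.mem_univ _, by simpa [AgreeOff]⟩

variable [Fintype W] [Fintype W3] [Fintype Y] [Fintype Y3]

variable (pSrc Q pX1 pX2 pX3) in
theorem destReceiver_wrongWeight [DecidableEq W] [DecidableEq Y] (e : Bool × Bool)
    (z : (S1 × S2) × W × Y) (ω : (S1 × S2) × (X1 × X2 × X3)) :
    (destReceiver pSrc Q pX1 pX2 pX3).wrongWeight e true z ω = marginal pSrc msg z.1 *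
      mergedJoint (marginal pSrc fun s => (msg s, s.2.2.1)) pX1 pX2 pX3
        (fun u => marginal (Q u) Prod.fst) e ((ω.1, z.2.1), ω.2) z.2.2 := by
  simp only [Receiver.wrongWeight, mergedJoint, Finset.mul_sum,
    Fintype.sum_prod_type (α₁ := S1 × S2)]
  refine Finset.sum_congr rfl fun a _ => Finset.sum_congr rfl fun v _ => ?_
  simp only [Receiver.kernel, redraw_one_mul_redraw_one, Receiver.wordKernel, inputKernel,
    destReceiver, letterWeight, ite_mul, one_mul, zero_mul, mul_ite, mul_zero]
  congr 1
  ring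

variable (pSrc Q pX1 pX2 pX3) in
theorem relayReceiver_wrongWeight [DecidableEq W3] [DecidableEq Y3] (e : Bool × Bool)
    (z : (S1 × S2) × W3 × Y3) (ω : (S1 × S2) × (X1 × X2 × X3)) :
    (relayReceiver pSrc Q pX1 pX2 pX3).wrongWeight e false z ω = marginal pSrc msg z.1 *
      (mergedSource (marginal pSrc fun s => (msg s, s.2.2.2)) e (ω.1, z.2.1) *
      mergedOutput pX1 pX2 pX3 (fun u => marginal (Q u) Prod.snd) e z.1 ω.2 z.2.2) := by
  simp only [Receiver.wrongWeight, mergedSource, mergedOutput, Finset.mul_sum, Finset.sum_mul,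
    Fintype.sum_prod_type (α₁ := S1 × S2)]
  rw [Finset.sum_comm]
  refine Finset.sum_congr rfl fun v _ => Finset.sum_congr rfl fun a _ => ?_
  simp only [Receiver.kernel, redraw_one_mul_redraw_one, Receiver.wordKernel, inputKernel,
    relayReceiver, letterWeight, ite_mul, one_mul, zero_mul, mul_ite, mul_zero]
  congr 1
  ring

theorem destReceiver_drift [DecidableEq W] [DecidableEq Y] (hSrc : IsPmf pSrc) (e : Bool × Bool) :
    (destReceiver pSrc Q pX1 pX2 pX3).drift e true =
      ∑ ω, ∑ t, inputLaw (marginal pSrc fun s => (msg s, s.2.2.1)) pX1 pX2 pX3 ω *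
        marginal (Q ω.2) Prod.fst t *
        Real.log (mergedJoint (marginal pSrc fun s => (msg s, s.2.2.1)) pX1 pX2 pX3
            (fun u => marginal (Q u) Prod.fst) e ω t /
          (marginal pSrc (fun s => (msg s, s.2.2.1)) ω.1 * marginal (Q ω.2) Prod.fst t)) := by
  set src := marginal pSrc fun s => (msg s, s.2.2.1)
  have hterm (z : (S1 × S2) × W × Y) (ω : (S1 × S2) × (X1 × X2 × X3)) :
      (destReceiver pSrc Q pX1 pX2 pX3).joint z ω *
          Real.log ((destReceiver pSrc Q pX1 pX2 pX3).wrongWeight e true z ω /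
            (destReceiver pSrc Q pX1 pX2 pX3).weight z ω) =
        marginal pSrc msg z.1 * (inputLaw src pX1 pX2 pX3 ((ω.1, z.2.1), ω.2) *
          marginal (Q ω.2) Prod.fst z.2.2 *
          Real.log (mergedJoint src pX1 pX2 pX3 (fun u => marginal (Q u) Prod.fst) e
            ((ω.1, z.2.1), ω.2) z.2.2 / (src (ω.1, z.2.1) * marginal (Q ω.2) Prod.fst z.2.2))) := by
    rw [destReceiver_wrongWeight]
    simp only [Receiver.joint, Receiver.law, destReceiver, letterWeight, inputLaw]
    rcases eq_or_ne (marginal pSrc msg z.1) 0 with hz | hz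
    · simp [hz]
    · rw [mul_assoc (marginal pSrc msg z.1), mul_div_mul_left _ _ hz]
      ring
  simp only [Receiver.drift, hterm, ← Finset.mul_sum, Fintype.sum_prod_type (α₁ := S1 × S2),
    ← Finset.sum_mul, (hSrc.marginal msg).2, one_mul]
  exact sum_sum_regroup fun v t a u => inputLaw src pX1 pX2 pX3 ((a, v), u) *
    marginal (Q u) Prod.fst t * Real.log (mergedJoint src pX1 pX2 pX3
      (fun u => marginal (Q u) Prod.fst) e ((a, v), u) t /
        (src (a, v) * marginal (Q u) Prod.fst t))

theorem mul_log_merged_eq_add {src : (S1 × S2) × σ → ℝ} {V : X1 × X2 × X3 → T → ℝ}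
    (hsrc : ∀ x, 0 ≤ src x) (h₁ : ∀ s u, 0 ≤ pX1 s u) (h₂ : ∀ s u, 0 ≤ pX2 s u)
    (h₃ : ∀ s s' u, 0 ≤ pX3 s s' u) (hV : ∀ u t, 0 ≤ V u t) (e : Bool × Bool)
    (x : (S1 × S2) × σ) (a : S1 × S2) (u : X1 × X2 × X3) (t : T) :
    src x * (pX1 a.1 u.1 * (pX2 a.2 u.2.1 * pX3 a.1 a.2 u.2.2)) * V u t *
        Real.log (mergedSource src e x / src x * (mergedOutput pX1 pX2 pX3 V e a u t / V u t)) =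
      src x * (pX1 a.1 u.1 * (pX2 a.2 u.2.1 * pX3 a.1 a.2 u.2.2)) * V u t *
        (Real.log (mergedSource src e x / src x) +
          Real.log (mergedOutput pX1 pX2 pX3 V e a u t / V u t)) := by
  have hlaw : 0 ≤ pX1 a.1 u.1 * (pX2 a.2 u.2.1 * pX3 a.1 a.2 u.2.2) :=
    mul_nonneg (h₁ _ _) (mul_nonneg (h₂ _ _) (h₃ _ _ _))
  rcases (hsrc x).eq_or_lt with hx | hx
  · simp [← hx]
  rcases (mul_nonneg hlaw (hV u t)).eq_or_lt with hu | hu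
  · rw [mul_assoc (src x), ← hu, mul_zero, zero_mul, zero_mul]
  · rw [Real.log_mul (div_pos (mergedSource_pos hsrc e hx) hx).ne'
      (div_pos (mergedOutput_pos h₁ h₂ h₃ hV e hu) (pos_of_mul_pos_right hu hlaw)).ne']

theorem relayReceiver_drift [DecidableEq W3] [DecidableEq Y3] (hSrc : IsPmf pSrc)
    (hQ : ∀ x, IsPmf (Q x)) (h₁ : ∀ s, IsPmf (pX1 s)) (h₂ : ∀ s, IsPmf (pX2 s))
    (h₃ : ∀ s s', IsPmf (pX3 s s')) (e : Bool × Bool) :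
    (relayReceiver pSrc Q pX1 pX2 pX3).drift e false =
      ∑ ω, ∑ t, inputLaw (marginal pSrc fun s => (msg s, s.2.2.2)) pX1 pX2 pX3 ω *
        marginal (Q ω.2) Prod.snd t *
        Real.log (mergedSource (marginal pSrc fun s => (msg s, s.2.2.2)) e ω.1 /
            marginal pSrc (fun s => (msg s, s.2.2.2)) ω.1 *
          (mergedOutput pX1 pX2 pX3 (fun u => marginal (Q u) Prod.snd) e ω.1.1 ω.2 t /
            marginal (Q ω.2) Prod.snd t)) := by
  set src := marginal pSrc fun s => (msg s, s.2.2.2)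
  set V := fun u : X1 × X2 × X3 => marginal (Q u) Prod.snd
  have hV (u) : IsPmf (V u) := (hQ u).marginal Prod.snd
  have hlog := mul_log_merged_eq_add (src := src) (V := V) (marginal_nonneg hSrc.1 _)
    (fun s => (h₁ s).1) (fun s => (h₂ s).1) (fun s s' => (h₃ s s').1) (fun u => (hV u).1) e
  have hp (a) : marginal pSrc msg a = ∑ v, src (a, v) := by
    rw [← marginal_comp pSrc (fun s => (msg s, s.2.2.2)) Prod.fst]
    simp [marginal, src, Fintype.sum_prod_type (α₁ := S1 × S2)]
  have hterm (z : (S1 × S2) × W3 × Y3) (ω : (S1 × S2) × (X1 × X2 × X3)) :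
      (relayReceiver pSrc Q pX1 pX2 pX3).joint z ω *
          Real.log ((relayReceiver pSrc Q pX1 pX2 pX3).wrongWeight e false z ω /
            (relayReceiver pSrc Q pX1 pX2 pX3).weight z ω) =
        marginal pSrc msg z.1 * (src (ω.1, z.2.1) *
          (pX1 z.1.1 ω.2.1 * (pX2 z.1.2 ω.2.2.1 * pX3 z.1.1 z.1.2 ω.2.2.2)) * V ω.2 z.2.2 *
          (Real.log (mergedSource src e (ω.1, z.2.1) / src (ω.1, z.2.1)) +
            Real.log (mergedOutput pX1 pX2 pX3 V e z.1 ω.2 z.2.2 / V ω.2 z.2.2))) := by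
    rw [relayReceiver_wrongWeight, ← hlog]
    simp only [Receiver.joint, Receiver.law, relayReceiver, letterWeight]
    rcases eq_or_ne (marginal pSrc msg z.1) 0 with hz | hz
    · simp [hz]
    · rw [mul_assoc (marginal pSrc msg z.1), mul_div_mul_left _ _ hz, ← div_mul_div_comm]
      ring
  simp only [Receiver.drift, hterm, Fintype.sum_prod_type (α₁ := S1 × S2), ← Finset.mul_sum]
  refine .trans ?_ ((sum_mul_add_of_marginal hp (hSrc.marginal msg).2
    (fun a => sum_law_eq_one (h₁ a.1) (h₂ a.2) (h₃ a.1 a.2)) (fun u => (hV u).2)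
    (fun x => Real.log (mergedSource src e x / src x))
    fun a u t => Real.log (mergedOutput pX1 pX2 pX3 V e a u t / V u t)).trans ?_)
  · exact Finset.sum_congr rfl fun b _ => congrArg _ (sum_sum_regroup fun v t a u => src (a, v) *
      (pX1 b.1 u.1 * (pX2 b.2 u.2.1 * pX3 b.1 b.2 u.2.2)) * V u t *
        (Real.log (mergedSource src e (a, v) / src (a, v)) +
          Real.log (mergedOutput pX1 pX2 pX3 V e b u t / V u t)))
  · exact Finset.sum_congr rfl fun ω _ => Finset.sum_congr rfl fun t _ => (hlog ..).symm

end Drift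

section Composition

variable {Ω Ω' α β γ : Type*} [Fintype Ω] [Fintype Ω'] [Fintype α] [Fintype β] [Fintype γ]
  [DecidableEq Ω'] [DecidableEq α] [DecidableEq β] [DecidableEq γ] (μ : Ω → ℝ) (V : Ω → Ω')

theorem condEntropyOf_comp (X : Ω' → α) (Y : Ω' → β) :
    condEntropyOf μ (fun ω => X (V ω)) (fun ω => Y (V ω)) =
      condEntropyOf (marginal μ V) X Y := by
  simp only [condEntropyOf, entropyOf_comp μ V Y, entropyOf_comp μ V fun ω => (X ω, Y ω)]

theorem condMutualInfoOf_comp (X : Ω' → α) (Y : Ω' → β) (Z : Ω' → γ) :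
    condMutualInfoOf μ (fun ω => X (V ω)) (fun ω => Y (V ω)) (fun ω => Z (V ω)) =
      condMutualInfoOf (marginal μ V) X Y Z := by
  simp only [condMutualInfoOf, entropyOf_comp μ V Z, entropyOf_comp μ V fun ω => (X ω, Z ω),
    entropyOf_comp μ V fun ω => (Y ω, Z ω), entropyOf_comp μ V fun ω => (X ω, Y ω, Z ω)]

end Composition

section JointLaw

variable {S1 S2 W W3 X1 X2 X3 Y Y3 σ T : Type*} [Fintype S1] [Fintype S2] [Fintype W] [Fintype W3]
  [Fintype X1] [Fintype X2] [Fintype X3] [Fintype Y] [Fintype Y3] [DecidableEq S1] [DecidableEq S2]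
  [DecidableEq X1] [DecidableEq X2] [DecidableEq X3] {pSrc : S1 × S2 × W × W3 → ℝ}
  {Q : X1 × X2 × X3 → Y × Y3 → ℝ} {pX1 : S1 → X1 → ℝ} {pX2 : S2 → X2 → ℝ} {pX3 : S1 → S2 → X3 → ℝ}

/-- What a receiver with side information `side` and channel output `out` sees of the variables
that `thm2Joint` describes: sources, side information, channel inputs and channel output. -/
def letterView (side : S1 × S2 × W × W3 → σ) (out : Y × Y3 → T)
    (ω : S1 × S2 × W3 × W × X1 × X2 × X3 × Y3 × Y) :
    (((S1 × S2) × σ) × (X1 × X2 × X3)) × T :=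
  ((((ω.1, ω.2.1), side (ω.1, ω.2.1, ω.2.2.2.1, ω.2.2.1)),
    (ω.2.2.2.2.1, ω.2.2.2.2.2.1, ω.2.2.2.2.2.2.1)),
    out (ω.2.2.2.2.2.2.2.2, ω.2.2.2.2.2.2.2.1))

theorem marginal_thm2Joint [DecidableEq σ] [DecidableEq T] (side : S1 × S2 × W × W3 → σ)
    (out : Y × Y3 → T) :
    marginal (thm2Joint pSrc Q pX1 pX2 pX3) (letterView side out) =
      withOutput (inputLaw (marginal pSrc fun s => (msg s, side s)) pX1 pX2 pX3)
        fun ω => marginal (Q ω.2) out := by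
  funext ⟨⟨⟨⟨a, b⟩, v⟩, u₁, u₂, u₃⟩, t⟩
  simp only [marginal, letterView, thm2Joint, withOutput, inputLaw, msg, Fintype.sum_prod_type,
    Prod.mk.injEq, ite_and, Finset.sum_ite_irrel, Finset.sum_const_zero, Finset.sum_ite_eq',
    Finset.mem_univ, if_true]
  simp only [Finset.sum_ite_irrel, Finset.sum_const_zero, Finset.sum_ite_eq', Finset.mem_univ,
    if_true, Finset.sum_mul, ite_mul, zero_mul]
  rw [Finset.sum_comm]
  refine Finset.sum_congr rfl fun w _ => Finset.sum_congr rfl fun w3 _ => if_congr Iff.rfl ?_ rfl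
  rw [Finset.sum_comm]
  simp only [Finset.mul_sum, mul_ite, mul_zero, mul_assoc]

variable {α β γ δ : Type*} [Fintype α] [Fintype β] [Fintype γ] [Fintype δ] [DecidableEq α]
  [DecidableEq β] [DecidableEq γ] [DecidableEq δ] {e : Bool × Bool}

theorem relayReceiver_drift_eq [DecidableEq W3] [DecidableEq Y3] (hSrc : IsPmf pSrc)
    (hQ : ∀ x, IsPmf (Q x)) (h₁ : ∀ s, IsPmf (pX1 s)) (h₂ : ∀ s, IsPmf (pX2 s))
    (h₃ : ∀ s s', IsPmf (pX3 s s')) {S : (S1 × S2) × W3 → α} {K : (S1 × S2) × W3 → β}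
    {X : X1 × X2 × X3 → γ} {Z : (S1 × S2) × (X1 × X2 × X3) → δ}
    (hS : Function.Injective fun x => (S x, K x))
    (hK : ∀ x x', K x' = K x ↔ AgreeOff e x.1 x'.1 ∧ x'.2 = x.2)
    (hX : ∀ a a' u u', X u' = X u → Z (a', u') = Z (a, u) → u' = u)
    (hZ : ∀ a a' u u', Z (a', u') = Z (a, u) ↔ AgreeOff (!e.1, !e.2) a a' ∧
      AgreeOff e (u.1, u.2.1) (u'.1, u'.2.1) ∧ u'.2.2 = u.2.2) :
    (relayReceiver pSrc Q pX1 pX2 pX3).drift e false =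
      condEntropyOf (thm2Joint pSrc Q pX1 pX2 pX3)
          (fun ω => S (letterView (·.2.2.2) Prod.snd ω).1.1)
          (fun ω => K (letterView (·.2.2.2) Prod.snd ω).1.1) -
        condMutualInfoOf (thm2Joint pSrc Q pX1 pX2 pX3)
          (fun ω => X (letterView (·.2.2.2) Prod.snd ω).1.2)
          (fun ω => (letterView (·.2.2.2) Prod.snd ω).2)
          (fun ω => Z ((letterView (·.2.2.2) Prod.snd ω).1.1.1,
            (letterView (·.2.2.2) Prod.snd ω).1.2)) := by
  rw [condEntropyOf_comp _ (letterView (·.2.2.2) Prod.snd) (fun ω => S ω.1.1) fun ω => K ω.1.1,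
    condMutualInfoOf_comp _ (letterView (·.2.2.2) Prod.snd) (fun ω => X ω.1.2) (fun ω => ω.2)
      fun ω => Z (ω.1.1.1, ω.1.2), marginal_thm2Joint,
    condEntropyOf_sub_condMutualInfoOf_relay (fun x => marginal_nonneg hSrc.1 _ x) h₁ h₂ h₃
      (fun u => (hQ u).marginal Prod.snd) hS hK hX hZ]
  exact relayReceiver_drift hSrc hQ h₁ h₂ h₃ e

theorem destReceiver_drift_eq [DecidableEq W] [DecidableEq Y] (hSrc : IsPmf pSrc)
    (hQ : ∀ x, IsPmf (Q x)) (h₁ : ∀ s, IsPmf (pX1 s)) (h₂ : ∀ s, IsPmf (pX2 s))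
    (h₃ : ∀ s s', IsPmf (pX3 s s')) {S : (S1 × S2) × W → α} {K : (S1 × S2) × W → β}
    {X : X1 × X2 × X3 → γ} {Z : ((S1 × S2) × W) × (X1 × X2 × X3) → δ}
    (hS : Function.Injective fun x => (S x, K x))
    (hK : ∀ x x', K x' = K x ↔ AgreeOff e x.1 x'.1 ∧ x'.2 = x.2)
    (hX : ∀ ω ω', X ω'.2 = X ω.2 → Z ω' = Z ω → ω'.2 = ω.2)
    (hZ : ∀ ω ω', Z ω' = Z ω ↔ (AgreeOff e ω.1.1 ω'.1.1 ∧
      AgreeOff e (ω.2.1, ω.2.2.1) (ω'.2.1, ω'.2.2.1)) ∧ ω'.1.2 = ω.1.2) :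
    (destReceiver pSrc Q pX1 pX2 pX3).drift e true =
      condEntropyOf (thm2Joint pSrc Q pX1 pX2 pX3)
          (fun ω => S (letterView (·.2.2.1) Prod.fst ω).1.1)
          (fun ω => K (letterView (·.2.2.1) Prod.fst ω).1.1) -
        condMutualInfoOf (thm2Joint pSrc Q pX1 pX2 pX3)
          (fun ω => X (letterView (·.2.2.1) Prod.fst ω).1.2)
          (fun ω => (letterView (·.2.2.1) Prod.fst ω).2)
          (fun ω => Z (letterView (·.2.2.1) Prod.fst ω).1) := by
  rw [condEntropyOf_comp _ (letterView (·.2.2.1) Prod.fst) (fun ω => S ω.1.1) fun ω => K ω.1.1,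
    condMutualInfoOf_comp _ (letterView (·.2.2.1) Prod.fst) (fun ω => X ω.1.2) (fun ω => ω.2)
      fun ω => Z ω.1, marginal_thm2Joint,
    condEntropyOf_sub_condMutualInfoOf_dest (fun x => marginal_nonneg hSrc.1 _ x) h₁ h₂ h₃
      (fun u => (hQ u).marginal Prod.fst) hS hK hX hZ]
  exact destReceiver_drift hSrc e

end JointLaw

section DriftNeg

variable {S1 S2 W W3 X1 X2 X3 Y Y3 : Type*} [Fintype S1] [Fintype S2] [Fintype W] [Fintype W3]
  [Fintype X1] [Fintype X2] [Fintype X3] [Fintype Y] [Fintype Y3] [DecidableEq S1] [DecidableEq S2]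
  [DecidableEq X1] [DecidableEq X2] [DecidableEq X3] {pSrc : S1 × S2 × W × W3 → ℝ}
  {Q : X1 × X2 × X3 → Y × Y3 → ℝ} {pX1 : S1 → X1 → ℝ} {pX2 : S2 → X2 → ℝ} {pX3 : S1 → S2 → X3 → ℝ}

theorem relayReceiver_drift_neg [DecidableEq W3] [DecidableEq Y3] (hSrc : IsPmf pSrc)
    (hQ : ∀ x, IsPmf (Q x)) (h₁ : ∀ s, IsPmf (pX1 s)) (h₂ : ∀ s, IsPmf (pX2 s))
    (h₃ : ∀ s s', IsPmf (pX3 s s'))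
    (hlt₁ : condEntropyOf (thm2Joint pSrc Q pX1 pX2 pX3) (fun (s1, _, _, _, _, _, _, _, _) => s1)
        (fun (_, s2, w3, _, _, _, _, _, _) => (s2, w3)) <
      condMutualInfoOf (thm2Joint pSrc Q pX1 pX2 pX3) (fun (_, _, _, _, x1, _, _, _, _) => x1)
        (fun (_, _, _, _, _, _, _, y3, _) => y3)
        (fun (s1, _, _, _, _, x2, x3, _, _) => (s1, x2, x3)))
    (hlt₂ : condEntropyOf (thm2Joint pSrc Q pX1 pX2 pX3) (fun (_, s2, _, _, _, _, _, _, _) => s2)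
        (fun (s1, _, w3, _, _, _, _, _, _) => (s1, w3)) <
      condMutualInfoOf (thm2Joint pSrc Q pX1 pX2 pX3) (fun (_, _, _, _, _, x2, _, _, _) => x2)
        (fun (_, _, _, _, _, _, _, y3, _) => y3)
        (fun (_, s2, _, _, x1, _, x3, _, _) => (s2, x1, x3)))
    (hlt₁₂ : condEntropyOf (thm2Joint pSrc Q pX1 pX2 pX3)
        (fun (s1, s2, _, _, _, _, _, _, _) => (s1, s2))
        (fun (_, _, w3, _, _, _, _, _, _) => w3) <
      condMutualInfoOf (thm2Joint pSrc Q pX1 pX2 pX3)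
        (fun (_, _, _, _, x1, x2, _, _, _) => (x1, x2))
        (fun (_, _, _, _, _, _, _, y3, _) => y3)
        (fun (s1, s2, _, _, _, _, x3, _, _) => (s1, s2, x3)))
    {e : Bool × Bool} (he : e ∈ errorPatterns) :
    (relayReceiver pSrc Q pX1 pX2 pX3).drift e false < 0 := by
  simp only [errorPatterns, Finset.mem_insert, Finset.mem_singleton] at he
  rcases he with rfl | rfl | rfl
  · refine (relayReceiver_drift_eq hSrc hQ h₁ h₂ h₃ (S := fun a => a.1.1)
      (K := fun a => (a.1.2, a.2)) (X := fun u => u.1)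
      (Z := fun ω => (ω.1.1, ω.2.2.1, ω.2.2.2)) ?_ ?_ ?_ ?_).trans_lt (sub_neg.2 hlt₁)
      <;> grind [Function.Injective]
  · refine (relayReceiver_drift_eq hSrc hQ h₁ h₂ h₃ (S := fun a => a.1.2)
      (K := fun a => (a.1.1, a.2)) (X := fun u => u.2.1)
      (Z := fun ω => (ω.1.2, ω.2.1, ω.2.2.2)) ?_ ?_ ?_ ?_).trans_lt (sub_neg.2 hlt₂)
      <;> grind [Function.Injective]
  · refine (relayReceiver_drift_eq hSrc hQ h₁ h₂ h₃ (S := fun a => a.1)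
      (K := fun a => a.2) (X := fun u => (u.1, u.2.1))
      (Z := fun ω => (ω.1.1, ω.1.2, ω.2.2.2)) ?_ ?_ ?_ ?_).trans_lt (sub_neg.2 hlt₁₂)
      <;> grind [Function.Injective]

theorem destReceiver_drift_neg [DecidableEq W] [DecidableEq Y] (hSrc : IsPmf pSrc)
    (hQ : ∀ x, IsPmf (Q x)) (h₁ : ∀ s, IsPmf (pX1 s)) (h₂ : ∀ s, IsPmf (pX2 s))
    (h₃ : ∀ s s', IsPmf (pX3 s s'))
    (hlt₁ : condEntropyOf (thm2Joint pSrc Q pX1 pX2 pX3) (fun (s1, _, _, _, _, _, _, _, _) => s1)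
        (fun (_, s2, _, w, _, _, _, _, _) => (s2, w)) <
      condMutualInfoOf (thm2Joint pSrc Q pX1 pX2 pX3)
        (fun (_, _, _, _, x1, _, x3, _, _) => (x1, x3))
        (fun (_, _, _, _, _, _, _, _, y) => y) (fun (_, s2, _, w, _, x2, _, _, _) => (s2, x2, w)))
    (hlt₂ : condEntropyOf (thm2Joint pSrc Q pX1 pX2 pX3) (fun (_, s2, _, _, _, _, _, _, _) => s2)
        (fun (s1, _, _, w, _, _, _, _, _) => (s1, w)) <
      condMutualInfoOf (thm2Joint pSrc Q pX1 pX2 pX3)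
        (fun (_, _, _, _, _, x2, x3, _, _) => (x2, x3))
        (fun (_, _, _, _, _, _, _, _, y) => y) (fun (s1, _, _, w, x1, _, _, _, _) => (s1, x1, w)))
    (hlt₁₂ : condEntropyOf (thm2Joint pSrc Q pX1 pX2 pX3)
        (fun (s1, s2, _, _, _, _, _, _, _) => (s1, s2))
        (fun (_, _, _, w, _, _, _, _, _) => w) <
      condMutualInfoOf (thm2Joint pSrc Q pX1 pX2 pX3)
        (fun (_, _, _, _, x1, x2, x3, _, _) => (x1, x2, x3))
        (fun (_, _, _, _, _, _, _, _, y) => y) (fun (_, _, _, w, _, _, _, _, _) => w))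
    {e : Bool × Bool} (he : e ∈ errorPatterns) :
    (destReceiver pSrc Q pX1 pX2 pX3).drift e true < 0 := by
  simp only [errorPatterns, Finset.mem_insert, Finset.mem_singleton] at he
  rcases he with rfl | rfl | rfl
  · refine (destReceiver_drift_eq hSrc hQ h₁ h₂ h₃ (S := fun a => a.1.1)
      (K := fun a => (a.1.2, a.2)) (X := fun u => (u.1, u.2.2))
      (Z := fun ω => (ω.1.1.2, ω.2.2.1, ω.1.2)) ?_ ?_ ?_ ?_).trans_lt (sub_neg.2 hlt₁)
      <;> grind [Function.Injective]
  · refine (destReceiver_drift_eq hSrc hQ h₁ h₂ h₃ (S := fun a => a.1.2)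
      (K := fun a => (a.1.1, a.2)) (X := fun u => (u.2.1, u.2.2))
      (Z := fun ω => (ω.1.1.1, ω.2.1, ω.1.2)) ?_ ?_ ?_ ?_).trans_lt (sub_neg.2 hlt₂)
      <;> grind [Function.Injective]
  · refine (destReceiver_drift_eq hSrc hQ h₁ h₂ h₃ (S := fun a => a.1)
      (K := fun a => a.2) (X := fun u => (u.1, u.2.1, u.2.2))
      (Z := fun ω => ω.1.2) ?_ ?_ ?_ ?_).trans_lt (sub_neg.2 hlt₁₂)
      <;> grind [Function.Injective]

end DriftNeg

/-! ### Block-Markov transmission -/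

section BlockMarkov

theorem sum_mul_ite_eq_of_sum_eq {Ω : Type*} [Fintype Ω] {μ ν : Ω → ℝ}
    (hsum : ∑ ω, μ ω = ∑ ω, ν ω) {good : Ω → Prop} [DecidablePred good]
    (hgood : ∀ ω, good ω → μ ω = ν ω) :
    ∑ ω, μ ω * (if good ω then 0 else 1) = ∑ ω, ν ω * if good ω then 0 else 1 := by
  have hcompl : ∀ κ : Ω → ℝ, ∑ ω, κ ω * (if good ω then 0 else 1) =
      ∑ ω, κ ω - ∑ ω, if good ω then κ ω else 0 := fun κ => by
    rw [← Finset.sum_sub_distrib]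
    exact Finset.sum_congr rfl fun ω _ => by split_ifs <;> simp
  rw [hcompl, hcompl, hsum]
  congr 1
  exact Finset.sum_congr rfl fun ω _ => if_ctx_congr Iff.rfl (hgood ω) fun _ => rfl

theorem sum_prod_causal_eq_one {X O : Type*} [Fintype O] [Nonempty O] {V : X → O → ℝ}
    (hV : ∀ x, ∑ o, V x o = 1) : ∀ {n : ℕ} (x : Fin n → (Fin n → O) → X),
    (∀ b o o', (∀ j < b, o j = o' j) → x b o = x b o') → ∑ o : Fin n → O, ∏ b, V (x b o) (o b) = 1
  | 0, _, _ => by simp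
  | n + 1, x, hx => by
    obtain ⟨o₀⟩ := ‹Nonempty O›
    have hpast : ∀ (os : Fin n → O) (o : O) (b : Fin (n + 1)),
        x b (Fin.snoc os o : Fin (n + 1) → O) = x b (Fin.snoc os o₀ : Fin (n + 1) → O) := by
      refine fun os o b => hx b _ _ fun j hj => ?_
      obtain ⟨i, rfl⟩ := Fin.exists_castSucc_eq.2 (hj.trans_le (Fin.le_last b)).ne
      simp only [Fin.snoc_castSucc]
    rw [← (Fin.snocEquiv fun _ => O).sum_comp, Fintype.sum_prod_type, Finset.sum_comm]
    simp only [Fin.snocEquiv, Equiv.coe_fn_mk, Fin.prod_univ_castSucc, Fin.snoc_castSucc,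
      Fin.snoc_last, hpast, ← Finset.mul_sum, hV, mul_one]
    refine sum_prod_causal_eq_one hV (fun b os => x b.castSucc (Fin.snoc os o₀ : Fin (n + 1) → O))
      fun b o o' h => hx _ _ _ fun j hj => ?_
    obtain ⟨i, rfl⟩ := Fin.exists_castSucc_eq.2 (hj.trans_le (Fin.le_last _)).ne
    simpa only [Fin.snoc_castSucc] using h i (by simpa using hj)

namespace BlockCode

variable {F A1 A2 W W3 U1 U2 U3 Y Y3 : Type*} (C : BlockCode A1 A2 W W3 U1 U2 U3 Y Y3) {B : ℕ}

/-- The message pairs decoded forward by the relay, which learns the pair `b + 1` from block `b`;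
the pair `a₀` is known in advance. -/
def relayEstimate (a₀ : A1 × A2) (w3 : Fin (B + 1) → W3) (y3 : Fin (B + 1) → Y3) :
    Fin (B + 1) → A1 × A2 :=
  fun b => Fin.induction a₀ (fun i est => C.relayDecode est (w3 i.succ) (y3 i.castSucc)) b

/-- The message pairs decoded backward by the destination, which learns the pair `b` from block `b`;
the pair `a₀`, sent anew in the last block, is known in advance. -/
def destEstimate (a₀ : A1 × A2) (w : Fin (B + 1) → W) (y : Fin (B + 1) → Y) :
    Fin (B + 1) → A1 × A2 :=
  fun b => Fin.reverseInduction (C.destDecode a₀ (w (Fin.last B)) (y (Fin.last B)))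
    (fun i est => C.destDecode est (w i.castSucc) (y i.castSucc)) b

/-- The channel input in block `b` of the transmission of `a`. The addition is cyclic: the new
message pair in the last block is the known pair `a 0`. -/
def markovInput (a : Fin (B + 1) → A1 × A2) (w3 : Fin (B + 1) → W3) (y3 : Fin (B + 1) → Y3)
    (b : Fin (B + 1)) : U1 × U2 × U3 :=
  C.input (a (b + 1)) (a b) (C.relayEstimate (a 0) w3 y3 b)

variable {C}

theorem relayEstimate_congr {a₀ : A1 × A2} {w3 : Fin (B + 1) → W3} {y3 y3' : Fin (B + 1) → Y3}
    {b : Fin (B + 1)} (h : ∀ j < b, y3 j = y3' j) :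
    C.relayEstimate a₀ w3 y3 b = C.relayEstimate a₀ w3 y3' b := by
  induction b using Fin.induction with
  | zero => rfl
  | succ i ih =>
    have hprev := ih fun j hj => h j (hj.trans Fin.castSucc_lt_succ)
    simp only [relayEstimate, Fin.induction_succ] at hprev ⊢
    rw [hprev, h i.castSucc Fin.castSucc_lt_succ]

theorem relayEstimate_eq {a : Fin (B + 1) → A1 × A2} {w3 : Fin (B + 1) → W3}
    {y3 : Fin (B + 1) → Y3} (h : ∀ b, C.relayDecode (a b) (w3 (b + 1)) (y3 b) = a (b + 1)) :
    C.relayEstimate (a 0) w3 y3 = a := by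
  funext b
  induction b using Fin.induction with
  | zero => rfl
  | succ i ih =>
    simp only [relayEstimate, Fin.induction_succ] at ih ⊢
    rw [ih, ← Fin.coeSucc_eq_succ, h]

theorem destEstimate_eq {a : Fin (B + 1) → A1 × A2} {w : Fin (B + 1) → W} {y : Fin (B + 1) → Y}
    (h : ∀ b, C.destDecode (a (b + 1)) (w b) (y b) = a b) :
    C.destEstimate (a 0) w y = a := by
  funext b
  induction b using Fin.reverseInduction with
  | last => simpa [destEstimate] using h (Fin.last B)
  | cast i ih =>
    simp only [destEstimate, Fin.reverseInduction_castSucc] at ih ⊢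
    rw [ih, ← Fin.coeSucc_eq_succ, h]

variable [Fintype Y] [Fintype Y3] [DecidableEq A1] [DecidableEq A2]

variable (C) in
/-- Probability that the destination decodes the sequence `a` incorrectly from `B + 1` uses of the
channel `V`. -/
def markovErr (V : U1 × U2 × U3 → Y × Y3 → ℝ) (a : Fin (B + 1) → A1 × A2) (w : Fin (B + 1) → W)
    (w3 : Fin (B + 1) → W3) : ℝ :=
  ∑ o : Fin (B + 1) → Y × Y3, (∏ b, V (C.markovInput a w3 (fun b => (o b).2) b) (o b)) *
    if C.destEstimate (a 0) w (fun b => (o b).1) = a then 0 else 1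

variable {V : U1 × U2 × U3 → Y × Y3 → ℝ}

-- As long as all decodings succeed, the relay cooperates as if it knew the old messages; hence
-- the relay may be replaced by one which does.
theorem markovErr_le (hV : ∀ u, IsPmf (V u)) (a : Fin (B + 1) → A1 × A2) (w : Fin (B + 1) → W)
    (w3 : Fin (B + 1) → W3) :
    C.markovErr V a w w3 ≤ ∑ b, C.blockErr V (a (b + 1)) (a b) (w3 (b + 1)) (w b) := by
  set good : Fin (B + 1) → Y × Y3 → Prop := fun b o =>
    C.relayDecode (a b) (w3 (b + 1)) o.2 = a (b + 1) ∧ C.destDecode (a (b + 1)) (w b) o.1 = a b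
  set actual : (Fin (B + 1) → Y × Y3) → ℝ := fun o =>
    ∏ b, V (C.markovInput a w3 (fun b => (o b).2) b) (o b)
  set ideal : (Fin (B + 1) → Y × Y3) → ℝ := fun o => ∏ b, V (C.input (a (b + 1)) (a b) (a b)) (o b)
  have hideal : IsPmf ideal := isPmf_pi fun b => hV _
  have hactual : ∑ o, actual o = 1 :=
    have := (hV (C.input (a 0) (a 0) (a 0))).nonempty
    sum_prod_causal_eq_one (fun u => (hV u).2) (fun b o => C.markovInput a w3 (fun b => (o b).2) b)
      fun b o o' h => congrArg (C.input (a (b + 1)) (a b))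
        (relayEstimate_congr fun j hj => congrArg Prod.snd (h j hj))
  calc C.markovErr V a w w3
      ≤ ∑ o, actual o * if ∀ b, good b (o b) then 0 else 1 := by
        refine Finset.sum_le_sum fun o _ => mul_le_mul_of_nonneg_left ?_
          (Finset.prod_nonneg fun b _ => (hV _).1 _)
        by_cases hgood : ∀ b, good b (o b)
        · rw [if_pos hgood, if_pos (destEstimate_eq fun b => (hgood b).2)]
        · rw [if_neg hgood]
          split_ifs <;> norm_num
    _ = ∑ o, ideal o * if ∀ b, good b (o b) then 0 else 1 :=
        sum_mul_ite_eq_of_sum_eq (hactual.trans hideal.2.symm) fun o hgood =>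
          Finset.prod_congr rfl fun b _ => by
            rw [markovInput, relayEstimate_eq fun b => (hgood b).1]
    _ ≤ ∑ o, ideal o * ∑ b, if good b (o b) then 0 else 1 := by
        refine Finset.sum_le_sum fun o _ => mul_le_mul_of_nonneg_left ?_ (hideal.1 o)
        have hnonneg : ∀ b ∈ Finset.univ, (0 : ℝ) ≤ if good b (o b) then 0 else 1 :=
          fun b _ => by positivity
        split_ifs with hgood
        · exact Finset.sum_nonneg hnonneg
        · obtain ⟨b, hb⟩ := not_forall.1 hgood
          simpa [hb] using Finset.single_le_sum hnonneg (Finset.mem_univ b)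
    _ = _ := by
        simp only [Finset.mul_sum]
        rw [Finset.sum_comm]
        exact Finset.sum_congr rfl fun b _ => sum_pi_mul_apply (fun b => hV _) b fun o =>
          if good b o then 0 else 1

variable [Fintype F] {P : F → ℝ} {m : F → A1 × A2} {w : F → W} {w3 : F → W3}

theorem sum_prod_mul_markovErr_le (hP : IsPmf P) (hV : ∀ u, IsPmf (V u)) (hB : B ≠ 0) :
    ∑ φ : Fin (B + 1) → F, (∏ i, P (φ i)) *
        C.markovErr V (fun b => m (φ b)) (fun b => w (φ b)) (fun b => w3 (φ b))
      ≤ (B + 1) * C.meanErr P m w w3 V := by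
  have hne : ∀ b : Fin (B + 1), b + 1 ≠ b := fun b => by
    rwa [Ne, add_eq_left, Fin.one_eq_zero_iff, Nat.add_eq_right]
  calc _ ≤ ∑ φ : Fin (B + 1) → F, (∏ i, P (φ i)) * ∑ b, C.blockErr V (m (φ (b + 1))) (m (φ b))
          (w3 (φ (b + 1))) (w (φ b)) :=
        Finset.sum_le_sum fun φ _ => mul_le_mul_of_nonneg_left
          (markovErr_le hV (fun b => m (φ b)) (fun b => w (φ b)) fun b => w3 (φ b))
          (Finset.prod_nonneg fun i _ => hP.1 (φ i))
    _ = ∑ _b : Fin (B + 1), C.meanErr P m w w3 V := by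
        simp only [Finset.mul_sum]
        rw [Finset.sum_comm]
        exact Finset.sum_congr rfl fun b _ =>
          sum_pi_mul_apply₂ (p := fun _ => P) (fun _ => hP) (hne b) fun f g =>
            C.blockErr V (m f) (m g) (w3 f) (w g)
    _ = _ := by simp

theorem exists_sum_prod_mul_markovErr_cons_le (hP : IsPmf P) (hV : ∀ u, IsPmf (V u))
    (hB : B ≠ 0) :
    ∃ f₀, ∑ f : Fin B → F, (∏ i, P (f i)) *
        C.markovErr V (fun b => m ((Fin.cons f₀ f : Fin (B + 1) → F) b))
          (fun b => w ((Fin.cons f₀ f : Fin (B + 1) → F) b))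
          (fun b => w3 ((Fin.cons f₀ f : Fin (B + 1) → F) b))
      ≤ (B + 1) * C.meanErr P m w w3 V := by
  refine hP.exists_le_of_sum_mul_le (le_of_eq_of_le ?_ (sum_prod_mul_markovErr_le hP hV hB))
  rw [← (Fin.consEquiv fun _ => F).sum_comp, Fintype.sum_prod_type]
  simp [Fin.consEquiv, Fin.prod_univ_succ, Finset.mul_sum, mul_assoc]

end BlockCode
end BlockMarkov

section CodeConversion

theorem finProdFinEquiv_lt_of_lt {B m : ℕ} {b b' : Fin B} (h : b < b') (d d' : Fin m) :
    finProdFinEquiv (b, d) < finProdFinEquiv (b', d') := by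
  rw [Fin.lt_def, finProdFinEquiv_apply_val, finProdFinEquiv_apply_val]
  have hblock : m * ((b : ℕ) + 1) ≤ m * b' := Nat.mul_le_mul_left _ h
  have hd := d.isLt
  simp only
  lia

theorem marcErrProb_eq {S1 S2 W W3 X1 X2 X3 Y Y3 : Type*} [Fintype S1] [Fintype S2] [Fintype W]
    [Fintype W3] [Fintype Y] [Fintype Y3] [DecidableEq S1] [DecidableEq S2]
    (pSrc : S1 × S2 × W × W3 → ℝ) (Q : X1 × X2 × X3 → Y × Y3 → ℝ) {n : ℕ}
    (f1 : (Fin n → S1) → Fin n → X1) (f2 : (Fin n → S2) → Fin n → X2)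
    (f3 : Fin n → (Fin n → Y3) → (Fin n → W3) → X3)
    (g : (Fin n → Y) → (Fin n → W) → (Fin n → S1) × (Fin n → S2)) :
    marcErrProb pSrc Q n f1 f2 f3 g = ∑ s : Fin n → S1 × S2 × W × W3, (∏ k, pSrc (s k)) *
      ∑ o : Fin n → Y × Y3,
        (∏ k, Q (f1 (blockMsg s).1 k, f2 (blockMsg s).2 k,
          f3 k (fun j => (o j).2) fun j => (s j).2.2.2) (o k)) *
        if g (fun j => (o j).1) (fun j => (s j).2.2.1) = blockMsg s then 0 else 1 := by
  simp only [marcErrProb, sum_pi_prod, Finset.mul_sum, ite_not]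
  simp only [mul_ite, mul_one, mul_zero]
  rfl

section Blocks

variable {ι κ N α β : Type*}

/-- Reads a sequence as a sequence of blocks. -/
def toBlocks (e : ι × κ ≃ N) : (N → α) ≃ (ι → κ → α) :=
  (Equiv.arrowCongr e.symm (Equiv.refl α)).trans (Equiv.curry ι κ α)

/-- Reads a sequence of pairs as a sequence of pairs of blocks. -/
def toPairBlocks (e : ι × κ ≃ N) : (N → α × β) ≃ (ι → (κ → α) × (κ → β)) :=
  (toBlocks e).trans (Equiv.piCongrRight fun _ => Equiv.arrowProdEquivProdArrow κ _ _)

/-- The blocks of a sequence, preceded by the block `c`. -/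
def consBlocks {B : ℕ} (e : Fin B × κ ≃ N) (c : κ → α) (s : N → α) : Fin (B + 1) → κ → α :=
  Fin.cons c (toBlocks e s)

theorem consBlocks_comp {B : ℕ} (e : Fin B × κ ≃ N) (h : α → β) (c : κ → α) (s : N → α) :
    consBlocks e (fun i => h (c i)) (fun k => h (s k)) = fun b i => h (consBlocks e c s b i) :=
  (Fin.comp_cons (fun (t : κ → α) i => h (t i)) c (toBlocks e s)).symm

end Blocks

namespace BlockCode

variable {S1 S2 W W3 X1 X2 X3 Y Y3 E : Type*} {B m : ℕ}
  (C : BlockCode (Fin m ⊕ E → S1) (Fin m ⊕ E → S2) (Fin m ⊕ E → W) (Fin m ⊕ E → W3)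
    (Fin m ⊕ E → X1) (Fin m ⊕ E → X2) (Fin m ⊕ E → X3) (Fin m → Y) (Fin m → Y3))
  (e : Fin B × (Fin m ⊕ E) ≃ Fin ((B + 1) * m)) (c : Fin m ⊕ E → S1 × S2 × W × W3)

/-- The first encoder of the block Markov code which sends `B` blocks of source outputs, preceded by
the known block `c`. -/
def encoder₁ (s : Fin ((B + 1) * m) → S1) (k : Fin ((B + 1) * m)) : X1 :=
  let x := finProdFinEquiv.symm k
  let a := consBlocks e (fun i => (c i).1) s
  C.code₁ (a (x.1 + 1)) (a x.1) (.inl x.2)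

/-- The second encoder of the block Markov code. -/
def encoder₂ (s : Fin ((B + 1) * m) → S2) (k : Fin ((B + 1) * m)) : X2 :=
  let x := finProdFinEquiv.symm k
  let a := consBlocks e (fun i => (c i).2.1) s
  C.code₂ (a (x.1 + 1)) (a x.1) (.inl x.2)

/-- The relay encoder of the block Markov code. -/
def relayEncoder (k : Fin ((B + 1) * m)) (y3 : Fin ((B + 1) * m) → Y3)
    (w3 : Fin ((B + 1) * m) → W3) : X3 :=
  let x := finProdFinEquiv.symm k
  C.code₃ (C.relayEstimate (blockMsg c) (consBlocks e (fun i => (c i).2.2.2) w3)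
    (toBlocks finProdFinEquiv y3) x.1) (.inl x.2)

/-- The decoder of the block Markov code, which drops the known block. -/
def decoder (y : Fin ((B + 1) * m) → Y) (w : Fin ((B + 1) * m) → W) :
    (Fin ((B + 1) * m) → S1) × (Fin ((B + 1) * m) → S2) :=
  let a := C.destEstimate (blockMsg c) (consBlocks e (fun i => (c i).2.2.1) w)
    (toBlocks finProdFinEquiv y)
  ((toBlocks e).symm fun i => (a i.succ).1, (toBlocks e).symm fun i => (a i.succ).2)

theorem causalRelay_relayEncoder : CausalRelay (C.relayEncoder e c) := by
  intro k y y' w h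
  obtain ⟨x, rfl⟩ := finProdFinEquiv.surjective k
  simp only [relayEncoder, Equiv.symm_apply_apply]
  rw [relayEstimate_congr (C := C) (y3 := toBlocks finProdFinEquiv y)
    (y3' := toBlocks finProdFinEquiv y')
    fun b hb => funext fun d => h _ (finProdFinEquiv_lt_of_lt hb d x.2)]

variable {C e c} in
theorem decoder_eq_of_destEstimate_eq {y : Fin ((B + 1) * m) → Y}
    {s : Fin ((B + 1) * m) → S1 × S2 × W × W3}
    (h : C.destEstimate (blockMsg c) (fun b i => (consBlocks e c s b i).2.2.1)
      (toBlocks finProdFinEquiv y) = fun b => blockMsg (consBlocks e c s b)) :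
    C.decoder e c y (fun k => (s k).2.2.1) = blockMsg s := by
  rw [decoder, consBlocks_comp e (fun t : S1 × S2 × W × W3 => t.2.2.1) c s, h]
  exact Prod.ext ((toBlocks e).symm_apply_eq.2 rfl) ((toBlocks e).symm_apply_eq.2 rfl)

theorem prod_channel_eq (Q : X1 × X2 × X3 → Y × Y3 → ℝ) (s : Fin ((B + 1) * m) → S1 × S2 × W × W3)
    (o : Fin ((B + 1) * m) → Y × Y3) :
    ∏ k, Q (C.encoder₁ e c (blockMsg s).1 k, C.encoder₂ e c (blockMsg s).2 k,
        C.relayEncoder e c k (fun j => (o j).2) fun j => (s j).2.2.2) (o k) =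
      ∏ b, puncturedChannel Q (C.markovInput (fun b => blockMsg (consBlocks e c s b))
        (fun b i => (consBlocks e c s b i).2.2.2)
        (fun b => (toPairBlocks finProdFinEquiv o b).2) b) (toPairBlocks finProdFinEquiv o b) := by
  rw [← finProdFinEquiv.prod_comp, Fintype.prod_prod_type]
  refine Finset.prod_congr rfl fun b _ => Finset.prod_congr rfl fun d _ => ?_
  simp only [encoder₁, encoder₂, relayEncoder, Equiv.symm_apply_apply, blockMsg,
    consBlocks_comp e (fun t : S1 × S2 × W × W3 => t.1),
    consBlocks_comp e (fun t : S1 × S2 × W × W3 => t.2.1),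
    consBlocks_comp e (fun t : S1 × S2 × W × W3 => t.2.2.2)]
  rfl

variable [Fintype S1] [Fintype S2] [Fintype W] [Fintype W3] [Fintype Y] [Fintype Y3] [Fintype E]
  [DecidableEq S1] [DecidableEq S2] [DecidableEq E] {pSrc : S1 × S2 × W × W3 → ℝ}
  {Q : X1 × X2 × X3 → Y × Y3 → ℝ}

theorem marcErrProb_le_sum_markovErr (hSrc : ∀ s, 0 ≤ pSrc s) (hQ : ∀ x o, 0 ≤ Q x o) :
    marcErrProb pSrc Q ((B + 1) * m) (C.encoder₁ e c) (C.encoder₂ e c) (C.relayEncoder e c)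
        (C.decoder e c)
      ≤ ∑ f : Fin B → Fin m ⊕ E → S1 × S2 × W × W3, (∏ i, ∏ j, pSrc (f i j)) *
        let φ : Fin (B + 1) → Fin m ⊕ E → S1 × S2 × W × W3 := Fin.cons c f
        C.markovErr (puncturedChannel Q) (fun b => blockMsg (φ b)) (fun b i => (φ b i).2.2.1)
          (fun b i => (φ b i).2.2.2) := by
  rw [marcErrProb_eq, ← (toBlocks e).sum_comp]
  refine Finset.sum_le_sum fun s _ => ?_
  have hsrc : ∏ i, ∏ j, pSrc (toBlocks e s i j) = ∏ k, pSrc (s k) := by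
    rw [← e.prod_comp, Fintype.prod_prod_type]
    rfl
  rw [hsrc, markovErr, ← (toPairBlocks finProdFinEquiv).sum_comp]
  refine mul_le_mul_of_nonneg_left (Finset.sum_le_sum fun o _ => ?_)
    (Finset.prod_nonneg fun k _ => hSrc _)
  rw [prod_channel_eq]
  refine mul_le_mul_of_nonneg_left ?_
    (Finset.prod_nonneg fun b _ => Finset.prod_nonneg fun d _ => hQ _ _)
  split_ifs with hdecoder hest hest
  · rfl
  · exact zero_le_one
  · exact absurd (decoder_eq_of_destEstimate_eq hest) hdecoder
  · rfl

theorem exists_marcErrProb_le_mul_meanErr (hSrc : IsPmf pSrc) (hQ : ∀ x, IsPmf (Q x)) (hB : B ≠ 0)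
    (hcard : B * (m + Fintype.card E) = (B + 1) * m) :
    ∃ f1 f2 f3 g, CausalRelay f3 ∧ marcErrProb pSrc Q ((B + 1) * m) f1 f2 f3 g ≤
      (B + 1) * C.meanErr (fun f => ∏ i, pSrc (f i)) blockMsg (fun f i => (f i).2.2.1)
        (fun f i => (f i).2.2.2) (puncturedChannel Q) := by
  let e : Fin B × (Fin m ⊕ E) ≃ Fin ((B + 1) * m) := Fintype.equivOfCardEq (by simpa using hcard)
  obtain ⟨c, hc⟩ := exists_sum_prod_mul_markovErr_cons_le (C := C) (isPmf_pi fun _ => hSrc)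
    (isPmf_puncturedChannel hQ) hB (m := blockMsg) (w := fun f i => (f i).2.2.1)
    (w3 := fun f i => (f i).2.2.2)
  exact ⟨C.encoder₁ e c, C.encoder₂ e c, C.relayEncoder e c, C.decoder e c,
    C.causalRelay_relayEncoder e c,
    (C.marcErrProb_le_sum_markovErr e c hSrc.1 fun x => (hQ x).1).trans hc⟩

end BlockCode
end CodeConversion

/-- **Theorem 2** (joint source-channel coding for the MARC; Slepian-Wolf coding to the
relay and CPM to the destination). -/
theorem marc_sw_relay_cpm_destination
    {S1 S2 W W3 X1 X2 X3 Y Y3 : Type*}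
    [Fintype S1] [Fintype S2] [Fintype W] [Fintype W3]
    [Fintype X1] [Fintype X2] [Fintype X3] [Fintype Y] [Fintype Y3]
    [DecidableEq S1] [DecidableEq S2] [DecidableEq W] [DecidableEq W3]
    [DecidableEq X1] [DecidableEq X2] [DecidableEq X3] [DecidableEq Y] [DecidableEq Y3]
    (pSrc : S1 × S2 × W × W3 → ℝ) (hSrc : IsPmf pSrc)
    (Q : X1 × X2 × X3 → Y × Y3 → ℝ) (hQ : ∀ x, IsPmf (Q x))
    (h : ∃ (pX1 : S1 → X1 → ℝ) (pX2 : S2 → X2 → ℝ) (pX3 : S1 → S2 → X3 → ℝ),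
        (∀ s1, IsPmf (pX1 s1)) ∧ (∀ s2, IsPmf (pX2 s2)) ∧
        (∀ s1 s2, IsPmf (pX3 s1 s2)) ∧
        (let μ := thm2Joint pSrc Q pX1 pX2 pX3
        -- H(S1|S2,W3) < I(X1;Y3|S1,X2,X3)
        (condEntropyOf μ (fun (s1,_,_,_,_,_,_,_,_) => s1)
            (fun (_,s2,w3,_,_,_,_,_,_) => (s2, w3)) <
          condMutualInfoOf μ (fun (_,_,_,_,x1,_,_,_,_) => x1)
            (fun (_,_,_,_,_,_,_,y3,_) => y3)
            (fun (s1,_,_,_,_,x2,x3,_,_) => (s1, x2, x3))) ∧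
        -- H(S2|S1,W3) < I(X2;Y3|S2,X1,X3)
        (condEntropyOf μ (fun (_,s2,_,_,_,_,_,_,_) => s2)
            (fun (s1,_,w3,_,_,_,_,_,_) => (s1, w3)) <
          condMutualInfoOf μ (fun (_,_,_,_,_,x2,_,_,_) => x2)
            (fun (_,_,_,_,_,_,_,y3,_) => y3)
            (fun (_,s2,_,_,x1,_,x3,_,_) => (s2, x1, x3))) ∧
        -- H(S1,S2|W3) < I(X1,X2;Y3|S1,S2,X3)
        (condEntropyOf μ (fun (s1,s2,_,_,_,_,_,_,_) => (s1, s2))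
            (fun (_,_,w3,_,_,_,_,_,_) => w3) <
          condMutualInfoOf μ (fun (_,_,_,_,x1,x2,_,_,_) => (x1, x2))
            (fun (_,_,_,_,_,_,_,y3,_) => y3)
            (fun (s1,s2,_,_,_,_,x3,_,_) => (s1, s2, x3))) ∧
        -- H(S1|S2,W) < I(X1,X3;Y|S2,X2,W)
        (condEntropyOf μ (fun (s1,_,_,_,_,_,_,_,_) => s1)
            (fun (_,s2,_,w,_,_,_,_,_) => (s2, w)) <
          condMutualInfoOf μ (fun (_,_,_,_,x1,_,x3,_,_) => (x1, x3))
            (fun (_,_,_,_,_,_,_,_,y) => y)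
            (fun (_,s2,_,w,_,x2,_,_,_) => (s2, x2, w))) ∧
        -- H(S2|S1,W) < I(X2,X3;Y|S1,X1,W)
        (condEntropyOf μ (fun (_,s2,_,_,_,_,_,_,_) => s2)
            (fun (s1,_,_,w,_,_,_,_,_) => (s1, w)) <
          condMutualInfoOf μ (fun (_,_,_,_,_,x2,x3,_,_) => (x2, x3))
            (fun (_,_,_,_,_,_,_,_,y) => y)
            (fun (s1,_,_,w,x1,_,_,_,_) => (s1, x1, w))) ∧
        -- H(S1,S2|W) < I(X1,X2,X3;Y|W)
        (condEntropyOf μ (fun (s1,s2,_,_,_,_,_,_,_) => (s1, s2))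
            (fun (_,_,_,w,_,_,_,_,_) => w) <
          condMutualInfoOf μ (fun (_,_,_,_,x1,x2,x3,_,_) => (x1, x2, x3))
            (fun (_,_,_,_,_,_,_,_,y) => y)
            (fun (_,_,_,w,_,_,_,_,_) => w)))) :
    MarcReliablyTransmitted pSrc Q := by
  obtain ⟨pX1, pX2, pX3, h₁, h₂, h₃, hrel₁, hrel₂, hrel₁₂, hdest₁, hdest₂, hdest₁₂⟩ := h
  intro ε hε
  obtain ⟨B, hcode, hB⟩ := ((eventually_exists_blockCode hSrc hQ h₁ h₂ h₃
    (fun _ he => relayReceiver_drift_neg hSrc hQ h₁ h₂ h₃ hrel₁ hrel₂ hrel₁₂ he)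
    fun _ he => destReceiver_drift_neg hSrc hQ h₁ h₂ h₃ hdest₁ hdest₂ hdest₁₂ he).and
      (Filter.eventually_gt_atTop 0)).exists
  obtain ⟨k, hk, C, hC⟩ := hcode (ε / (B + 1)) (by positivity)
  obtain ⟨f1, f2, f3, g, hcausal, herr⟩ := C.exists_marcErrProb_le_mul_meanErr hSrc hQ hB.ne'
    (by rw [Fintype.card_fin]; ring)
  refine ⟨(B + 1) * (B * k), by positivity, f1, f2, f3, g, hcausal, herr.trans ?_⟩
  calc (B + 1) * C.meanErr _ _ _ _ _ ≤ (B + 1) * (ε / (B + 1)) := by gcongr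
    _ = ε := mul_div_cancel₀ ε (by positivity)
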